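/- Assume the Riemann Hypothesis. There exists T₀ such that for all T ≥ T₀ and every real number B (which may depend on T), ∫_B^{B+1} F(α,T) dα ≤ 3. -/

import Mathlib

open Complex Filter MeasureTheory Real Set

noncomputable section

/-- A non-trivial zero of the Riemann zeta function. -/
def ZetaNontrivZero (ρ : ℂ) : Prop := riemannZeta ρ = 0 ∧ 0 < ρ.re ∧ ρ.re < 1

/-- The multiplicity of `ρ` as a zero of `ζ`. -/
def zetaMult (ρ : ℂ) : ℕ := sInf {n : ℕ | iteratedDeriv n riemannZeta ρ ≠ 0}

/-- The set of non-trivial zeros with ordinate in `(0, T]`. -/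
def zerosUpTo (T : ℝ) : Set ℂ := {ρ | ZetaNontrivZero ρ ∧ 0 < ρ.im ∧ ρ.im ≤ T}

/-- Montgomery's pair correlation function `F(x,T)`, zeros counted with multiplicity. -/
def Fxt (x T : ℝ) : ℂ :=
  ∑' p : zerosUpTo T × zerosUpTo T,
    (zetaMult p.1 * zetaMult p.2 : ℂ) *
      Complex.exp (Complex.I * (((p.1 : ℂ).im - (p.2 : ℂ).im : ℝ) : ℂ) * (Real.log x : ℂ)) *
      ((4 / (4 + ((p.1 : ℂ).im - (p.2 : ℂ).im) ^ 2) : ℝ) : ℂ)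

/-- The normalized form `F(α) = F(α, T)`. -/
def FF (α T : ℝ) : ℂ := ((T / (2 * π) * Real.log T : ℝ) : ℂ)⁻¹ * Fxt (T ^ α) T

/-!
Since `w` is the Fourier transform of `e^{-2|v|}`, the pair sum is nonnegative, so its integral
over the interval is at most a constant times its integral against a triangle of half-length
`θ log T`, `θ > 1/2`, with the same centre. The triangle integrates to a Fejér kernel in `γ - γ'`
times a phase depending on `B`; the kernel being nonnegative, the phase may be dropped, and the
dependence on `B` disappears.

The Fejér kernel concentrates at `0`, so `w` may be replaced by the autocorrelation of
the transform of a smooth cutoff of small support, at the cost of a sum that the density of the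
zeros controls. The new sum is a Fejér average of the mean square over `0 ≤ t ≤ T` of a smoothed
sum over zeros, which the explicit formula turns into a gamma factor and a sum over prime powers of
length at most `T^θ` up to a constant. For `θ < 1` the mean value theorem for Dirichlet polynomials
and Mertens' theorem evaluate its mean square. As `θ → 1` the constant tends to
`(1 - 1/2)⁻¹ (1 + 1/3) = 8/3 < 3`; the proof takes `θ = 19/20`.
-/

namespace PairCorrelation

open scoped Topology ContDiff ArithmeticFunction.vonMangoldt

/-! ### Hadamard's partial fractions for entire functions of order less than two -/

section EntireFunctions

variable {f g : ℂ → ℂ} {R M : ℝ}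

lemma exists_eq_sub_pow_mul_of_analyticOrderAt (hf : Differentiable ℂ f) {ρ : ℂ} {n : ℕ}
    (hn : analyticOrderAt f ρ = n) :
    ∃ g : ℂ → ℂ, Differentiable ℂ g ∧ g ρ ≠ 0 ∧ ∀ z, f z = (z - ρ) ^ n * g z := by
  induction n generalizing f with
  | zero =>
    exact ⟨f, hf, (hf.analyticAt ρ).analyticOrderAt_eq_zero.mp (by simpa using hn), by simp⟩
  | succ n ih =>
    have hfρ : f ρ = 0 := apply_eq_zero_of_analyticOrderAt_ne_zero (by rw [hn]; simp)
    have hd : Differentiable ℂ (dslope f ρ) := differentiableOn_univ.mp <|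
      (Complex.differentiableOn_dslope univ_mem).mpr hf.differentiableOn
    have hfd : f = (fun z => z - ρ) * dslope f ρ :=
      funext fun z => by simpa [hfρ] using (sub_smul_dslope f ρ z).symm
    have hord : analyticOrderAt (dslope f ρ) ρ = n := by
      rw [hfd, analyticOrderAt_mul (by fun_prop) (hd.analyticAt ρ),
        analyticOrderAt_id_sub_const_self, Nat.cast_succ, add_comm] at hn
      exact ENat.add_left_injective_of_ne_top ENat.one_ne_top hn
    obtain ⟨g, hg, hgρ, hdg⟩ := ih hd hord
    exact ⟨g, hg, hgρ, fun z => by rw [congrFun hfd z, Pi.mul_apply, hdg, pow_succ']; ring⟩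

lemma exists_eq_prod_one_sub_div_mul (hf : Differentiable ℂ f)
    (hord : ∀ ρ, analyticOrderAt f ρ ≠ ⊤) (S : Finset ℂ) (hS : ∀ ρ ∈ S, ρ ≠ 0) :
    ∃ g : ℂ → ℂ, Differentiable ℂ g ∧ (∀ ρ ∈ S, g ρ ≠ 0) ∧
      ∀ z, f z = (∏ ρ ∈ S, (1 - z / ρ) ^ analyticOrderNatAt f ρ) * g z := by
  induction S using Finset.induction_on with
  | empty => exact ⟨f, hf, by simp, by simp⟩
  | insert a S ha ih =>
    obtain ⟨g, hg, hgS, hfg⟩ := ih fun ρ hρ => hS ρ (Finset.mem_insert_of_mem hρ)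
    have ha0 : a ≠ 0 := hS a (Finset.mem_insert_self a S)
    set P : ℂ → ℂ := fun z => ∏ ρ ∈ S, (1 - z / ρ) ^ analyticOrderNatAt f ρ
    have hP : Differentiable ℂ P := by fun_prop
    have hPa : P a ≠ 0 := Finset.prod_ne_zero_iff.mpr fun ρ hρ => pow_ne_zero _ fun h => by
      have hρ0 := hS ρ (Finset.mem_insert_of_mem hρ)
      rw [sub_eq_zero, eq_comm, div_eq_one_iff_eq hρ0] at h
      exact ha (h ▸ hρ)
    have hfga : analyticOrderAt f a = analyticOrderAt g a := by
      rw [show f = P * g from funext hfg, analyticOrderAt_mul (hP.analyticAt a) (hg.analyticAt a),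
        (hP.analyticAt a).analyticOrderAt_eq_zero.mpr hPa, zero_add]
    obtain ⟨h, hh, hha, hgh⟩ := exists_eq_sub_pow_mul_of_analyticOrderAt hg
      (hfga ▸ (ENat.natCast_toNat (hord a)).symm)
    refine ⟨fun z => (-a) ^ analyticOrderNatAt f a * h z, by fun_prop, fun ρ hρ => ?_, fun z => ?_⟩
    · refine mul_ne_zero (pow_ne_zero _ (neg_ne_zero.mpr ha0)) ?_
      rcases Finset.mem_insert.mp hρ with rfl | hρS
      · exact hha
      · exact right_ne_zero_of_mul (hgh ρ ▸ hgS ρ hρS)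
    · have hza : z - a = (1 - z / a) * (-a) := by field_simp; ring
      rw [Finset.prod_insert ha, hfg z, hgh z, hza, mul_pow, analyticOrderNatAt, hfga]
      ring

lemma one_le_norm_prod_one_sub_div_pow {S : Finset ℂ} (hS : ∀ ρ ∈ S, ρ ≠ 0) (n : ℂ → ℕ) {z : ℂ}
    (hz : ∀ ρ ∈ S, 2 * ‖ρ‖ ≤ ‖z‖) : 1 ≤ ‖∏ ρ ∈ S, (1 - z / ρ) ^ n ρ‖ := by
  rw [norm_prod]
  refine Finset.one_le_prod fun ρ hρ => ?_
  rw [norm_pow]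
  refine one_le_pow₀ ?_
  have hzρ : 2 ≤ ‖z / ρ‖ := by
    rw [norm_div, le_div_iff₀ (norm_pos_iff.mpr (hS ρ hρ))]
    exact hz ρ hρ
  have := norm_sub_norm_le (z / ρ) 1
  rw [norm_one, norm_sub_rev] at this
  linarith

lemma logDeriv_prod_one_sub_div_pow {S : Finset ℂ} (hS : ∀ ρ ∈ S, ρ ≠ 0) (n : ℂ → ℕ) {z : ℂ}
    (hz : z ∉ S) :
    logDeriv (fun z => ∏ ρ ∈ S, (1 - z / ρ) ^ n ρ) z = ∑ ρ ∈ S, (n ρ : ℂ) * (1 / (z - ρ)) := by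
  have hne : ∀ ρ ∈ S, z - ρ ≠ 0 := fun ρ hρ h => hz (sub_eq_zero.mp h ▸ hρ)
  have hfactor : ∀ ρ ∈ S, 1 - z / ρ ≠ 0 := fun ρ hρ => by
    have := hS ρ hρ
    rw [one_sub_div this]
    exact div_ne_zero (by simpa [sub_eq_zero, eq_comm] using hne ρ hρ) this
  rw [logDeriv_prod (f := fun ρ z => (1 - z / ρ) ^ n ρ) (fun ρ hρ => pow_ne_zero _ (hfactor ρ hρ))
    (fun ρ _ => by fun_prop)]
  refine Finset.sum_congr rfl fun ρ hρ => ?_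
  have hρ0 := hS ρ hρ
  have hderiv : deriv (fun z => 1 - z / ρ) z = -(1 / ρ) := by simp
  rw [logDeriv_fun_pow (by fun_prop), logDeriv_apply, hderiv]
  have h1 := hne ρ hρ
  have h2 : ρ - z ≠ 0 := by rwa [← neg_sub, neg_ne_zero]
  field_simp
  ring

lemma exists_log_of_ne_zero_on_ball (hR : 0 < R) (hg : DifferentiableOn ℂ g (Metric.ball 0 R))
    (hg0 : ∀ z ∈ Metric.ball 0 R, g z ≠ 0) :
    ∃ h : ℂ → ℂ, h 0 = 0 ∧ ∀ z ∈ Metric.ball 0 R,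
      HasDerivAt h (logDeriv g z) z ∧ g z = g 0 * Complex.exp (h z) := by
  have hld : DifferentiableOn ℂ (logDeriv g) (Metric.ball 0 R) :=
    (hg.deriv Metric.isOpen_ball).div hg hg0
  obtain ⟨h, h0, hh⟩ := hld.isExactOn_ball.with_val_at 0 0
  refine ⟨h, h0, fun z hz => ⟨hh z hz, ?_⟩⟩
  have hderiv : ∀ x ∈ Metric.ball 0 R, HasDerivAt (fun z => Complex.exp (-h z) * g z) 0 x := by
    intro x hx
    have hgx := (hg x hx).differentiableAt (Metric.isOpen_ball.mem_nhds hx)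
    refine ((hh x hx).neg.cexp.mul hgx.hasDerivAt).congr_deriv ?_
    have := div_mul_cancel₀ (deriv g x) (hg0 x hx)
    rw [← logDeriv_apply] at this
    linear_combination (-Complex.exp (-h x)) * this
  have hconst := Metric.isOpen_ball.is_const_of_deriv_eq_zero
    (convex_ball 0 R).isPreconnected
    (fun x hx => (hderiv x hx).differentiableAt.differentiableWithinAt)
    (fun x hx => (hderiv x hx).deriv) hz (Metric.mem_ball_self hR)
  rw [h0, neg_zero, Complex.exp_zero, one_mul] at hconst
  rw [← hconst, mul_right_comm, ← Complex.exp_add, neg_add_cancel, Complex.exp_zero, one_mul]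

lemma norm_deriv_le_of_forall_norm_le {r ε C : ℝ} (hε : 0 < ε) (hrR : r + ε < R)
    (hg : DifferentiableOn ℂ g (Metric.ball 0 R)) (hC : ∀ z, ‖z‖ ≤ r + ε → ‖g z‖ ≤ C) {z : ℂ}
    (hz : ‖z‖ ≤ r) : ‖deriv g z‖ ≤ C / ε := by
  have hball : ∀ x ∈ Metric.closedBall z ε, ‖x‖ ≤ r + ε := fun x hx => by
    have := norm_sub_norm_le x z
    rw [mem_closedBall_iff_norm] at hx
    linarith
  refine norm_deriv_le_of_forall_mem_sphere_norm_le hε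
    ((hg.mono fun x hx => ?_).diffContOnCl_ball le_rfl)
    fun x hx => hC x (hball x (Metric.sphere_subset_closedBall hx))
  exact mem_ball_zero_iff.mpr ((hball x hx).trans_lt hrR)

-- Borel–Carathéodory bounds `log g` on `‖z‖ ≤ R / 2`; two Cauchy estimates then bound its
-- second derivative on `‖z‖ ≤ R / 8`.
lemma norm_logDeriv_sub_le (hR : 0 < R) (hM : 0 < M) (hg : DifferentiableOn ℂ g (Metric.ball 0 R))
    (hg0 : ∀ z ∈ Metric.ball 0 R, g z ≠ 0)
    (hgM : ∀ z ∈ Metric.ball 0 R, ‖g z‖ ≤ Real.exp M * ‖g 0‖) {w : ℂ} (hw : ‖w‖ < R / 8) :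
    ‖logDeriv g w - logDeriv g 0‖ ≤ 64 * M / R ^ 2 * ‖w‖ := by
  obtain ⟨h, h0, hh⟩ := exists_log_of_ne_zero_on_ball hR hg hg0
  have hre : ∀ z ∈ Metric.ball 0 R, (h z).re ≤ M := by
    intro z hz
    have h1 := hgM z hz
    rw [(hh z hz).2, norm_mul, Complex.norm_exp, mul_comm] at h1
    have h2 : 0 < ‖g 0‖ := norm_pos_iff.mpr (hg0 0 (Metric.mem_ball_self hR))
    exact Real.exp_le_exp.mp (le_of_mul_le_mul_right h1 h2)
  have hdiff : DifferentiableOn ℂ h (Metric.ball 0 R) := fun z hz =>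
    (hh z hz).1.differentiableAt.differentiableWithinAt
  have hbound : ∀ z, ‖z‖ ≤ R / 4 + R / 4 → ‖h z‖ ≤ 2 * M := by
    intro z hz
    refine (borelCaratheodory_zero hM hdiff hre hR (by simp; linarith) h0).trans ?_
    rw [div_le_iff₀ (by linarith)]
    nlinarith
  have hderiv : ∀ z, ‖z‖ ≤ R / 8 + R / 8 → ‖logDeriv g z‖ ≤ 8 * M / R := by
    intro z hz
    rw [← (hh z (by simp; linarith)).1.deriv]
    refine (norm_deriv_le_of_forall_norm_le (by positivity) (by linarith) hdiff hbound
      (hz.trans (by linarith))).trans_eq ?_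
    field_simp
    ring
  have hld : DifferentiableOn ℂ (logDeriv g) (Metric.ball 0 R) :=
    (hg.deriv Metric.isOpen_ball).div hg hg0
  have hderiv₂ : ∀ z ∈ Metric.ball 0 (R / 8), ‖deriv (logDeriv g) z‖ ≤ 64 * M / R ^ 2 := by
    intro z hz
    refine (norm_deriv_le_of_forall_norm_le (by positivity) (by linarith) hld hderiv
      (mem_ball_zero_iff.mp hz).le).trans_eq ?_
    field_simp
    ring
  have hsub : Metric.ball 0 (R / 8) ⊆ Metric.ball (0 : ℂ) R := Metric.ball_subset_ball (by linarith)
  simpa using (convex_ball (0 : ℂ) (R / 8)).norm_image_sub_le_of_norm_deriv_le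
    (fun x hx => (hld x (hsub hx)).differentiableAt (Metric.isOpen_ball.mem_nhds (hsub hx)))
    hderiv₂ (Metric.mem_ball_self (by positivity)) (mem_ball_zero_iff.mpr hw)

lemma analyticOrderAt_ne_top_of_apply_zero_ne_zero (hf : Differentiable ℂ f) (hf0 : f 0 ≠ 0)
    (ρ : ℂ) : analyticOrderAt f ρ ≠ ⊤ :=
  AnalyticOnNhd.analyticOrderAt_ne_top_of_isPreconnected (fun z _ => hf.analyticAt z)
    isPreconnected_univ (mem_univ 0) (mem_univ ρ)
    (by rw [(hf.analyticAt 0).analyticOrderAt_eq_zero.mpr hf0]; exact ENat.zero_ne_top)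

-- Apply `norm_logDeriv_sub_le` to `f` divided by `∏ (1 - z / ρ)`, whose factors have modulus
-- at least one on `‖z‖ = 2 * R`.
lemma norm_logDeriv_sub_sub_sum_le (hf : Differentiable ℂ f) (hf0 : f 0 ≠ 0) (hR : 0 < R)
    (hM : 0 < M) (hfM : ∀ z, ‖z‖ = 2 * R → ‖f z‖ ≤ Real.exp M * ‖f 0‖) {S : Finset ℂ}
    (hS : ∀ z, z ∈ S ↔ ‖z‖ ≤ R ∧ f z = 0) {w : ℂ} (hw : ‖w‖ < R / 8) (hfw : f w ≠ 0) :
    ‖logDeriv f w - logDeriv f 0 -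
      ∑ ρ ∈ S, (analyticOrderNatAt f ρ : ℂ) * (1 / (w - ρ) + 1 / ρ)‖ ≤ 64 * M / R ^ 2 * ‖w‖ := by
  have hS0 : ∀ ρ ∈ S, ρ ≠ 0 := by
    rintro ρ hρ rfl
    exact hf0 ((hS 0).mp hρ).2
  obtain ⟨g, hg, hgS, hfg⟩ := exists_eq_prod_one_sub_div_mul hf
    (analyticOrderAt_ne_top_of_apply_zero_ne_zero hf hf0) S hS0
  have hg0 : ∀ z ∈ Metric.ball 0 R, g z ≠ 0 := fun z hz hgz => hgS z
    ((hS z).mpr ⟨(mem_ball_zero_iff.mp hz).le, by rw [hfg, hgz, mul_zero]⟩) hgz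
  have hgf0 : g 0 = f 0 := by rw [hfg 0]; simp
  have hgM : ∀ z ∈ Metric.ball 0 R, ‖g z‖ ≤ Real.exp M * ‖g 0‖ := fun z hz => by
    refine norm_le_of_forall_mem_frontier_norm_le (U := Metric.ball (0 : ℂ) (2 * R))
      Metric.isBounded_ball hg.diffContOnCl (fun x hx => ?_)
      (subset_closure (Metric.ball_subset_ball (by linarith) hz))
    rw [frontier_ball _ (by positivity), mem_sphere_zero_iff_norm] at hx
    rw [hgf0]
    refine le_trans ?_ (hfM x hx)
    rw [hfg x, norm_mul (∏ ρ ∈ S, _)]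
    exact le_mul_of_one_le_left (norm_nonneg _) <| one_le_norm_prod_one_sub_div_pow hS0 _
      fun ρ hρ => by rw [hx]; linarith [((hS ρ).mp hρ).1]
  have hlog : ∀ z ∈ Metric.ball 0 R, f z ≠ 0 → logDeriv g z =
      logDeriv f z - ∑ ρ ∈ S, (analyticOrderNatAt f ρ : ℂ) * (1 / (z - ρ)) := by
    intro z hz hfz
    rw [← logDeriv_prod_one_sub_div_pow hS0 _ fun hzS => hfz ((hS z).mp hzS).2, eq_sub_iff_add_eq',
      ← logDeriv_mul z (left_ne_zero_of_mul (hfg z ▸ hfz)) (hg0 z hz) (by fun_prop) (hg z),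
      ← funext hfg]
  have hmain := norm_logDeriv_sub_le hR hM hg.differentiableOn hg0 hgM hw
  rw [hlog w (by simp; linarith) hfw, hlog 0 (Metric.mem_ball_self hR) hf0] at hmain
  convert hmain using 2
  simp only [zero_sub, one_div, inv_neg, mul_add, mul_neg, Finset.sum_add_distrib,
    Finset.sum_neg_distrib]
  ring

end EntireFunctions

section EntireFunctions

variable {f : ℂ → ℂ}

/-- The zeros of `f`, each repeated according to its multiplicity; this is the index type of all
sums over zeros below. -/
abbrev ZeroWithMult (f : ℂ → ℂ) : Type :=
  Σ ρ : {ρ : ℂ // f ρ = 0}, Fin (analyticOrderNatAt f ρ)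

lemma finite_zeros_norm_le (hf : Differentiable ℂ f) (hf0 : f 0 ≠ 0) (R : ℝ) :
    {z | ‖z‖ ≤ R ∧ f z = 0}.Finite := by
  have hcod := AnalyticOnNhd.preimage_zero_mem_codiscrete (fun z _ => hf.analyticAt z) hf0
  obtain ⟨hopen, hdiscrete⟩ := mem_codiscrete'.mp hcod
  have hcompact : IsCompact (Metric.closedBall 0 R ∩ (f ⁻¹' {0}ᶜ)ᶜ) :=
    (isCompact_closedBall 0 R).inter_right hopen.isClosed_compl
  refine (hcompact.finite (hdiscrete.mono inter_subset_right)).subset fun z hz => ?_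
  simpa using hz

lemma exists_finset_sum_zeros_norm_le (hf : Differentiable ℂ f) (hf0 : f 0 ≠ 0) :
    ∃ s : ℝ → Finset (ZeroWithMult f), Tendsto s atTop atTop ∧ ∀ (a : ℂ → ℂ) (R : ℝ),
      ∑ ρ ∈ s R, a ρ.1 =
        ∑ ρ ∈ (finite_zeros_norm_le hf hf0 R).toFinset, (analyticOrderNatAt f ρ : ℂ) * a ρ := by
  classical
  let s (R : ℝ) : Finset (ZeroWithMult f) :=
    ((finite_zeros_norm_le hf hf0 R).toFinset.subtype (f · = 0)).sigma fun _ => Finset.univ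
  have mem_s (R : ℝ) (ρ : ZeroWithMult f) : ρ ∈ s R ↔ ‖(ρ.1 : ℂ)‖ ≤ R := by
    simp [s, ρ.1.2]
  refine ⟨s, ?_, fun a R => ?_⟩
  · refine tendsto_atTop_finset_of_monotone (fun R R' hR ρ hρ => ?_) fun ρ =>
      ⟨‖(ρ.1 : ℂ)‖, (mem_s _ _).mpr le_rfl⟩
    rw [mem_s] at hρ ⊢
    exact hρ.trans hR
  · rw [Finset.sum_sigma]
    simp only [Finset.sum_const, Finset.card_univ, Fintype.card_fin, nsmul_eq_mul]
    exact Finset.sum_subtype_of_mem (fun ρ => (analyticOrderNatAt f ρ : ℂ) * a ρ) (by simp)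

lemma exists_tendsto_sum_zeros {M : ℝ → ℝ} (hf : Differentiable ℂ f) (hf0 : f 0 ≠ 0)
    (hM : M =o[atTop] fun R => R ^ 2) (hfM : ∀ z, ‖f z‖ ≤ Real.exp (M ‖z‖)) :
    ∃ s : ℝ → Finset (ZeroWithMult f), Tendsto s atTop atTop ∧ ∀ w, f w ≠ 0 →
      Tendsto (fun R => ∑ ρ ∈ s R, (1 / (w - ρ.1) + 1 / (ρ.1 : ℂ))) atTop
        (𝓝 (logDeriv f w - logDeriv f 0)) := by
  obtain ⟨s, hs, hsum⟩ := exists_finset_sum_zeros_norm_le hf hf0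
  refine ⟨s, hs, fun w hw => ?_⟩
  let M' (R : ℝ) : ℝ := |M (2 * R)| + (|Real.log ‖f 0‖| + 1)
  have hM' : Tendsto (fun R => M' R / R ^ 2) atTop (𝓝 0) := by
    have h2 : (fun R : ℝ => M (2 * R)) =o[atTop] fun R => R ^ 2 := by
      refine (hM.comp_tendsto (tendsto_id.const_mul_atTop two_pos)).trans_isBigO ?_
      exact .of_bound 4 (Eventually.of_forall fun R => by simp [mul_pow]; linarith)
    have h3 : (fun _ : ℝ => |Real.log ‖f 0‖| + 1) =o[atTop] fun R : ℝ => R ^ 2 :=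
      Asymptotics.isLittleO_const_left.mpr
        (Or.inr (tendsto_norm_atTop_atTop.comp (tendsto_pow_atTop two_ne_zero)))
    exact (h2.abs_left.add h3).tendsto_div_nhds_zero
  have hsphere (R : ℝ) (z : ℂ) (hz : ‖z‖ = 2 * R) : ‖f z‖ ≤ Real.exp (M' R) * ‖f 0‖ := by
    have hpos : 0 < ‖f 0‖ := norm_pos_iff.mpr hf0
    calc ‖f z‖ ≤ Real.exp (M (2 * R)) := hz ▸ hfM z
      _ ≤ Real.exp (M' R + Real.log ‖f 0‖) := Real.exp_le_exp.mpr (by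
          linarith [le_abs_self (M (2 * R)), neg_abs_le (Real.log ‖f 0‖)])
      _ = Real.exp (M' R) * ‖f 0‖ := by rw [Real.exp_add, Real.exp_log hpos]
  rw [tendsto_iff_norm_sub_tendsto_zero]
  have hbound : Tendsto (fun R => 64 * (M' R / R ^ 2) * ‖w‖) atTop (𝓝 0) := by
    simpa using (hM'.const_mul 64).mul_const ‖w‖
  refine squeeze_zero' (Eventually.of_forall fun R => norm_nonneg _) ?_ hbound
  filter_upwards [eventually_gt_atTop (8 * ‖w‖)] with R hR
  have hR0 : 0 < R := (by positivity : 0 ≤ 8 * ‖w‖).trans_lt hR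
  rw [norm_sub_rev, hsum (fun ρ => 1 / (w - ρ) + 1 / ρ), ← mul_div_assoc]
  exact norm_logDeriv_sub_sub_sum_le hf hf0 hR0 (by positivity) (hsphere R) (by simp)
    (by linarith) hw

end EntireFunctions

/-! ### The xi function -/

section MellinGrowth

variable {F : ℝ → ℂ} {a q : ℝ}

lemma norm_mellin_le (hq : 0 < q) (ha : MellinConvergent F a)
    (hF : IntegrableOn (fun t => Real.exp (q * t) * ‖F t‖) (Ioi 0)) {s : ℂ} {m : ℕ}
    (has : a ≤ s.re) (hsm : s.re ≤ m + 1) :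
    ‖mellin F s‖ ≤ (∫ t in Ioi (0 : ℝ), t ^ (a - 1) * ‖F t‖) +
      m.factorial / q ^ m * ∫ t in Ioi (0 : ℝ), Real.exp (q * t) * ‖F t‖ := by
  have hFa : IntegrableOn (fun t : ℝ => t ^ (a - 1) * ‖F t‖) (Ioi 0) := by
    refine ha.norm.congr ?_
    filter_upwards [self_mem_ae_restrict measurableSet_Ioi] with t ht
    rw [norm_smul, Complex.norm_cpow_eq_rpow_re_of_pos ht]
    simp
  rw [← integral_const_mul, ← integral_add hFa (hF.const_mul _), mellin]
  refine norm_integral_le_of_norm_le (hFa.add (hF.const_mul _)) ?_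
  filter_upwards [self_mem_ae_restrict measurableSet_Ioi] with t ht
  have ht0 : 0 < t := ht
  rw [norm_smul, Complex.norm_cpow_eq_rpow_re_of_pos ht, ← mul_assoc, ← add_mul]
  refine mul_le_mul_of_nonneg_right ?_ (norm_nonneg _)
  rcases le_total t 1 with h1 | h1
  · exact le_add_of_le_of_nonneg (Real.rpow_le_rpow_of_exponent_ge ht0 h1 (by simp; linarith))
      (by positivity)
  · refine le_add_of_nonneg_of_le (by positivity) ?_
    have hexp := Real.pow_div_factorial_le_exp (q * t) (by positivity) m
    rw [mul_pow, div_le_iff₀ (by positivity)] at hexp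
    calc t ^ (s - 1).re ≤ t ^ (m : ℝ) :=
          Real.rpow_le_rpow_of_exponent_le h1 (by simp; linarith)
      _ = t ^ m := Real.rpow_natCast t m
      _ ≤ m.factorial / q ^ m * Real.exp (q * t) := by
          rw [div_mul_eq_mul_div, le_div_iff₀ (by positivity)]
          linarith

lemma integrableOn_exp_mul_norm_of_isBigO {p : ℝ} (hF : IntegrableOn F (Ioi 0)) (hqp : q < p)
    (hdecay : F =O[atTop] fun t => Real.exp (-p * t)) :
    IntegrableOn (fun t => Real.exp (q * t) * ‖F t‖) (Ioi 0) := by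
  have hbigO : (fun t => Real.exp (q * t) * ‖F t‖) =O[atTop] fun t => Real.exp ((q - p) * t) := by
    refine ((Asymptotics.isBigO_refl (fun t => Real.exp (q * t)) atTop).mul
      hdecay.norm_left).congr_right fun t => ?_
    rw [← Real.exp_add]
    congr 1
    ring
  rw [← integrableOn_Ici_iff_integrableOn_Ioi] at hF ⊢
  have hloc : LocallyIntegrableOn (fun t => Real.exp (q * t) * ‖F t‖) (Ici 0) :=
    (IntegrableOn.locallyIntegrableOn hF.norm).continuousOn_mul (by fun_prop)
      isClosed_Ici.isLocallyClosed
  exact hloc.integrableOn_of_isBigO_atTop hbigO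
    ⟨Ioi 0, Ioi_mem_atTop 0, integrableOn_exp_mul_Ioi (by linarith) 0⟩

end MellinGrowth

section Xi

lemma exists_isBigO_f_modif_hurwitzEvenFEPair_zero :
    ∃ p > 0, (HurwitzZeta.hurwitzEvenFEPair 0).f_modif =O[atTop] fun t => Real.exp (-p * t) := by
  obtain ⟨p, hp, hdecay⟩ := HurwitzZeta.isBigO_atTop_evenKernel_sub 0
  refine ⟨p, hp, (hdecay.norm_left.congr' ?_ EventuallyEq.rfl).of_norm_left⟩
  filter_upwards [eventually_gt_atTop 1] with t ht
  rw [WeakFEPair.f_modif, Pi.add_apply, indicator_of_mem (mem_Ioi.mpr ht),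
    indicator_of_notMem (notMem_Ioo_of_ge ht.le), add_zero, ← Complex.norm_real]
  simp [HurwitzZeta.hurwitzEvenFEPair]

lemma exists_norm_completedRiemannZeta₀_le :
    ∃ A D q : ℝ, 0 ≤ A ∧ 0 ≤ D ∧ 0 < q ∧ ∀ (s : ℂ) (m : ℕ), 1 / 2 ≤ s.re → s.re ≤ m →
      ‖completedRiemannZeta₀ s‖ ≤ A + D * (m.factorial / q ^ m) := by
  obtain ⟨p, hp, hdecay⟩ := exists_isBigO_f_modif_hurwitzEvenFEPair_zero
  set F := (HurwitzZeta.hurwitzEvenFEPair 0).f_modif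
  have hmellin (s : ℂ) : MellinConvergent F s :=
    ((HurwitzZeta.hurwitzEvenFEPair 0).isStrongFEPair_toStrongFEPair.hasMellin s).1
  have hF : IntegrableOn F (Ioi 0) := by simpa [MellinConvergent] using hmellin 1
  have hexp := integrableOn_exp_mul_norm_of_isBigO hF (half_lt_self hp) hdecay
  refine ⟨∫ t in Ioi (0 : ℝ), t ^ ((1 / 4 : ℝ) - 1) * ‖F t‖,
    ∫ t in Ioi (0 : ℝ), Real.exp (p / 2 * t) * ‖F t‖, p / 2,
    setIntegral_nonneg measurableSet_Ioi fun t ht => ?_, by positivity, by positivity,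
    fun s m hs hsm => ?_⟩
  · have : 0 < t := ht
    positivity
  have hre : (s / 2).re = s.re / 2 := by simp
  have hle := norm_mellin_le (half_pos hp) (hmellin (1 / 4 : ℝ)) hexp (s := s / 2) (m := m)
    (by linarith) (by linarith)
  have hnorm : ‖completedRiemannZeta₀ s‖ = ‖mellin F (s / 2)‖ / 2 :=
    (norm_div _ _).trans (by simp; rfl)
  rw [hnorm, mul_comm (∫ t in Ioi (0 : ℝ), Real.exp (p / 2 * t) * ‖F t‖)]
  exact (half_le_self (norm_nonneg _)).trans hle

/-- Twice Riemann's xi function, `ξ(s) = s (s - 1) π^{-s/2} Γ(s/2) ζ(s)`, written through the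
entire function `completedRiemannZeta₀` so that it is entire by construction. Its zeros are the
non-trivial zeros of `ζ`, and `ξ(0) = 1`. -/
def riemannXi (s : ℂ) : ℂ := s * (s - 1) * completedRiemannZeta₀ s + 1

lemma differentiable_riemannXi : Differentiable ℂ riemannXi := by
  have := differentiable_completedZeta₀
  unfold riemannXi
  fun_prop

lemma riemannXi_zero : riemannXi 0 = 1 := by simp [riemannXi]

lemma riemannXi_zero_ne_zero : riemannXi 0 ≠ 0 := by simp [riemannXi_zero]

lemma riemannXi_one_sub (s : ℂ) : riemannXi (1 - s) = riemannXi s := by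
  rw [riemannXi, riemannXi, completedRiemannZeta₀_one_sub]
  ring

lemma riemannXi_eq_mul_riemannZeta {s : ℂ} (h0 : 0 < s.re) (h1 : s ≠ 1) :
    riemannXi s = s * (s - 1) * Gammaℝ s * riemannZeta s := by
  have hs0 : s ≠ 0 := by
    rintro rfl
    simp at h0
  have hs1 : 1 - s ≠ 0 := sub_ne_zero.mpr h1.symm
  have hGamma := Gammaℝ_ne_zero_of_re_pos h0
  rw [riemannZeta_def_of_ne_zero hs0, completedRiemannZeta_eq, riemannXi]
  field_simp
  ring

lemma factorial_div_pow_le_exp {q y : ℝ} {m : ℕ} (hq : 0 < q) (hmy : m ≤ y)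
    (hy : 1 ≤ Real.log y) :
    m.factorial / q ^ m ≤ Real.exp ((1 + |Real.log q|) * (y * Real.log y)) := by
  rcases m.eq_zero_or_pos with rfl | hm
  · have : 0 ≤ y := by simpa using hmy
    simpa using Real.one_le_exp (by positivity)
  have hy0 : 0 < y := lt_of_lt_of_le (by exact_mod_cast hm) hmy
  have hfact : (m.factorial : ℝ) ≤ Real.exp (y * Real.log y) := calc
    (m.factorial : ℝ) ≤ (m : ℝ) ^ m := by exact_mod_cast Nat.factorial_le_pow m
    _ ≤ y ^ m := by gcongr
    _ = Real.exp (m * Real.log y) := by rw [Real.exp_nat_mul, Real.exp_log hy0]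
    _ ≤ Real.exp (y * Real.log y) := by gcongr
  have hpow : (q ^ m)⁻¹ ≤ Real.exp (|Real.log q| * (y * Real.log y)) := calc
    (q ^ m)⁻¹ = Real.exp (m * -Real.log q) := by
      rw [Real.exp_nat_mul, Real.exp_neg, Real.exp_log hq, inv_pow]
    _ ≤ Real.exp (|Real.log q| * (y * Real.log y)) := Real.exp_le_exp.mpr <| by
      rw [mul_comm]
      exact mul_le_mul (neg_le_abs _) (hmy.trans (le_mul_of_one_le_right hy0.le hy))
        m.cast_nonneg (abs_nonneg _)
  rw [div_eq_mul_inv, add_mul, one_mul, Real.exp_add]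
  gcongr

-- The Mellin bound is applied with `m = ⌈‖s‖⌉`.
lemma exists_norm_riemannXi_le_of_half_le_re : ∃ K : ℝ, ∀ (s : ℂ) (y : ℝ), 1 / 2 ≤ s.re →
    3 + ‖s‖ ≤ y → ‖riemannXi s‖ ≤ Real.exp (K * (y * Real.log y)) := by
  obtain ⟨A, D, q, hA, hD, hq, hzeta⟩ := exists_norm_completedRiemannZeta₀_le
  refine ⟨A + D + 3 + |Real.log q|, fun s y hs hy => ?_⟩
  have hs0 : 0 ≤ ‖s‖ := norm_nonneg s
  have hy0 : 0 < y := by linarith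
  have hlog : 1 ≤ Real.log y := by
    rw [Real.le_log_iff_exp_le hy0]
    linarith [Real.exp_one_lt_three]
  set L := y * Real.log y
  have hlogL : Real.log y ≤ L := le_mul_of_one_le_left (by linarith) (by linarith)
  have hE : 1 ≤ Real.exp ((1 + |Real.log q|) * L) := Real.one_le_exp (by positivity)
  have hzeta_s : ‖completedRiemannZeta₀ s‖ ≤ (A + D) * Real.exp ((1 + |Real.log q|) * L) := by
    refine (hzeta s _ hs ((Complex.re_le_norm s).trans (Nat.le_ceil _))).trans ?_
    rw [add_mul]
    gcongr
    · exact le_mul_of_one_le_right hA hE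
    · exact factorial_div_pow_le_exp hq (by linarith [Nat.ceil_lt_add_one hs0]) hlog
  have hsq : y ^ 2 ≤ Real.exp (2 * L) := calc
    y ^ 2 = Real.exp (2 * Real.log y) := by rw [two_mul, Real.exp_add, Real.exp_log hy0, sq]
    _ ≤ Real.exp (2 * L) := by gcongr
  have hprod : ‖s * (s - 1)‖ ≤ y ^ 2 := by
    rw [norm_mul, sq]
    have : ‖s - 1‖ ≤ y := (norm_sub_le _ _).trans (by simp; linarith)
    gcongr
    linarith
  have hAD : A + D + 1 ≤ Real.exp ((A + D) * L) := by
    have := le_mul_of_one_le_right (add_nonneg hA hD) (by linarith : 1 ≤ L)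
    linarith [Real.add_one_le_exp ((A + D) * L)]
  calc ‖riemannXi s‖ ≤ ‖s * (s - 1)‖ * ‖completedRiemannZeta₀ s‖ + 1 :=
        (norm_add_le _ _).trans (by rw [norm_mul, norm_one])
    _ ≤ Real.exp (2 * L) * ((A + D) * Real.exp ((1 + |Real.log q|) * L)) +
          Real.exp (2 * L) * Real.exp ((1 + |Real.log q|) * L) := by
        gcongr
        · exact hprod.trans hsq
        · exact one_le_mul_of_one_le_of_one_le (Real.one_le_exp (by positivity)) hE
    _ = Real.exp (2 * L) * Real.exp ((1 + |Real.log q|) * L) * (A + D + 1) := by ring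
    _ ≤ Real.exp (2 * L) * Real.exp ((1 + |Real.log q|) * L) * Real.exp ((A + D) * L) := by
        gcongr
    _ = Real.exp ((A + D + 3 + |Real.log q|) * L) := by
        rw [← Real.exp_add, ← Real.exp_add]
        congr 1
        ring

lemma exists_norm_riemannXi_le : ∃ M : ℝ → ℝ, M =o[atTop] (fun R => R ^ 2) ∧
    ∀ s, ‖riemannXi s‖ ≤ Real.exp (M ‖s‖) := by
  obtain ⟨K, hK⟩ := exists_norm_riemannXi_le_of_half_le_re
  refine ⟨fun R => K * ((4 + R) * Real.log (4 + R)), Asymptotics.IsLittleO.const_mul_left ?_ K,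
    fun s => ?_⟩
  · have hid : (fun R : ℝ => 4 + R) =O[atTop] fun R : ℝ => R :=
      (Asymptotics.isLittleO_const_id_atTop 4).isBigO.add (Asymptotics.isBigO_refl _ _)
    have hlog : (fun R : ℝ => Real.log (4 + R)) =o[atTop] fun R : ℝ => R :=
      (Real.isLittleO_log_id_atTop.comp_tendsto
        (tendsto_atTop_add_const_left atTop 4 tendsto_id)).trans_isBigO hid
    simpa only [sq] using hid.mul_isLittleO hlog
  · rcases le_total (1 / 2) s.re with h | h
    · exact hK s _ h (by linarith)
    · rw [← riemannXi_one_sub]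
      refine hK (1 - s) _ (by simp; linarith) ?_
      linarith [norm_sub_le 1 s, norm_one (α := ℂ)]

end Xi

lemma riemannXi_ne_zero_of_one_le_re {s : ℂ} (hs : 1 ≤ s.re) : riemannXi s ≠ 0 := by
  rcases eq_or_ne s 1 with rfl | h1
  · simp [riemannXi]
  have h0 : s ≠ 0 := by
    rintro rfl
    norm_num at hs
  rw [riemannXi_eq_mul_riemannZeta (by linarith) h1]
  exact mul_ne_zero (mul_ne_zero (mul_ne_zero h0 (sub_ne_zero.mpr h1))
    (Gammaℝ_ne_zero_of_re_pos (by linarith))) (riemannZeta_ne_zero_of_one_le_re hs)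

lemma riemannXi_eq_zero_iff {s : ℂ} : riemannXi s = 0 ↔ ZetaNontrivZero s := by
  by_cases hstrip : 0 < s.re ∧ s.re < 1
  · obtain ⟨h0, h1⟩ := hstrip
    have hs0 : s ≠ 0 := by
      rintro rfl
      simp at h0
    have hs1 : s ≠ 1 := by
      rintro rfl
      simp at h1
    simp [riemannXi_eq_mul_riemannZeta h0 hs1, ZetaNontrivZero, h0, h1, hs0,
      sub_ne_zero.mpr hs1, Gammaℝ_ne_zero_of_re_pos h0]
  · refine iff_of_false (fun h => ?_) fun h => hstrip h.2
    rcases not_and_or.mp hstrip with h0 | h1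
    · rw [← riemannXi_one_sub] at h
      exact riemannXi_ne_zero_of_one_le_re (by simp; linarith) h
    · exact riemannXi_ne_zero_of_one_le_re (not_lt.mp h1) h

lemma re_eq_half_of_zetaNontrivZero (hRH : RiemannHypothesis) {s : ℂ} (h : ZetaNontrivZero s) :
    s.re = 1 / 2 := by
  obtain ⟨hzero, h0, h1⟩ := h
  refine hRH s hzero ?_ (by rintro rfl; simp at h1)
  rintro ⟨n, rfl⟩
  simp at h0
  linarith [n.cast_nonneg (α := ℝ)]

lemma analyticOrderAt_riemannXi {s : ℂ} (h0 : 0 < s.re) (h1 : s ≠ 1) :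
    analyticOrderAt riemannXi s = analyticOrderAt riemannZeta s := by
  have hs0 : s ≠ 0 := by
    rintro rfl
    simp at h0
  have hGamma := Gammaℝ_ne_zero_of_re_pos h0
  have hGamma_an : AnalyticAt ℂ Gammaℝ s :=
    ((differentiable_Gammaℝ_inv.analyticAt s).inv (inv_ne_zero hGamma)).congr
      (Eventually.of_forall fun z => by simp)
  have hfactor : AnalyticAt ℂ (fun s => s * (s - 1) * Gammaℝ s) s := by fun_prop
  have heq : riemannXi =ᶠ[𝓝 s] (fun s => s * (s - 1) * Gammaℝ s) * riemannZeta := by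
    filter_upwards [(isOpen_lt continuous_const Complex.continuous_re).mem_nhds h0,
      isOpen_ne.mem_nhds h1] with z hz0 hz1
    exact riemannXi_eq_mul_riemannZeta hz0 hz1
  rw [analyticOrderAt_congr heq, analyticOrderAt_mul hfactor (analyticOn_riemannZeta s h1),
    hfactor.analyticOrderAt_eq_zero.mpr
      (mul_ne_zero (mul_ne_zero hs0 (sub_ne_zero.mpr h1)) hGamma), zero_add]

lemma zetaMult_eq_analyticOrderNatAt {s : ℂ} (h : ZetaNontrivZero s) :
    zetaMult s = analyticOrderNatAt riemannXi s := by
  obtain ⟨-, h0, h1⟩ := h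
  have hs1 : s ≠ 1 := by
    rintro rfl
    simp at h1
  have hord := Nat.cast_analyticOrderNatAt <|
    analyticOrderAt_ne_top_of_apply_zero_ne_zero differentiable_riemannXi riemannXi_zero_ne_zero s
  rw [analyticOrderAt_riemannXi h0 hs1, eq_comm,
    analyticOrderAt_eq_nat_iff_iteratedDeriv_eq_zero (analyticOn_riemannZeta s hs1)] at hord
  exact le_antisymm (Nat.sInf_le hord.2)
    (le_csInf ⟨_, hord.2⟩ fun n hn => not_lt.mp fun hlt => hn (hord.1 n hlt))

/-- Index type for the non-trivial zeros of `ζ`, repeated according to multiplicity. -/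
abbrev XiZero : Type := ZeroWithMult riemannXi

/-- The ordinate `γ` of a zero `β + iγ`. -/
def ordinate (ρ : XiZero) : ℝ := (ρ.1 : ℂ).im

local notation "γ" => ordinate

lemma XiZero.zetaNontrivZero (ρ : XiZero) : ZetaNontrivZero ρ.1 :=
  riemannXi_eq_zero_iff.mp ρ.1.2

lemma XiZero.coe_eq (hRH : RiemannHypothesis) (ρ : XiZero) : (ρ.1 : ℂ) = 1 / 2 + γ ρ * I := by
  apply Complex.ext
  · simp [re_eq_half_of_zetaNontrivZero hRH ρ.zetaNontrivZero]
  · simp [ordinate]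

-- At `w = 1` every term `1 / (w - ρ) + 1 / ρ` of Hadamard's formula has real part at least
-- `1 / (1 + γ ^ 2)`, and the sum of the terms is bounded.
lemma summable_one_div_one_add_ordinate_sq : Summable fun ρ : XiZero => 1 / (1 + γ ρ ^ 2) := by
  obtain ⟨M, hM, hXi⟩ := exists_norm_riemannXi_le
  obtain ⟨s, hs, hlim⟩ := exists_tendsto_sum_zeros differentiable_riemannXi riemannXi_zero_ne_zero
    hM hXi
  have hre := (Complex.continuous_re.tendsto _).comp
    (hlim 1 (riemannXi_ne_zero_of_one_le_re (by simp)))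
  have hterm (ρ : XiZero) : 1 / (1 + γ ρ ^ 2) ≤ (1 / (1 - ρ.1) + 1 / (ρ.1 : ℂ)).re := by
    obtain ⟨-, h0, h1⟩ := ρ.zetaNontrivZero
    have hre_eq : (1 / (1 - ρ.1) + 1 / (ρ.1 : ℂ)).re =
        (1 - (ρ.1 : ℂ).re) / ((1 - (ρ.1 : ℂ).re) ^ 2 + γ ρ ^ 2) +
          (ρ.1 : ℂ).re / ((ρ.1 : ℂ).re ^ 2 + γ ρ ^ 2) := by
      simp [Complex.inv_re, Complex.normSq_apply, ordinate, sq]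
    calc 1 / (1 + γ ρ ^ 2) =
          (1 - (ρ.1 : ℂ).re) / (1 + γ ρ ^ 2) + (ρ.1 : ℂ).re / (1 + γ ρ ^ 2) := by ring
      _ ≤ _ := by rw [hre_eq]; gcongr <;> nlinarith
  refine summable_of_sum_le (c := (logDeriv riemannXi 1 - logDeriv riemannXi 0).re)
    (fun ρ => by positivity) fun u => ge_of_tendsto hre ?_
  filter_upwards [hs.eventually (eventually_ge_atTop u)] with R hR
  rw [Function.comp_apply, Complex.re_sum]
  exact (Finset.sum_le_sum_of_subset_of_nonneg hR fun ρ _ _ => by positivity).trans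
    (Finset.sum_le_sum fun ρ _ => hterm ρ)

lemma hasSum_logDeriv_riemannXi {w : ℂ} (hw : riemannXi w ≠ 0)
    (hsum : Summable fun ρ : XiZero => 1 / (w - ρ.1) + 1 / (ρ.1 : ℂ)) :
    HasSum (fun ρ : XiZero => 1 / (w - ρ.1) + 1 / (ρ.1 : ℂ))
      (logDeriv riemannXi w - logDeriv riemannXi 0) := by
  obtain ⟨M, hM, hXi⟩ := exists_norm_riemannXi_le
  obtain ⟨s, hs, hlim⟩ := exists_tendsto_sum_zeros differentiable_riemannXi riemannXi_zero_ne_zero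
    hM hXi
  exact tendsto_nhds_unique (hsum.hasSum.comp hs) (hlim w hw) ▸ hsum.hasSum

/-! ### The logarithmic derivative of xi under the Riemann hypothesis -/

/-- The logarithmic derivative of `ξ` in the coordinate `w = s - 1/2` centred at the critical
line. -/
def xiLogDeriv (w : ℂ) : ℂ := logDeriv riemannXi (1 / 2 + w)

lemma xiLogDeriv_neg (w : ℂ) : xiLogDeriv (-w) = -xiLogDeriv w := by
  have hderiv : deriv riemannXi (1 / 2 - w) = -deriv riemannXi (1 / 2 + w) := by
    have h := deriv_comp_const_sub riemannXi 1 (1 / 2 + w)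
    rw [funext riemannXi_one_sub, show 1 - (1 / 2 + w) = 1 / 2 - w by ring] at h
    rw [h, neg_neg]
  rw [xiLogDeriv, xiLogDeriv, ← sub_eq_add_neg, logDeriv_apply, logDeriv_apply, hderiv,
    ← riemannXi_one_sub (1 / 2 + w), show 1 - (1 / 2 + w) = 1 / 2 - w by ring, neg_div]

lemma riemannXi_half_add_ne_zero (hRH : RiemannHypothesis) {w : ℂ} (hw : w.re ≠ 0) :
    riemannXi (1 / 2 + w) ≠ 0 := fun h => by
  simpa [hw] using re_eq_half_of_zetaNontrivZero hRH (riemannXi_eq_zero_iff.mp h)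

lemma one_add_sq_le_mul (t x : ℝ) : 1 + x ^ 2 ≤ 2 * (1 + t ^ 2) * (1 + (t - x) ^ 2) := by
  nlinarith [sq_nonneg (t + (t - x)), sq_nonneg (t * (t - x)), sq_nonneg t, sq_nonneg (t - x)]

lemma one_add_sq_le_mul_sq_add_sq {a : ℝ} (ha : a ≠ 0) (t x : ℝ) :
    1 + x ^ 2 ≤ 2 * (1 + 1 / |a|) ^ 2 * (1 + t ^ 2) * (a ^ 2 + (t - x) ^ 2) := by
  have h1 : (1 + 1 / |a|) ^ 2 * a ^ 2 = (|a| + 1) ^ 2 := by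
    rw [← sq_abs a]
    field_simp
  have h2 : 1 ≤ (1 + 1 / |a|) ^ 2 := one_le_pow₀ (by simp)
  have h3 : 1 + (t - x) ^ 2 ≤ (1 + 1 / |a|) ^ 2 * (a ^ 2 + (t - x) ^ 2) := by
    nlinarith [sq_nonneg (t - x), abs_nonneg a]
  calc 1 + x ^ 2 ≤ 2 * (1 + t ^ 2) * (1 + (t - x) ^ 2) := one_add_sq_le_mul t x
    _ ≤ 2 * (1 + t ^ 2) * ((1 + 1 / |a|) ^ 2 * (a ^ 2 + (t - x) ^ 2)) := by gcongr
    _ = _ := by ring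

lemma normSq_ofReal_add_mul_I_sub (a t x : ℝ) :
    Complex.normSq (a + t * I - x * I) = a ^ 2 + (t - x) ^ 2 := by
  rw [show (a + t * I - x * I : ℂ) = a + (t - x : ℝ) * I by push_cast; ring,
    Complex.normSq_add_mul_I]

lemma re_one_div_ofReal_add_mul_I_sub (a t x : ℝ) :
    (1 / (a + t * I - x * I : ℂ)).re = a / (a ^ 2 + (t - x) ^ 2) := by
  rw [one_div, Complex.inv_re, normSq_ofReal_add_mul_I_sub]
  simp

lemma norm_one_div_sub_add_one_div_le {a : ℝ} (ha : a ≠ 0) (t x : ℝ) :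
    ‖1 / (a + t * I - x * I : ℂ) + 1 / (1 / 2 + x * I)‖ ≤
      3 * (1 + |a|) * (1 + 1 / |a|) * (1 + t ^ 2) * (1 / (1 + x ^ 2)) := by
  have hu : ‖(a + t * I - x * I : ℂ)‖ ^ 2 = a ^ 2 + (t - x) ^ 2 := by
    rw [← Complex.normSq_eq_norm_sq, normSq_ofReal_add_mul_I_sub]
  have hv : ‖(1 / 2 + x * I : ℂ)‖ ^ 2 = 1 / 4 + x ^ 2 := by
    rw [← Complex.normSq_eq_norm_sq, ← Complex.ofReal_ofNat, ← Complex.ofReal_one,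
      ← Complex.ofReal_div, Complex.normSq_add_mul_I]
    norm_num
  have huv : ‖(a + t * I - x * I : ℂ) + (1 / 2 + x * I)‖ ^ 2 = (a + 1 / 2) ^ 2 + t ^ 2 := by
    rw [show (a + t * I - x * I : ℂ) + (1 / 2 + x * I) = (a + 1 / 2 : ℝ) + t * I by
      push_cast; ring, ← Complex.normSq_eq_norm_sq, Complex.normSq_add_mul_I]
  have hu0 : (a + t * I - x * I : ℂ) ≠ 0 := fun h => by
    rw [h, norm_zero] at hu
    nlinarith [sq_nonneg (t - x), sq_pos_of_ne_zero ha]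
  have hv0 : (1 / 2 + x * I : ℂ) ≠ 0 := fun h => by
    rw [h, norm_zero] at hv
    nlinarith [sq_nonneg x]
  have hnum : ‖(a + t * I - x * I : ℂ) + (1 / 2 + x * I)‖ ^ 2 ≤ (1 + |a|) ^ 2 * (1 + t ^ 2) := by
    have h1 : (a + 1 / 2) ^ 2 ≤ (1 + |a|) ^ 2 :=
      sq_le_sq' (by linarith [neg_abs_le a]) (by linarith [le_abs_self a])
    have h2 : 1 ≤ (1 + |a|) ^ 2 := one_le_pow₀ (by simp)
    rw [huv]
    nlinarith [sq_nonneg t]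
  rw [div_add_div _ _ hu0 hv0, one_mul, mul_one, norm_div, norm_mul, add_comm (1 / 2 + _ : ℂ),
    mul_one_div, div_le_div_iff₀ (by positivity) (by positivity)]
  refine le_of_sq_le_sq ?_ (by positivity)
  have hden : 1 + x ^ 2 ≤ 2 * (1 + 1 / |a|) ^ 2 * (1 + t ^ 2) * ‖(a + t * I - x * I : ℂ)‖ ^ 2 :=
    hu ▸ one_add_sq_le_mul_sq_add_sq ha t x
  have hx : 1 + x ^ 2 ≤ 4 * ‖(1 / 2 + x * I : ℂ)‖ ^ 2 := by rw [hv]; linarith [sq_nonneg x]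
  rw [mul_pow]
  calc _ ≤ ((1 + |a|) ^ 2 * (1 + t ^ 2)) * ((2 * (1 + 1 / |a|) ^ 2 * (1 + t ^ 2) *
        ‖(a + t * I - x * I : ℂ)‖ ^ 2) * (4 * ‖(1 / 2 + x * I : ℂ)‖ ^ 2)) := by
        rw [sq (1 + x ^ 2)]
        gcongr
    _ ≤ _ := by nlinarith [sq_nonneg ((1 + |a|) * (1 + 1 / |a|) * (1 + t ^ 2) *
        ‖(a + t * I - x * I : ℂ)‖ * ‖(1 / 2 + x * I : ℂ)‖)]

lemma hasSum_xiLogDeriv (hRH : RiemannHypothesis) {a : ℝ} (ha : a ≠ 0) (t : ℝ) :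
    HasSum (fun ρ : XiZero => 1 / (a + t * I - γ ρ * I : ℂ) + 1 / (1 / 2 + γ ρ * I))
      (xiLogDeriv (a + t * I) - xiLogDeriv (-(1 / 2))) := by
  have hterm : (fun ρ : XiZero => 1 / (a + t * I - γ ρ * I : ℂ) + 1 / (1 / 2 + γ ρ * I)) =
      fun ρ => 1 / ((1 / 2 + (a + t * I) : ℂ) - ρ.1) + 1 / (ρ.1 : ℂ) := by
    ext ρ
    rw [ρ.coe_eq hRH]
    ring_nf
  have hsum := Summable.of_norm_bounded (summable_one_div_one_add_ordinate_sq.mul_left _)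
    fun ρ : XiZero => norm_one_div_sub_add_one_div_le ha t (γ ρ)
  rw [hterm] at hsum ⊢
  simpa only [xiLogDeriv, add_neg_cancel] using
    hasSum_logDeriv_riemannXi (riemannXi_half_add_ne_zero hRH (by simpa using ha)) hsum

-- At `w = 1/2` oddness turns the difference into `2 * xiLogDeriv (1/2)`, which evaluates the
-- constant of the partial fraction expansion.
lemma hasSum_re_xiLogDeriv (hRH : RiemannHypothesis) {a : ℝ} (ha : a ≠ 0) (t : ℝ) :
    HasSum (fun ρ : XiZero => a / (a ^ 2 + (t - γ ρ) ^ 2)) (xiLogDeriv (a + t * I)).re := by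
  have hre (x : ℝ) : (1 / (1 / 2 + x * I : ℂ)).re = (1 / 2) / ((1 / 2) ^ 2 + x ^ 2) := by
    simpa using re_one_div_ofReal_add_mul_I_sub (1 / 2) 0 (-x)
  have hconst : HasSum (fun ρ : XiZero => (1 / (1 / 2 + γ ρ * I : ℂ)).re)
      (-xiLogDeriv (-(1 / 2))).re := by
    have h := (Complex.hasSum_re (hasSum_xiLogDeriv hRH (one_half_pos (α := ℝ)).ne' 0)).mul_left
      (1 / 2)
    have hval : (-xiLogDeriv (-(1 / 2))).re =
        1 / 2 * (xiLogDeriv ((1 / 2 : ℝ) + (0 : ℝ) * I) - xiLogDeriv (-(1 / 2))).re := by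
      rw [xiLogDeriv_neg]
      simp
      ring
    rw [hval]
    refine h.congr_fun fun ρ => ?_
    rw [Complex.add_re, re_one_div_ofReal_add_mul_I_sub, hre]
    ring
  have h := (Complex.hasSum_re (hasSum_xiLogDeriv hRH ha t)).sub hconst
  rw [← Complex.sub_re, sub_neg_eq_add, sub_add_cancel] at h
  refine h.congr_fun fun ρ => ?_
  rw [Complex.add_re, re_one_div_ofReal_add_mul_I_sub, add_sub_cancel_right]

/-! ### The gamma factor and the density of the zeros -/

lemma ne_neg_natCast_of_re_pos {z : ℂ} (hz : 0 < z.re) (m : ℕ) : z ≠ -m := by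
  rintro rfl
  simp at hz
  linarith [m.cast_nonneg (α := ℝ)]

lemma differentiableOn_digamma : DifferentiableOn ℂ digamma {z | 0 < z.re} := by
  have hopen : IsOpen {z : ℂ | 0 < z.re} := isOpen_lt continuous_const Complex.continuous_re
  have hGamma : DifferentiableOn ℂ Complex.Gamma {z | 0 < z.re} := fun z hz =>
    (Complex.differentiableAt_Gamma z (ne_neg_natCast_of_re_pos hz)).differentiableWithinAt
  exact (hGamma.deriv hopen).div hGamma fun z hz => Complex.Gamma_ne_zero_of_re_pos hz

lemma differentiableAt_realGamma {x : ℝ} (hx : 0 < x) : DifferentiableAt ℝ Real.Gamma x :=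
  Real.differentiableAt_Gamma fun m => by linarith [m.cast_nonneg (α := ℝ)]

lemma digamma_ofReal {x : ℝ} (hx : 0 < x) : digamma x = (logDeriv Real.Gamma x : ℝ) := by
  have hcomplex := (Complex.differentiableAt_Gamma x
    (ne_neg_natCast_of_re_pos (by simpa using hx))).hasDerivAt.comp_ofReal
  have hreal := (differentiableAt_realGamma hx).hasDerivAt.ofReal_comp
  rw [funext fun y : ℝ => Complex.Gamma_ofReal y] at hcomplex
  rw [Complex.digamma_def, logDeriv_apply, logDeriv_apply, hcomplex.unique hreal,
    Complex.Gamma_ofReal, Complex.ofReal_div]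

-- This is the log-convexity of the real Gamma function.
lemma monotoneOn_logDeriv_Gamma : MonotoneOn (logDeriv Real.Gamma) (Ioi 0) := by
  have hGamma {x : ℝ} (hx : x ∈ Ioi 0) : Real.Gamma x ≠ 0 := (Real.Gamma_pos_of_pos hx).ne'
  refine (Real.convexOn_log_Gamma.monotoneOn_deriv fun x hx =>
    (differentiableAt_realGamma hx).log (hGamma hx)).congr fun x hx => ?_
  rw [Real.deriv_log_comp_eq_logDeriv (differentiableAt_realGamma hx) (hGamma hx)]

lemma logDeriv_Gamma_add_one {x : ℝ} (hx : 0 < x) :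
    logDeriv Real.Gamma (x + 1) = logDeriv Real.Gamma x + 1 / x := by
  have h := Complex.digamma_apply_add_one x (ne_neg_natCast_of_re_pos (by simpa using hx))
  rw [← Complex.ofReal_one, ← Complex.ofReal_add, digamma_ofReal (by linarith),
    digamma_ofReal hx] at h
  rw [one_div]
  exact_mod_cast h

lemma logDeriv_Gamma_add_natCast {x : ℝ} (hx : 0 < x) (n : ℕ) :
    logDeriv Real.Gamma (x + n) = logDeriv Real.Gamma x + ∑ k ∈ Finset.range n, 1 / (x + k) := by
  induction n with
  | zero => simp
  | succ n ih =>
    rw [Finset.sum_range_succ, ← add_assoc, ← ih, ← logDeriv_Gamma_add_one (by positivity)]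
    push_cast
    ring_nf

lemma norm_one_div_sub_one_div_add_le {z : ℂ} (hz : 0 < z.re) (k : ℕ) :
    ‖1 / ((k : ℂ) + 1) - 1 / (z + k + 1)‖ ≤ ‖z‖ * (1 / ((k : ℝ) + 1) ^ 2) := by
  have hle : (k : ℝ) + 1 ≤ ‖z + k + 1‖ :=
    le_trans (by simpa using hz.le) (Complex.re_le_norm (z + k + 1))
  have hk : ‖(k : ℂ) + 1‖ = k + 1 := by exact_mod_cast Complex.norm_natCast (k + 1)
  have hk0 : (k : ℂ) + 1 ≠ 0 := Nat.cast_add_one_ne_zero k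
  have hz0 : z + k + 1 ≠ 0 := norm_pos_iff.mp (lt_of_lt_of_le (by positivity) hle)
  rw [div_sub_div _ _ hk0 hz0, show 1 * (z + k + 1) - (k + 1) * 1 = z by ring, norm_div, norm_mul,
    hk, div_eq_mul_one_div, sq]
  gcongr

lemma summable_one_div_natCast_add_one_sq : Summable fun k : ℕ => 1 / ((k : ℝ) + 1) ^ 2 := by
  simpa using (summable_nat_add_iff 1).mpr (Real.summable_one_div_nat_pow.mpr one_lt_two)

lemma summable_one_div_sub_one_div_add {z : ℂ} (hz : 0 < z.re) :
    Summable fun k : ℕ => 1 / ((k : ℂ) + 1) - 1 / (z + k + 1) :=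
  .of_norm_bounded (summable_one_div_natCast_add_one_sq.mul_left ‖z‖)
    (norm_one_div_sub_one_div_add_le hz)

-- The remainder `ψ(1 + x + n) - ψ(1 + n)` lies between `0` and `ψ(2 + n) - ψ(1 + n) = 1/(n + 1)`.
lemma tendsto_logDeriv_Gamma_sub {x : ℝ} (hx : x ∈ Ioo 0 1) :
    Tendsto (fun n : ℕ => logDeriv Real.Gamma (1 + x + n) - logDeriv Real.Gamma (1 + n)) atTop
      (𝓝 0) := by
  obtain ⟨h0, h1⟩ := hx
  refine squeeze_zero (fun n => ?_) (fun n => ?_) (tendsto_one_div_add_atTop_nhds_zero_nat (𝕜 := ℝ))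
  · exact sub_nonneg.mpr (monotoneOn_logDeriv_Gamma (mem_Ioi.mpr (by positivity))
      (mem_Ioi.mpr (by positivity)) (by linarith))
  · have hmono : logDeriv Real.Gamma (1 + x + n) ≤ logDeriv Real.Gamma (1 + n + 1) :=
      monotoneOn_logDeriv_Gamma (mem_Ioi.mpr (by positivity)) (mem_Ioi.mpr (by positivity))
        (by linarith)
    rw [logDeriv_Gamma_add_one (by positivity)] at hmono
    rw [add_comm (n : ℝ) 1]
    linarith

lemma tsum_one_div_sub_one_div_ofReal_add {x : ℝ} (hx : x ∈ Ioo 0 1) :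
    ∑' k : ℕ, (1 / ((k : ℂ) + 1) - 1 / ((x : ℂ) + k + 1)) = digamma (x + 1) - digamma 1 := by
  have hpartial (n : ℕ) : ∑ k ∈ Finset.range n, (1 / ((k : ℂ) + 1) - 1 / ((x : ℂ) + k + 1)) =
      ((logDeriv Real.Gamma (1 + x) - logDeriv Real.Gamma 1 -
        (logDeriv Real.Gamma (1 + x + n) - logDeriv Real.Gamma (1 + n)) : ℝ) : ℂ) := by
    rw [logDeriv_Gamma_add_natCast (by linarith [hx.1]), logDeriv_Gamma_add_natCast one_pos,
      Finset.sum_sub_distrib]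
    push_cast
    simp only [add_comm (1 : ℂ), add_right_comm (x : ℂ) 1]
    ring
  have hvalue : digamma (x + 1) - digamma 1 =
      ((logDeriv Real.Gamma (1 + x) - logDeriv Real.Gamma 1 : ℝ) : ℂ) := by
    have h1 := digamma_ofReal one_pos
    rw [Complex.ofReal_one] at h1
    rw [h1, add_comm, ← Complex.ofReal_one, ← Complex.ofReal_add,
      digamma_ofReal (by linarith [hx.1]), Complex.ofReal_sub]
  refine tendsto_nhds_unique
    (summable_one_div_sub_one_div_add (by simpa using hx.1)).hasSum.tendsto_sum_nat ?_
  simp only [hpartial, hvalue]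
  exact (Complex.continuous_ofReal.tendsto _).comp
    (by simpa using tendsto_const_nhds.sub (tendsto_logDeriv_Gamma_sub hx))

lemma differentiableOn_tsum_one_div_sub_one_div_add (R : ℝ) :
    DifferentiableOn ℂ (fun z : ℂ => ∑' k : ℕ, (1 / ((k : ℂ) + 1) - 1 / (z + k + 1)))
      ({z | 0 < z.re} ∩ Metric.ball 0 R) := by
  refine differentiableOn_tsum_of_summable_norm (summable_one_div_natCast_add_one_sq.mul_left R)
    (fun k z hz => DifferentiableAt.differentiableWithinAt ?_)
    ((isOpen_lt continuous_const Complex.continuous_re).inter Metric.isOpen_ball) fun k z hz => ?_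
  · have hne : z + k + 1 ≠ 0 := fun h => by
      have hre : z.re + k + 1 = 0 := by simpa using congrArg Complex.re h
      linarith [k.cast_nonneg (α := ℝ), show 0 < z.re from hz.1]
    fun_prop (disch := assumption)
  · refine (norm_one_div_sub_one_div_add_le hz.1 k).trans ?_
    gcongr
    exact (mem_ball_zero_iff.mp hz.2).le

-- Both sides are holomorphic on half-discs, and they agree on the real segment `(0, 1)`.
lemma digamma_add_one_eq {z : ℂ} (hz : 0 < z.re) :
    digamma (z + 1) = digamma 1 + ∑' k : ℕ, (1 / ((k : ℂ) + 1) - 1 / (z + k + 1)) := by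
  set U : Set ℂ := {w | 0 < w.re} ∩ Metric.ball 0 (‖z‖ + 1)
  have hUo : IsOpen U :=
    (isOpen_lt continuous_const Complex.continuous_re).inter Metric.isOpen_ball
  have hUc : Convex ℝ U := (convex_halfSpace_re_gt 0).inter (convex_ball _ _)
  have hleft : DifferentiableOn ℂ (fun z => digamma (z + 1)) U :=
    differentiableOn_digamma.comp (by fun_prop) fun w hw => by
      simpa using add_pos (show 0 < w.re from hw.1) one_pos
  have hright : DifferentiableOn ℂ
      (fun z : ℂ => digamma 1 + ∑' k : ℕ, (1 / ((k : ℂ) + 1) - 1 / (z + k + 1))) U :=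
    (differentiableOn_tsum_one_div_sub_one_div_add _).const_add _
  have hhalf : ((1 / 2 : ℝ) : ℂ) ∈ U := by
    refine ⟨by simp, ?_⟩
    rw [mem_ball_zero_iff, Complex.norm_real]
    norm_num
    linarith [norm_nonneg z]
  refine (hleft.analyticOnNhd hUo).eqOn_of_preconnected_of_frequently_eq (hright.analyticOnNhd hUo)
    hUc.isPreconnected hhalf ?_ ⟨hz, by simp⟩
  have htendsto : Tendsto (fun x : ℝ => (x : ℂ)) (𝓝[≠] (1 / 2)) (𝓝[≠] ((1 / 2 : ℝ) : ℂ)) :=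
    (Complex.continuous_ofReal.tendsto _).inf (tendsto_principal_principal.mpr fun x hx =>
      Complex.ofReal_injective.ne hx)
  refine htendsto.frequently (Eventually.frequently ?_)
  filter_upwards [mem_nhdsWithin_of_mem_nhds (Ioo_mem_nhds one_half_pos one_half_lt_one)]
    with x hx
  rw [tsum_one_div_sub_one_div_ofReal_add hx, add_sub_cancel]

/-- The sum over the trivial zeros `-2, -4, …` of `ζ` in the partial fraction expansion of
`ζ' / ζ`, with the sign of the gamma factor. -/
def trivialZeroSum (s : ℂ) : ℂ := ∑' k : ℕ, (1 / (2 * ((k : ℂ) + 1)) - 1 / (s + 2 * (k + 1)))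

lemma one_div_two_mul_sub_one_div_add (s : ℂ) (k : ℕ) :
    1 / (2 * ((k : ℂ) + 1)) - 1 / (s + 2 * (k + 1)) =
      1 / 2 * (1 / ((k : ℂ) + 1) - 1 / (s / 2 + k + 1)) := by
  rw [mul_sub, one_div_mul_one_div, one_div_mul_one_div]
  congr 2
  ring

lemma summable_trivialZeroSum {s : ℂ} (hs : 0 < s.re) :
    Summable fun k : ℕ => 1 / (2 * ((k : ℂ) + 1)) - 1 / (s + 2 * (k + 1)) := by
  simp only [one_div_two_mul_sub_one_div_add]
  exact (summable_one_div_sub_one_div_add (by simpa using hs)).mul_left _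

lemma norm_trivialZeroSum_term_le {s : ℂ} (hs : 0 < s.re) (k : ℕ) :
    ‖1 / (2 * ((k : ℂ) + 1)) - 1 / (s + 2 * (k + 1))‖ ≤ ‖s‖ / 4 * (1 / ((k : ℝ) + 1) ^ 2) := by
  have h := norm_one_div_sub_one_div_add_le (z := s / 2) (by simpa using hs) k
  rw [norm_div, Complex.norm_ofNat] at h
  rw [one_div_two_mul_sub_one_div_add, norm_mul, show ‖(1 / 2 : ℂ)‖ = 1 / 2 by norm_num]
  linarith

lemma differentiableAt_Gammaℝ {s : ℂ} (hs : 0 < s.re) : DifferentiableAt ℂ Gammaℝ s :=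
  ((differentiable_Gammaℝ_inv s).inv
    (inv_ne_zero (Gammaℝ_ne_zero_of_re_pos hs))).congr_of_eventuallyEq
      (Eventually.of_forall fun z => by simp)

lemma logDeriv_Gammaℝ {s : ℂ} (hs : 0 < s.re) :
    logDeriv Gammaℝ s = -Real.log π / 2 + digamma (s / 2) / 2 := by
  have hs2 : 0 < (s / 2).re := by simpa using hs
  have hpi : (π : ℂ) ≠ 0 := Complex.ofReal_ne_zero.mpr Real.pi_ne_zero
  have hpow : HasDerivAt (fun s : ℂ => (π : ℂ) ^ (-s / 2))
      ((π : ℂ) ^ (-s / 2) * Complex.log π * (-1 / 2)) s := by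
    simpa using (((hasDerivAt_id s).neg).div_const 2).const_cpow (c := (π : ℂ)) (Or.inl hpi)
  have hGamma : HasDerivAt (fun s : ℂ => Complex.Gamma (s / 2))
      (deriv Complex.Gamma (s / 2) * (1 / 2)) s :=
    (Complex.differentiableAt_Gamma _ (ne_neg_natCast_of_re_pos hs2)).hasDerivAt.comp s
      ((hasDerivAt_id s).div_const 2)
  have hGamma0 := Complex.Gamma_ne_zero_of_re_pos hs2
  have hderiv : deriv Gammaℝ s = _ := (hpow.mul hGamma).deriv
  rw [logDeriv_apply, hderiv, Complex.digamma_def, logDeriv_apply, Complex.Gammaℝ_def,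
    Complex.ofReal_log Real.pi_pos.le]
  field_simp

lemma logDeriv_Gammaℝ_add_one_div {s : ℂ} (hs : 0 < s.re) :
    logDeriv Gammaℝ s + 1 / s = digamma 1 / 2 - Real.log π / 2 + trivialZeroSum s := by
  have hs2 : 0 < (s / 2).re := by simpa using hs
  have hseries := digamma_add_one_eq hs2
  rw [Complex.digamma_apply_add_one _ (ne_neg_natCast_of_re_pos hs2)] at hseries
  rw [logDeriv_Gammaℝ hs, trivialZeroSum]
  simp only [one_div_two_mul_sub_one_div_add]
  rw [tsum_mul_left]
  linear_combination (1 / 2) * hseries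

lemma logDeriv_mul_sub_one {s : ℂ} (h0 : s ≠ 0) (h1 : s ≠ 1) :
    logDeriv (fun s : ℂ => s * (s - 1)) s = 1 / s + 1 / (s - 1) := by
  rw [logDeriv_mul (f := fun s : ℂ => s) (g := fun s : ℂ => s - 1) s h0 (sub_ne_zero.mpr h1)
    (by fun_prop) (by fun_prop)]
  simp [logDeriv_apply]

lemma xiLogDeriv_eq {w : ℂ} (hw : 1 / 2 < w.re) :
    xiLogDeriv w = 1 / (w - 1 / 2) + (digamma 1 / 2 - Real.log π / 2) +
      trivialZeroSum (w + 1 / 2) - LSeries (fun n => (Λ n : ℂ)) (w + 1 / 2) := by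
  obtain ⟨s, rfl⟩ : ∃ s, w = s - 1 / 2 := ⟨w + 1 / 2, by ring⟩
  rw [xiLogDeriv, sub_add_cancel, add_sub_cancel, show s - 1 / 2 - 1 / 2 = s - 1 by ring]
  have hre : 1 < s.re := by
    norm_num at hw
    linarith
  have hpos : 0 < s.re := one_pos.trans hre
  have hs0 : s ≠ 0 := fun h => by simp [h] at hpos
  have hs1 : s ≠ 1 := fun h => by simp [h] at hre
  have hxi : riemannXi =ᶠ[𝓝 s] fun s => s * (s - 1) * Gammaℝ s * riemannZeta s := by
    filter_upwards [(isOpen_lt continuous_const Complex.continuous_re).mem_nhds hre] with z hz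
    exact riemannXi_eq_mul_riemannZeta (one_pos.trans hz) fun h => by simp [h] at hz
  have hGamma0 := Gammaℝ_ne_zero_of_re_pos hpos
  have hGamma := differentiableAt_Gammaℝ hpos
  have hpoly0 := mul_ne_zero hs0 (sub_ne_zero.mpr hs1)
  rw [logDeriv_apply, hxi.deriv_eq, hxi.eq_of_nhds, ← logDeriv_apply,
    logDeriv_mul (f := fun s : ℂ => s * (s - 1) * Gammaℝ s) (g := riemannZeta) s
      (mul_ne_zero hpoly0 hGamma0) (riemannZeta_ne_zero_of_one_le_re hre.le)
      ((by fun_prop : DifferentiableAt ℂ (fun s : ℂ => s * (s - 1)) s).mul hGamma)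
      (differentiableAt_riemannZeta hs1),
    logDeriv_mul (f := fun s : ℂ => s * (s - 1)) (g := Gammaℝ) s hpoly0 hGamma0 (by fun_prop)
      hGamma,
    logDeriv_mul_sub_one hs0 hs1,
    ArithmeticFunction.LSeries_vonMangoldt_eq_deriv_riemannZeta_div hre, logDeriv_apply riemannZeta]
  linear_combination logDeriv_Gammaℝ_add_one_div hpos

lemma sum_range_one_div_add_sq_le {K : ℕ} (hK : 0 < K) (n : ℕ) :
    ∑ k ∈ Finset.range n, 1 / (((k + K : ℕ) : ℝ) + 1) ^ 2 ≤ 1 / (K : ℝ) - 1 / ((n : ℝ) + K) := by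
  have hK' : (0 : ℝ) < K := Nat.cast_pos.mpr hK
  induction n with
  | zero => simp
  | succ n ih =>
    have hstep : 1 / (((n + K : ℕ) : ℝ) + 1) ^ 2 ≤
        1 / ((n : ℝ) + K) - 1 / (((n + 1 : ℕ) : ℝ) + K) := by
      push_cast
      rw [div_sub_div _ _ (by positivity) (by positivity),
        div_le_div_iff₀ (by positivity) (by positivity)]
      nlinarith [n.cast_nonneg (α := ℝ)]
    rw [Finset.sum_range_succ]
    linarith

lemma norm_sum_one_div_two_mul_le {K : ℕ} {x : ℝ} (hK : 0 < K) (hKx : (K : ℝ) ≤ x) :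
    ‖∑ k ∈ Finset.range K, 1 / (2 * ((k : ℂ) + 1))‖ ≤ 1 / 2 * (1 + Real.log x) := by
  have hsum : ∑ k ∈ Finset.range K, 1 / (2 * ((k : ℂ) + 1)) =
      ((1 / 2 * (harmonic K : ℝ) : ℝ) : ℂ) := by
    simp only [harmonic]
    push_cast
    rw [Finset.mul_sum]
    exact Finset.sum_congr rfl fun k _ => by rw [one_div, mul_inv, one_div]
  have hharm : (harmonic K : ℝ) ≤ 1 + Real.log x :=
    (harmonic_le_one_add_log K).trans (by gcongr)
  have hharm0 : (0 : ℝ) ≤ (harmonic K : ℝ) := mod_cast (harmonic_pos hK.ne').le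
  rw [hsum, Complex.norm_real, Real.norm_of_nonneg (by positivity)]
  gcongr

lemma norm_sum_one_div_add_two_mul_le {σ : ℝ} (hσ : 0 < σ) (t : ℝ) {K : ℕ}
    (hK : (K : ℝ) ≤ |t| + 2) :
    ‖∑ k ∈ Finset.range K, 1 / ((σ + t * I : ℂ) + 2 * ((k : ℂ) + 1))‖ ≤ 2 := by
  have hterm (k : ℕ) : ‖1 / ((σ + t * I : ℂ) + 2 * ((k : ℂ) + 1))‖ ≤ 1 / ((|t| + 2) / 2) := by
    have hre : 2 ≤ ‖(σ + t * I : ℂ) + 2 * ((k : ℂ) + 1)‖ :=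
      le_trans (by simp; linarith [k.cast_nonneg (α := ℝ)]) (Complex.re_le_norm _)
    have him : |t| ≤ ‖(σ + t * I : ℂ) + 2 * ((k : ℂ) + 1)‖ :=
      le_trans (by simp) (Complex.abs_im_le_norm _)
    rw [norm_div, norm_one]
    exact one_div_le_one_div_of_le (by positivity) (by linarith)
  calc _ ≤ ∑ k ∈ Finset.range K, 1 / ((|t| + 2) / 2) := norm_sum_le_of_le _ fun k _ => hterm k
    _ = K / ((|t| + 2) / 2) := by simp [div_eq_mul_inv]
    _ ≤ 2 := by
      rw [div_le_iff₀ (by positivity)]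
      linarith

lemma norm_tsum_trivialZeroSum_tail_le {σ : ℝ} (hσ : 0 < σ) {t : ℝ} {K : ℕ} (hK : 0 < K)
    (htK : |t| ≤ K) :
    ‖∑' k : ℕ, (1 / (2 * (((k + K : ℕ) : ℂ) + 1)) -
      1 / ((σ + t * I : ℂ) + 2 * (((k + K : ℕ) : ℂ) + 1)))‖ ≤ (σ + 1) / 4 := by
  have hK' : (1 : ℝ) ≤ K := Nat.one_le_cast.mpr hK
  have hs : ‖(σ + t * I : ℂ)‖ ≤ (σ + 1) * K := by
    have h : ‖(σ + t * I : ℂ)‖ ≤ σ + |t| := by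
      simpa [abs_of_pos hσ] using norm_add_le (σ : ℂ) (t * I)
    nlinarith
  have hsum : ∑' k : ℕ, 1 / (((k + K : ℕ) : ℝ) + 1) ^ 2 ≤ 1 / (K : ℝ) :=
    Real.tsum_le_of_sum_range_le (fun k => by positivity) fun n =>
      (sum_range_one_div_add_sq_le hK n).trans (sub_le_self _ (by positivity))
  have hbound := tsum_of_norm_bounded (((summable_nat_add_iff K).mpr
    summable_one_div_natCast_add_one_sq).mul_left (‖(σ + t * I : ℂ)‖ / 4)).hasSum
    fun k => norm_trivialZeroSum_term_le (s := σ + t * I) (by simpa using hσ) (k + K)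
  refine hbound.trans ?_
  rw [tsum_mul_left]
  calc _ ≤ ((σ + 1) * K) / 4 * (1 / K) := by gcongr
    _ = _ := by field_simp

-- The first `|t| + 2` terms contribute half a harmonic number, the remaining ones `O(1)`.
lemma norm_trivialZeroSum_le {σ : ℝ} (hσ : 0 < σ) (t : ℝ) :
    ‖trivialZeroSum (σ + t * I)‖ ≤ 1 / 2 * Real.log (|t| + 2) + (5 / 2 + (σ + 1) / 4) := by
  set K := ⌈|t|⌉₊ + 1
  have hK : 0 < K := Nat.succ_pos _
  have htK : |t| ≤ K := (Nat.le_ceil |t|).trans (by simp [K])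
  have hKt : (K : ℝ) ≤ |t| + 2 := by
    push_cast [K]
    linarith [Nat.ceil_lt_add_one (abs_nonneg t)]
  rw [trivialZeroSum, ← (summable_trivialZeroSum (by simpa using hσ)).sum_add_tsum_nat_add K,
    Finset.sum_sub_distrib]
  calc _ ≤ 1 / 2 * (1 + Real.log (|t| + 2)) + 2 + (σ + 1) / 4 :=
        norm_add_le_of_le (norm_sub_le_of_le (norm_sum_one_div_two_mul_le hK hKt)
          (norm_sum_one_div_add_two_mul_le hσ t hKt)) (norm_tsum_trivialZeroSum_tail_le hσ hK htK)
    _ = _ := by ring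

lemma one_half_le_log_abs_add_two (t : ℝ) : 1 / 2 ≤ Real.log (|t| + 2) := by
  have h : Real.log 2 ≤ Real.log (|t| + 2) :=
    Real.log_le_log (by norm_num) (by linarith [abs_nonneg t])
  linarith [Real.log_two_gt_d9]

lemma norm_LSeries_vonMangoldt_le {σ : ℝ} (hσ : 1 < σ) (t : ℝ) :
    ‖LSeries (fun n => (Λ n : ℂ)) (σ + t * I)‖ ≤
      ∑' n, ‖LSeries.term (fun n => (Λ n : ℂ)) σ n‖ := by
  refine tsum_of_norm_bounded
    (ArithmeticFunction.LSeriesSummable_vonMangoldt (by simpa using hσ) :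
      LSeriesSummable (fun n => (Λ n : ℂ)) σ).norm.hasSum fun n => le_of_eq ?_
  simp [LSeries.norm_term_eq]

lemma exists_norm_xiLogDeriv_one_add_le :
    ∃ C > 0, ∀ t : ℝ, ‖xiLogDeriv (1 + t * I)‖ ≤ C * Real.log (|t| + 2) := by
  set A := ∑' n, ‖LSeries.term (fun n => (Λ n : ℂ)) (3 / 2 : ℝ) n‖
  have hA : 0 ≤ A := tsum_nonneg fun n => norm_nonneg _
  set B := ‖digamma 1 / 2 - Real.log π / 2‖
  refine ⟨1 / 2 + 2 * (2 + B + (5 / 2 + (3 / 2 + 1) / 4) + A), by positivity, fun t => ?_⟩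
  have hpole : ‖1 / (1 + t * I - 1 / 2 : ℂ)‖ ≤ 2 := by
    have hre : 1 / 2 ≤ ‖(1 + t * I - 1 / 2 : ℂ)‖ :=
      le_trans (by norm_num) (Complex.re_le_norm _)
    rw [norm_div, norm_one, div_le_iff₀ (by linarith)]
    linarith
  have hline : (1 + t * I + 1 / 2 : ℂ) = (3 / 2 : ℝ) + t * I := by
    push_cast
    ring
  rw [xiLogDeriv_eq (by norm_num), hline]
  calc _ ≤ 2 + B + (1 / 2 * Real.log (|t| + 2) + (5 / 2 + (3 / 2 + 1) / 4)) + A :=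
        norm_sub_le_of_le (norm_add_le_of_le (norm_add_le_of_le hpole le_rfl)
          (norm_trivialZeroSum_le (by norm_num) t)) (norm_LSeries_vonMangoldt_le (by norm_num) t)
    _ ≤ _ := by
      have hlog := one_half_le_log_abs_add_two t
      have hB : 0 ≤ B := norm_nonneg _
      nlinarith

lemma exists_tsum_one_div_one_add_sub_ordinate_sq_le (hRH : RiemannHypothesis) :
    ∃ C > 0, ∀ t : ℝ, Summable (fun ρ : XiZero => 1 / (1 + (t - γ ρ) ^ 2)) ∧
      ∑' ρ : XiZero, 1 / (1 + (t - γ ρ) ^ 2) ≤ C * Real.log (|t| + 2) := by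
  obtain ⟨C, hC, hbound⟩ := exists_norm_xiLogDeriv_one_add_le
  refine ⟨C, hC, fun t => ?_⟩
  have h := hasSum_re_xiLogDeriv hRH one_ne_zero t
  simp only [one_pow, Complex.ofReal_one] at h
  exact ⟨h.summable, h.tsum_eq ▸ (Complex.re_le_norm _).trans (hbound t)⟩

/-! ### The cutoff function and its Laplace transform -/

/-- The two-sided Laplace transform of `ψ`, with the sign `e^{vz}` in the exponent. -/
def laplace (ψ : ℝ → ℝ) (z : ℂ) : ℂ := ∫ v : ℝ, (ψ v : ℂ) * cexp (v * z)

section Laplace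

variable {ψ : ℝ → ℝ}

lemma integrable_mul_cexp (hψ : Continuous ψ) (hsupp : HasCompactSupport ψ) (z : ℂ) :
    Integrable fun v : ℝ => (ψ v : ℂ) * cexp (v * z) := by
  have hsupp' : HasCompactSupport fun v => (ψ v : ℂ) :=
    hsupp.comp_left (g := fun x : ℝ => (x : ℂ)) (by simp)
  exact Continuous.integrable_of_hasCompactSupport (by fun_prop) hsupp'.mul_right

lemma norm_ofReal_mul_cexp (x v : ℝ) (z : ℂ) :
    ‖(x : ℂ) * cexp (v * z)‖ = |x| * Real.exp (v * z.re) := by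
  rw [norm_mul, Complex.norm_exp, Complex.norm_real, Real.norm_eq_abs, Complex.re_ofReal_mul]

lemma norm_laplace_le (ψ : ℝ → ℝ) (z : ℂ) :
    ‖laplace ψ z‖ ≤ ∫ v, |ψ v| * Real.exp (v * z.re) :=
  (norm_integral_le_integral_norm _).trans_eq
    (integral_congr_ae (.of_forall fun _ => norm_ofReal_mul_cexp _ _ _))

lemma mul_laplace (hψ : ContDiff ℝ 1 ψ) (hsupp : HasCompactSupport ψ) (z : ℂ) :
    z * laplace ψ z = -laplace (deriv ψ) z := by
  have hInt := integrable_mul_cexp hψ.continuous hsupp z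
  have hparts := integral_mul_deriv_eq_deriv_mul_of_integrable (A := ℂ)
    (u := fun v : ℝ => (ψ v : ℂ)) (u' := fun v => ((deriv ψ v : ℝ) : ℂ))
    (v := fun v : ℝ => cexp (v * z)) (v' := fun v : ℝ => cexp (v * z) * z)
    (fun v _ => (hψ.differentiable one_ne_zero v).hasDerivAt.ofReal_comp)
    (fun v _ => by
      simpa using ((Complex.ofRealCLM.hasDerivAt (x := v)).mul_const z).cexp)
    ((hInt.mul_const z).congr (.of_forall fun v => mul_assoc _ _ _))
    (integrable_mul_cexp (hψ.continuous_deriv le_rfl) hsupp.deriv z) hInt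
  rw [laplace, laplace, ← hparts, ← integral_const_mul]
  exact integral_congr_ae (.of_forall fun v => by ring)

lemma exists_pow_mul_norm_laplace_le (n : ℕ) (hψ : ContDiff ℝ ∞ ψ) (hsupp : HasCompactSupport ψ)
    (a : ℝ) : ∃ C : ℝ, ∀ y : ℝ, ‖(a + y * I : ℂ)‖ ^ n * ‖laplace ψ (a + y * I)‖ ≤ C := by
  induction n generalizing ψ with
  | zero => exact ⟨_, fun y => by simpa using norm_laplace_le ψ (a + y * I)⟩
  | succ n ih =>
    obtain ⟨C, hC⟩ := ih (contDiff_infty_iff_deriv.1 hψ).2 hsupp.deriv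
    refine ⟨C, fun y => ?_⟩
    have hmul : ‖(a + y * I : ℂ)‖ * ‖laplace ψ (a + y * I)‖ =
        ‖laplace (deriv ψ) (a + y * I)‖ := by
      rw [← norm_mul, mul_laplace (hψ.of_le (by simp)) hsupp, norm_neg]
    rw [pow_succ, mul_assoc, hmul]
    exact hC y

lemma exists_norm_laplace_le (hψ : ContDiff ℝ ∞ ψ) (hsupp : HasCompactSupport ψ) (a : ℝ) :
    ∃ C > 0, ∀ y : ℝ, ‖laplace ψ (a + y * I)‖ ≤ C / (1 + y ^ 2) ^ 2 := by
  obtain ⟨C₀, h₀⟩ := exists_pow_mul_norm_laplace_le 0 hψ hsupp a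
  obtain ⟨C₄, h₄⟩ := exists_pow_mul_norm_laplace_le 4 hψ hsupp a
  have hC₀ : 0 ≤ C₀ := le_trans (by positivity) (h₀ 0)
  have hC₄ : 0 ≤ C₄ := le_trans (by positivity) (h₄ 0)
  refine ⟨2 * C₀ + 2 * C₄ + 1, by positivity, fun y => ?_⟩
  have h₀ := h₀ y
  rw [pow_zero, one_mul] at h₀
  have hy : y ^ 4 ≤ ‖(a + y * I : ℂ)‖ ^ 4 := by
    rw [← (by decide : Even 4).pow_abs]
    gcongr
    simpa using Complex.abs_im_le_norm (a + y * I : ℂ)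
  have hweight : (1 + y ^ 2) ^ 2 ≤ 2 + 2 * ‖(a + y * I : ℂ)‖ ^ 4 := by
    nlinarith [sq_nonneg (y ^ 2 - 1)]
  rw [le_div_iff₀ (by positivity)]
  nlinarith [h₄ y, norm_nonneg (laplace ψ (a + y * I))]

lemma continuous_laplace (hψ : Continuous ψ) (hsupp : HasCompactSupport ψ) (a : ℝ) :
    Continuous fun y : ℝ => laplace ψ (a + y * I) := by
  refine continuous_of_dominated (bound := fun v => |ψ v| * Real.exp (v * a))
    (fun y => (integrable_mul_cexp hψ hsupp _).aestronglyMeasurable)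
    (fun y => .of_forall fun v => ?_)
    (Continuous.integrable_of_hasCompactSupport (by fun_prop) hsupp.norm.mul_right)
    (.of_forall fun v => by fun_prop)
  rw [norm_ofReal_mul_cexp]
  simp

lemma integrable_one_div_one_add_sq : Integrable fun y : ℝ => 1 / (1 + y ^ 2) := by
  simpa only [one_div] using integrable_inv_one_add_sq

lemma integrable_one_add_sq_mul_norm_laplace (hψ : ContDiff ℝ ∞ ψ) (hsupp : HasCompactSupport ψ)
    (a : ℝ) : Integrable fun y : ℝ => (1 + y ^ 2) * ‖laplace ψ (a + y * I)‖ := by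
  obtain ⟨C, -, hC⟩ := exists_norm_laplace_le hψ hsupp a
  have hcont := continuous_laplace hψ.continuous hsupp a
  refine (integrable_one_div_one_add_sq.const_mul C).mono' (by fun_prop) (.of_forall fun y => ?_)
  rw [Real.norm_of_nonneg (by positivity)]
  calc (1 + y ^ 2) * ‖laplace ψ (a + y * I)‖ ≤ (1 + y ^ 2) * (C / (1 + y ^ 2) ^ 2) := by
        gcongr
        exact hC y
    _ = C * (1 / (1 + y ^ 2)) := by
        field_simp

lemma integrable_of_integrable_one_add_sq_mul_norm {f : ℝ → ℂ} (hf : Continuous f)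
    (h : Integrable fun y => (1 + y ^ 2) * ‖f y‖) : Integrable f :=
  h.mono' hf.aestronglyMeasurable <| .of_forall fun y =>
    le_mul_of_one_le_left (norm_nonneg _) (le_add_of_nonneg_right (sq_nonneg y))

lemma integral_cexp_mul_laplace (hψ : ContDiff ℝ ∞ ψ) (hsupp : HasCompactSupport ψ) (a x : ℝ) :
    (1 / (2 * π) : ℂ) * ∫ y : ℝ, cexp (-x * (a + y * I)) * laplace ψ (a + y * I) = ψ x := by
  set f : ℝ → ℂ := fun v => (ψ v : ℂ) * cexp (v * a) with hf
  have hfcont : Continuous f := by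
    have := hψ.continuous
    fun_prop
  have hfourier : FourierTransform.fourier f =
      fun w : ℝ => laplace ψ (a + ((-2 * π) * w : ℝ) * I) := by
    ext w
    rw [Real.fourier_real_eq_integral_exp_smul, laplace]
    congr 1 with v
    rw [hf, smul_eq_mul, mul_left_comm, ← Complex.exp_add]
    push_cast
    ring_nf
  have hfourierInt : Integrable (FourierTransform.fourier f) := by
    rw [hfourier]
    exact (integrable_of_integrable_one_add_sq_mul_norm (continuous_laplace hψ.continuous hsupp a)
      (integrable_one_add_sq_mul_norm_laplace hψ hsupp a)).comp_mul_left' (by simp [pi_ne_zero])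
  have hinv := congrFun (hfcont.fourierInv_fourier_eq
    (integrable_mul_cexp hψ.continuous hsupp a) hfourierInt) x
  have hsubst : ∀ v : ℝ, cexp (↑(2 * π * inner ℝ v x) * I) * FourierTransform.fourier f v =
      (fun y : ℝ => cexp (-x * (y * I)) * laplace ψ (a + y * I)) ((-2 * π) * v) := by
    intro v
    have hinner : inner ℝ v x = x * v := by simp
    rw [hfourier, hinner]
    push_cast
    ring_nf
  have hjac : |(-2 * π)⁻¹| = 1 / (2 * π) := by
    rw [abs_inv, abs_mul, abs_of_pos pi_pos]
    norm_num
  simp only [Real.fourierInv_eq', smul_eq_mul, hsubst] at hinv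
  rw [Measure.integral_comp_mul_left (fun y : ℝ => cexp (-x * (y * I)) * laplace ψ (a + y * I)),
    hjac, Complex.real_smul] at hinv
  simp only [mul_add, Complex.exp_add, mul_assoc]
  rw [integral_const_mul, mul_left_comm]
  push_cast at hinv
  rw [hinv, mul_left_comm, ← Complex.exp_add]
  simp

end Laplace

/-- The unnormalized bump underlying `cutoff`; it equals `1` near `0` and vanishes beyond `1/4`. -/
def cutoffBump : ContDiffBump (0 : ℝ) := ⟨1 / 8, 1 / 4, by norm_num, by norm_num⟩

/-- A smooth even bump function supported in `[-1/4, 1/4]`, normalized by `∫ cutoff² = 1 / (2π)`. -/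
def cutoff (v : ℝ) : ℝ := (√(2 * π * ∫ u, (cutoffBump u) ^ 2))⁻¹ * cutoffBump v

lemma integral_cutoffBump_sq_pos : 0 < ∫ v, (cutoffBump v) ^ 2 := by
  have hcont : Continuous fun v => (cutoffBump v) ^ 2 := cutoffBump.continuous.pow 2
  have hsupp : HasCompactSupport fun v => (cutoffBump v) ^ 2 :=
    cutoffBump.hasCompactSupport.comp_left (g := fun x => x ^ 2) (by simp)
  rw [integral_pos_iff_support_of_nonneg (fun v => sq_nonneg _)
    (hcont.integrable_of_hasCompactSupport hsupp)]
  refine hcont.isOpen_support.measure_pos _ ⟨0, ?_⟩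
  simpa using (cutoffBump.pos_of_mem_ball (Metric.mem_ball_self cutoffBump.rOut_pos)).ne'

lemma contDiff_cutoff : ContDiff ℝ ∞ cutoff := contDiff_const.mul cutoffBump.contDiff

lemma continuous_cutoff : Continuous cutoff := contDiff_cutoff.continuous

lemma hasCompactSupport_cutoff : HasCompactSupport cutoff :=
  cutoffBump.hasCompactSupport.mul_left

lemma cutoff_neg (v : ℝ) : cutoff (-v) = cutoff v := by
  rw [cutoff, cutoffBump.neg, cutoff]

lemma cutoff_nonneg (v : ℝ) : 0 ≤ cutoff v := mul_nonneg (by positivity) cutoffBump.nonneg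

lemma cutoff_eq_zero {v : ℝ} (hv : 1 / 4 ≤ |v|) : cutoff v = 0 := by
  rw [cutoff, cutoffBump.zero_of_le_dist (by simpa [cutoffBump] using hv), mul_zero]

lemma integral_cutoff_sq : ∫ v, (cutoff v) ^ 2 = 1 / (2 * π) := by
  have hpos := integral_cutoffBump_sq_pos
  simp only [cutoff, mul_pow]
  rw [integral_const_mul, inv_pow, Real.sq_sqrt (by positivity)]
  field_simp

lemma exists_cutoff_le : ∃ C > 0, ∀ v, cutoff v ≤ C := by
  obtain ⟨C, hC⟩ := hasCompactSupport_cutoff.exists_bound_of_continuous continuous_cutoff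
  exact ⟨max C 1, by positivity, fun v => (le_abs_self _).trans ((hC v).trans (le_max_left _ _))⟩

/-! ### Smoothing along the line of real part one -/

/-- The kernel `e^{b(1+iy)} laplace cutoff (1+iy)`, whose inverse Laplace transform is `cutoff`
translated by `b`. -/
def lineKernel (b y : ℝ) : ℂ := cexp (b * (1 + y * I)) * laplace cutoff (1 + y * I)

/-- The smoothing of `g` along the line `Re w = 1` around height `t`, tuned to the frequency `b`:
it sends `e^{-(w+1/2)l}` to a multiple of `cutoff (b - l)`. -/
def lineTransform (g : ℂ → ℂ) (t b : ℝ) : ℂ :=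
  (1 / (2 * π) : ℂ) * ∫ y : ℝ, g (1 + (t + y : ℝ) * I) * lineKernel b y

/-- On the line `Re w = 1` the function `g` is continuous and at most `C (1 + (Im w)²)`. This is
what `lineTransform` needs in order to converge. -/
structure QuadraticGrowth (g : ℂ → ℂ) (C : ℝ) : Prop where
  continuous : Continuous fun τ : ℝ => g (1 + τ * I)
  norm_le : ∀ τ : ℝ, ‖g (1 + τ * I)‖ ≤ C * (1 + τ ^ 2)

lemma continuous_lineKernel (b : ℝ) : Continuous (lineKernel b) := by
  have hcont := continuous_laplace continuous_cutoff hasCompactSupport_cutoff 1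
  simp only [Complex.ofReal_one] at hcont
  unfold lineKernel
  fun_prop

lemma integrable_one_add_sq_mul_norm_lineKernel (b : ℝ) :
    Integrable fun y : ℝ => (1 + y ^ 2) * ‖lineKernel b y‖ := by
  have hInt := (integrable_one_add_sq_mul_norm_laplace contDiff_cutoff hasCompactSupport_cutoff
    1).const_mul (Real.exp b)
  simp only [Complex.ofReal_one] at hInt
  refine hInt.congr (.of_forall fun y => ?_)
  have hexp : ‖cexp (b * (1 + y * I))‖ = Real.exp b := by
    rw [Complex.norm_exp]
    simp
  simp only [lineKernel, norm_mul, hexp]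
  ring

lemma integrable_lineKernel (b : ℝ) : Integrable (lineKernel b) :=
  integrable_of_integrable_one_add_sq_mul_norm (continuous_lineKernel b)
    (integrable_one_add_sq_mul_norm_lineKernel b)

lemma integral_cexp_mul_lineKernel (b x : ℝ) :
    (1 / (2 * π) : ℂ) * ∫ y : ℝ, cexp (-x * (1 + y * I)) * lineKernel b y = cutoff (b - x) := by
  rw [← cutoff_neg, ← integral_cexp_mul_laplace contDiff_cutoff hasCompactSupport_cutoff 1]
  congr 2 with y
  rw [lineKernel, ← mul_assoc, ← Complex.exp_add]
  push_cast
  ring_nf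

lemma one_add_add_sq_le (t y : ℝ) : 1 + (t + y) ^ 2 ≤ 2 * (1 + t ^ 2) * (1 + y ^ 2) := by
  nlinarith [sq_nonneg (t - y), sq_nonneg (t * y)]

namespace QuadraticGrowth

variable {f g : ℂ → ℂ} {C D : ℝ}

lemma constant_nonneg (hg : QuadraticGrowth g C) : 0 ≤ C := by
  simpa using (norm_nonneg _).trans (hg.norm_le 0)

lemma norm_mul_lineKernel_le (hg : QuadraticGrowth g C) (t b y : ℝ) :
    ‖g (1 + (t + y : ℝ) * I) * lineKernel b y‖ ≤
      C * (2 * (1 + t ^ 2)) * ((1 + y ^ 2) * ‖lineKernel b y‖) := by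
  have hC := hg.constant_nonneg
  calc ‖g (1 + (t + y : ℝ) * I) * lineKernel b y‖
      ≤ C * (1 + (t + y) ^ 2) * ‖lineKernel b y‖ := by
        rw [norm_mul]
        gcongr
        exact hg.norm_le (t + y)
    _ ≤ C * (2 * (1 + t ^ 2) * (1 + y ^ 2)) * ‖lineKernel b y‖ := by
        gcongr
        exact one_add_add_sq_le t y
    _ = C * (2 * (1 + t ^ 2)) * ((1 + y ^ 2) * ‖lineKernel b y‖) := by ring

lemma integrable (hg : QuadraticGrowth g C) (t b : ℝ) :
    Integrable fun y : ℝ => g (1 + (t + y : ℝ) * I) * lineKernel b y :=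
  ((integrable_one_add_sq_mul_norm_lineKernel b).const_mul _).mono'
    ((hg.continuous.comp (continuous_const.add continuous_id)).mul
      (continuous_lineKernel b)).aestronglyMeasurable
    (.of_forall fun y => hg.norm_mul_lineKernel_le t b y)

lemma add (hf : QuadraticGrowth f C) (hg : QuadraticGrowth g D) :
    QuadraticGrowth (fun w => f w + g w) (C + D) where
  continuous := hf.continuous.add hg.continuous
  norm_le τ := (norm_add_le _ _).trans
    ((add_le_add (hf.norm_le τ) (hg.norm_le τ)).trans_eq (add_mul _ _ _).symm)

lemma sub (hf : QuadraticGrowth f C) (hg : QuadraticGrowth g D) :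
    QuadraticGrowth (fun w => f w - g w) (C + D) where
  continuous := hf.continuous.sub hg.continuous
  norm_le τ := (norm_sub_le _ _).trans
    ((add_le_add (hf.norm_le τ) (hg.norm_le τ)).trans_eq (add_mul _ _ _).symm)

lemma const (c : ℂ) : QuadraticGrowth (fun _ => c) ‖c‖ where
  continuous := continuous_const
  norm_le τ := le_mul_of_one_le_right (norm_nonneg c) (le_add_of_nonneg_right (sq_nonneg τ))

lemma one_div_sub {p : ℂ} (hp : p.re < 1) :
    QuadraticGrowth (fun w => 1 / (w - p)) (1 / (1 - p.re)) := by
  have hpos : 0 < 1 - p.re := sub_pos.mpr hp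
  have hre : ∀ τ : ℝ, 1 - p.re ≤ ‖1 + τ * I - p‖ := fun τ =>
    le_trans (by simp) (Complex.re_le_norm _)
  have hne : ∀ τ : ℝ, 1 + τ * I - p ≠ 0 := fun τ =>
    norm_pos_iff.mp (hpos.trans_le (hre τ))
  refine ⟨Continuous.div (by fun_prop) (by fun_prop) hne, fun τ => ?_⟩
  calc ‖1 / (1 + τ * I - p)‖ ≤ 1 / (1 - p.re) := by
        rw [norm_div, norm_one]
        exact one_div_le_one_div_of_le hpos (hre τ)
    _ ≤ 1 / (1 - p.re) * (1 + τ ^ 2) :=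
        le_mul_of_one_le_right (by positivity) (le_add_of_nonneg_right (sq_nonneg τ))

section Series

variable {ι : Type*} {f : ι → ℂ → ℂ} {A : ι → ℝ}

lemma hasSum (hA : Summable A) (hf : ∀ i, QuadraticGrowth (f i) (A i))
    (hsum : ∀ τ : ℝ, HasSum (fun i => f i (1 + τ * I)) (g (1 + τ * I))) :
    QuadraticGrowth g (∑' i, A i) := by
  have hne : ∀ τ : ℝ, ((1 + τ ^ 2 : ℝ) : ℂ) ≠ 0 := fun τ => by
    norm_cast
    positivity
  have hcont : Continuous fun τ : ℝ => ∑' i, f i (1 + τ * I) / ((1 + τ ^ 2 : ℝ) : ℂ) := by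
    refine continuous_tsum (fun i => (hf i).continuous.div (by fun_prop) hne) hA fun i τ => ?_
    rw [norm_div, Complex.norm_real, Real.norm_of_nonneg (by positivity),
      div_le_iff₀ (by positivity)]
    exact (hf i).norm_le τ
  refine ⟨?_, fun τ => ?_⟩
  · refine (hcont.mul (by fun_prop : Continuous fun τ : ℝ => ((1 + τ ^ 2 : ℝ) : ℂ))).congr
      fun τ => ?_
    rw [Pi.mul_apply, ((hsum τ).div_const _).tsum_eq, div_mul_cancel₀ _ (hne τ)]
  · rw [← (hsum τ).tsum_eq, ← tsum_mul_right]
    exact tsum_of_norm_bounded (hA.mul_right _).hasSum fun i => (hf i).norm_le τ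

lemma hasSum_lineTransform [Countable ι] (hA : Summable A)
    (hf : ∀ i, QuadraticGrowth (f i) (A i))
    (hsum : ∀ τ : ℝ, HasSum (fun i => f i (1 + τ * I)) (g (1 + τ * I))) (t b : ℝ) :
    HasSum (fun i => lineTransform (f i) t b) (lineTransform g t b) := by
  refine HasSum.mul_left _ (hasSum_integral_of_dominated_convergence
    (fun i y => A i * (2 * (1 + t ^ 2)) * ((1 + y ^ 2) * ‖lineKernel b y‖))
    (fun i => ((hf i).integrable t b).aestronglyMeasurable)
    (fun i => .of_forall fun y => (hf i).norm_mul_lineKernel_le t b y)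
    (.of_forall fun y => (hA.mul_right _).mul_right _) ?_
    (.of_forall fun y => (hsum _).mul_right _))
  simp only [tsum_mul_right]
  exact (integrable_one_add_sq_mul_norm_lineKernel b).const_mul _

end Series

lemma lineTransform_add (hf : QuadraticGrowth f C) (hg : QuadraticGrowth g D) (t b : ℝ) :
    lineTransform (fun w => f w + g w) t b = lineTransform f t b + lineTransform g t b := by
  simp only [lineTransform, add_mul]
  rw [integral_add (hf.integrable t b) (hg.integrable t b), mul_add]

lemma lineTransform_sub (hf : QuadraticGrowth f C) (hg : QuadraticGrowth g D) (t b : ℝ) :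
    lineTransform (fun w => f w - g w) t b = lineTransform f t b - lineTransform g t b := by
  simp only [lineTransform, sub_mul]
  rw [integral_sub (hf.integrable t b) (hg.integrable t b), mul_sub]

end QuadraticGrowth

lemma lineTransform_const_mul (c : ℂ) (g : ℂ → ℂ) (t b : ℝ) :
    lineTransform (fun w => c * g w) t b = c * lineTransform g t b := by
  simp only [lineTransform, mul_assoc]
  rw [integral_const_mul, mul_left_comm]

lemma lineTransform_cexp (l t b : ℝ) :
    lineTransform (fun w => cexp (-(w + 1 / 2) * l)) t b =
      cexp (-(1 / 2 + t * I) * l) * cutoff (b - l) := by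
  rw [lineTransform, ← integral_cexp_mul_lineKernel b l, mul_left_comm,
    ← integral_const_mul (cexp (-(1 / 2 + t * I) * l))]
  congr 2 with y
  rw [← mul_assoc, ← Complex.exp_add]
  push_cast
  ring_nf

lemma lineTransform_const (c : ℂ) (t b : ℝ) : lineTransform (fun _ => c) t b = c * cutoff b := by
  have hinv := integral_cexp_mul_lineKernel b 0
  simp only [Complex.ofReal_zero, neg_zero, zero_mul, Complex.exp_zero, one_mul, sub_zero] at hinv
  rw [lineTransform, integral_const_mul, mul_left_comm, hinv]

/-- The Laplace transform of the translate of `cutoff` by `b`, truncated to `u > 0`. It is the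
contribution of a simple pole to the explicit formula. -/
def truncatedLaplace (p : ℂ) (b : ℝ) : ℂ := ∫ u in Ioi (0 : ℝ), cexp (p * u) * cutoff (u - b)

lemma one_div_sub_eq_integral {w p : ℂ} (h : p.re < w.re) :
    1 / (w - p) = ∫ u in Ioi (0 : ℝ), cexp ((p - w) * u) := by
  rw [integral_exp_mul_complex_Ioi (by simpa using h), ← neg_sub p w, div_neg, ← neg_div]
  simp

lemma lineTransform_one_div_sub {p : ℂ} (hp : p.re < 1) (t b : ℝ) :
    lineTransform (fun w => 1 / (w - p)) t b = truncatedLaplace (p - t * I) b := by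
  have hpole : ∀ y : ℝ, 1 / (1 + (t + y : ℝ) * I - p) * lineKernel b y =
      ∫ u in Ioi (0 : ℝ), cexp ((p - t * I) * u) * (cexp (-u * (1 + y * I)) * lineKernel b y) := by
    intro y
    rw [one_div_sub_eq_integral (by simpa using hp), ← integral_mul_const]
    congr 1 with u
    rw [← mul_assoc, ← Complex.exp_add]
    push_cast
    ring_nf
  simp only [lineTransform, hpole]
  rw [integral_integral_swap]
  · rw [truncatedLaplace, ← integral_const_mul]
    congr 1 with u
    rw [integral_const_mul, mul_left_comm, integral_cexp_mul_lineKernel b u, ← cutoff_neg, neg_sub]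
  · have hexp : Integrable (fun u : ℝ => Real.exp ((p.re - 1) * u)) (volume.restrict (Ioi 0)) :=
      integrableOn_exp_mul_Ioi (by linarith) 0
    refine ((integrable_lineKernel b).norm.mul_prod hexp).mono' ?_ (.of_forall fun z => ?_)
    · have := continuous_lineKernel b
      have := continuous_cutoff
      exact Continuous.aestronglyMeasurable (by unfold Function.uncurry; fun_prop)
    · simp only [Function.uncurry, norm_mul, Complex.norm_exp]
      rw [← mul_assoc, ← Real.exp_add, mul_comm]
      refine le_of_eq ?_
      congr 2
      simp
      ring

lemma integrable_cexp_mul_cutoff_sub (p : ℂ) (b : ℝ) :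
    Integrable fun u : ℝ => cexp (p * u) * (cutoff (u - b) : ℂ) := by
  have hsupp : HasCompactSupport fun u : ℝ => cutoff (u - b) :=
    hasCompactSupport_cutoff.comp_homeomorph (Homeomorph.subRight b)
  refine (integrable_mul_cexp (continuous_cutoff.comp (continuous_sub_right b)) hsupp p).congr
    (.of_forall fun u => ?_)
  simp only [Function.comp_apply, mul_comm]

lemma integral_cexp_mul_cutoff_sub (p : ℂ) (b : ℝ) :
    ∫ u : ℝ, cexp (p * u) * (cutoff (u - b) : ℂ) = cexp (p * b) * laplace cutoff p := by
  rw [laplace, ← integral_const_mul, ← integral_sub_right_eq_self (μ := volume)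
    (fun v : ℝ => cexp (p * b) * ((cutoff v : ℂ) * cexp (v * p))) b]
  congr 1 with u
  rw [mul_left_comm, ← Complex.exp_add, mul_comm]
  push_cast
  ring_nf

lemma truncatedLaplace_add_neg (p : ℂ) (b : ℝ) :
    truncatedLaplace p b + truncatedLaplace (-p) (-b) = cexp (p * b) * laplace cutoff p := by
  have hInt := integrable_cexp_mul_cutoff_sub p b
  have hneg : truncatedLaplace (-p) (-b) =
      ∫ u in Iic (0 : ℝ), cexp (p * u) * (cutoff (u - b) : ℂ) := by
    rw [truncatedLaplace, ← neg_zero, ← integral_comp_neg_Ioi, neg_zero]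
    congr 1 with u
    rw [← cutoff_neg (-u - b)]
    push_cast
    ring_nf
  rw [hneg, ← integral_cexp_mul_cutoff_sub, add_comm, truncatedLaplace,
    intervalIntegral.integral_Iic_add_Ioi hInt.integrableOn hInt.integrableOn]

lemma norm_truncatedLaplace_le (p : ℂ) (b : ℝ) :
    ‖truncatedLaplace p b‖ ≤ Real.exp (p.re * b) * ∫ v, |cutoff v| * Real.exp (v * p.re) := by
  have hInt := (integrable_cexp_mul_cutoff_sub p b).norm
  calc ‖truncatedLaplace p b‖ ≤ ∫ u in Ioi (0 : ℝ), ‖cexp (p * u) * (cutoff (u - b) : ℂ)‖ :=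
        norm_integral_le_integral_norm _
    _ ≤ ∫ u : ℝ, ‖cexp (p * u) * (cutoff (u - b) : ℂ)‖ :=
        setIntegral_le_integral hInt (.of_forall fun u => norm_nonneg _)
    _ = Real.exp (p.re * b) * ∫ v, |cutoff v| * Real.exp (v * p.re) := by
        rw [← integral_const_mul, ← integral_sub_right_eq_self (μ := volume)
          (fun v : ℝ => Real.exp (p.re * b) * (|cutoff v| * Real.exp (v * p.re))) b]
        congr 1 with u
        rw [mul_comm (cexp _), mul_comm p, norm_ofReal_mul_cexp, mul_left_comm, ← Real.exp_add]
        ring_nf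

lemma integrableOn_mul_exp_neg_mul {r : ℝ} (hr : 0 < r) :
    IntegrableOn (fun u : ℝ => u * Real.exp (-(r * u))) (Ioi 0) := by
  simpa using integrableOn_rpow_mul_exp_neg_mul_rpow (s := 1) (by norm_num) one_pos hr

lemma integral_mul_exp_neg_mul {r : ℝ} (hr : 0 < r) :
    ∫ u in Ioi (0 : ℝ), u * Real.exp (-(r * u)) = 1 / r ^ 2 := by
  have h := Real.integral_rpow_mul_exp_neg_mul_Ioi two_pos hr
  norm_num at h
  simpa using h

open NNReal in
lemma norm_truncatedLaplace_neg_sub_le {M : ℝ≥0} (hM : LipschitzWith M cutoff) {p : ℂ}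
    (hp : 0 < p.re) (b : ℝ) : ‖truncatedLaplace (-p) b - cutoff b / p‖ ≤ M / p.re ^ 2 := by
  have hexp : IntegrableOn (fun u : ℝ => cexp (-p * u)) (Ioi 0) :=
    integrableOn_exp_mul_complex_Ioi (by simpa using hp) 0
  have hconst : cutoff b / p = ∫ u in Ioi (0 : ℝ), cexp (-p * u) * cutoff b := by
    have h := one_div_sub_eq_integral (w := p) (p := 0) (by simpa using hp)
    rw [sub_zero, zero_sub] at h
    rw [integral_mul_const, ← h]
    ring
  rw [hconst, truncatedLaplace, ← integral_sub
    (integrable_cexp_mul_cutoff_sub (-p) b).integrableOn (hexp.mul_const _)]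
  refine (norm_integral_le_of_norm_le ((integrableOn_mul_exp_neg_mul hp).const_mul (M : ℝ))
    ((ae_restrict_mem measurableSet_Ioi).mono fun u (hu : 0 < u) => ?_)).trans_eq ?_
  · have hlip := hM.dist_le_mul (u - b) (-b)
    rw [cutoff_neg, Real.dist_eq, Real.dist_eq, sub_neg_eq_add, sub_add_cancel,
      abs_of_pos hu] at hlip
    rw [← mul_sub, ← Complex.ofReal_sub, norm_mul, Complex.norm_real, Real.norm_eq_abs,
      Complex.norm_exp]
    calc Real.exp (-p * u).re * |cutoff (u - b) - cutoff b|
        ≤ Real.exp (-p * u).re * (M * u) := by gcongr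
      _ = M * (u * Real.exp (-(p.re * u))) := by
        simp
        ring
  · rw [integral_const_mul, integral_mul_exp_neg_mul hp, mul_one_div]

/-! ### The smoothed explicit formula -/

lemma countable_xiZero : Countable XiZero := by
  have h := summable_one_div_one_add_ordinate_sq.countable_support
  rwa [show Function.support (fun ρ : XiZero => 1 / (1 + γ ρ ^ 2)) = univ from
    eq_univ_of_forall fun ρ => by simp only [Function.mem_support]; positivity,
    countable_univ_iff] at h

lemma one_div_sub_add_div_eq {σ : ℝ} (hσ : σ = 1 ∨ σ = -1) (τ x : ℝ) :
    1 / (1 + τ * I - σ * (x * I)) + σ / (1 / 2 + x * I) =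
      σ * (1 / (σ + (σ * τ : ℝ) * I - x * I) + 1 / (1 / 2 + x * I)) := by
  rcases hσ with rfl | rfl
  · simp
  · rw [show ((-1 : ℝ) : ℂ) + (-1 * τ : ℝ) * I - x * I = -(1 + τ * I - (-1 : ℝ) * (x * I)) by
      push_cast
      ring, div_neg]
    push_cast
    ring

section PartialFractions

variable {σ : ℝ}

lemma quadraticGrowth_one_div_sub_ordinate (σ x : ℝ) :
    QuadraticGrowth (fun w => 1 / (w - σ * (x * I))) 1 := by
  simpa using QuadraticGrowth.one_div_sub (p := σ * (x * I)) (by simp)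

lemma quadraticGrowth_one_div_sub_add_div (hσ : σ = 1 ∨ σ = -1) (x : ℝ) :
    QuadraticGrowth (fun w => 1 / (w - σ * (x * I)) + σ / (1 / 2 + x * I))
      (12 * (1 / (1 + x ^ 2))) where
  continuous := ((quadraticGrowth_one_div_sub_ordinate σ x).add (.const _)).continuous
  norm_le τ := by
    have habs : |σ| = 1 := by rcases hσ with rfl | rfl <;> simp
    have hσ0 : σ ≠ 0 := by rcases hσ with rfl | rfl <;> simp
    have h := norm_one_div_sub_add_one_div_le hσ0 (σ * τ) x
    rw [one_div_sub_add_div_eq hσ, norm_mul, Complex.norm_real, Real.norm_eq_abs, habs, one_mul]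
    rw [habs, mul_pow, ← sq_abs σ, habs] at h
    linarith

lemma hasSum_one_div_sub_add_div (hRH : RiemannHypothesis) (hσ : σ = 1 ∨ σ = -1) (τ : ℝ) :
    HasSum (fun ρ : XiZero => 1 / (1 + τ * I - σ * (γ ρ * I)) + σ / (1 / 2 + γ ρ * I))
      (xiLogDeriv (1 + τ * I) - σ * xiLogDeriv (-(1 / 2))) := by
  have hσ0 : σ ≠ 0 := by rcases hσ with rfl | rfl <;> simp
  have hodd : (σ : ℂ) * xiLogDeriv (σ + (σ * τ : ℝ) * I) = xiLogDeriv (1 + τ * I) := by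
    rcases hσ with rfl | rfl
    · simp
    · rw [show ((-1 : ℝ) : ℂ) + (-1 * τ : ℝ) * I = -(1 + τ * I) by push_cast; ring, xiLogDeriv_neg]
      simp
  rw [← hodd, ← mul_sub]
  exact ((hasSum_xiLogDeriv hRH hσ0 (σ * τ)).mul_left _).congr_fun
    fun ρ => one_div_sub_add_div_eq hσ τ (γ ρ)

lemma quadraticGrowth_xiLogDeriv (hRH : RiemannHypothesis) : ∃ C, QuadraticGrowth xiLogDeriv C := by
  have h := (QuadraticGrowth.hasSum (summable_one_div_one_add_ordinate_sq.mul_left 12)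
    (fun ρ : XiZero => quadraticGrowth_one_div_sub_add_div (.inl rfl) (γ ρ))
    (g := fun w => xiLogDeriv w - (1 : ℝ) * xiLogDeriv (-(1 / 2)))
    (hasSum_one_div_sub_add_div hRH (.inl rfl))).add (.const ((1 : ℝ) * xiLogDeriv (-(1 / 2))))
  simp only [sub_add_cancel] at h
  exact ⟨_, h⟩

lemma hasSum_truncatedLaplace_ordinate (hRH : RiemannHypothesis) (hσ : σ = 1 ∨ σ = -1)
    (t b : ℝ) :
    HasSum (fun ρ : XiZero => truncatedLaplace (σ * (γ ρ * I) - t * I) b +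
        σ / (1 / 2 + γ ρ * I) * cutoff b)
      (lineTransform xiLogDeriv t b - σ * xiLogDeriv (-(1 / 2)) * cutoff b) := by
  have := countable_xiZero
  obtain ⟨C, hxi⟩ := quadraticGrowth_xiLogDeriv hRH
  have h := QuadraticGrowth.hasSum_lineTransform
    (summable_one_div_one_add_ordinate_sq.mul_left 12)
    (fun ρ : XiZero => quadraticGrowth_one_div_sub_add_div hσ (γ ρ))
    (g := fun w => xiLogDeriv w - σ * xiLogDeriv (-(1 / 2)))
    (hasSum_one_div_sub_add_div hRH hσ) t b
  rw [hxi.lineTransform_sub (.const _), lineTransform_const] at h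
  refine h.congr_fun fun ρ => ?_
  rw [(quadraticGrowth_one_div_sub_ordinate σ (γ ρ)).lineTransform_add (.const _),
    lineTransform_const, lineTransform_one_div_sub (by simp)]

end PartialFractions

/-- The smoothed sum over primes of the explicit formula at height `t` and scale `e^b`. -/
def primeSum (t b : ℝ) : ℂ :=
  ∑' n : ℕ, (Λ n : ℂ) * (cexp (-(1 / 2 + t * I) * Real.log n) * cutoff (b - Real.log n))

lemma term_vonMangoldt_eq (n : ℕ) (w : ℂ) :
    LSeries.term (fun n => (Λ n : ℂ)) (w + 1 / 2) n =
      (Λ n : ℂ) * cexp (-(w + 1 / 2) * Real.log n) := by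
  rcases eq_or_ne n 0 with rfl | hn
  · simp
  · rw [LSeries.term_of_ne_zero hn, Complex.cpow_def_of_ne_zero (Nat.cast_ne_zero.mpr hn),
      div_eq_mul_inv, ← Complex.exp_neg, ← Complex.natCast_log]
    ring_nf

lemma quadraticGrowth_vonMangoldt_mul_cexp (n : ℕ) :
    QuadraticGrowth (fun w => (Λ n : ℂ) * cexp (-(w + 1 / 2) * Real.log n))
      ‖LSeries.term (fun n => (Λ n : ℂ)) (3 / 2) n‖ where
  continuous := by fun_prop
  norm_le τ := by
    have hre : (1 + τ * I + 1 / 2 : ℂ).re = (3 / 2 : ℂ).re := by norm_num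
    rw [← term_vonMangoldt_eq]
    have hnorm : ‖LSeries.term (fun n => (Λ n : ℂ)) (1 + τ * I + 1 / 2) n‖ =
        ‖LSeries.term (fun n => (Λ n : ℂ)) (3 / 2) n‖ := by
      rw [LSeries.norm_term_eq, LSeries.norm_term_eq, hre]
    rw [hnorm]
    exact le_mul_of_one_le_right (norm_nonneg _) (le_add_of_nonneg_right (sq_nonneg τ))

lemma summable_norm_term_vonMangoldt :
    Summable fun n : ℕ => ‖LSeries.term (fun n => (Λ n : ℂ)) (3 / 2) n‖ :=
  (ArithmeticFunction.LSeriesSummable_vonMangoldt (s := 3 / 2) (by norm_num)).norm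

lemma hasSum_vonMangoldt_mul_cexp (τ : ℝ) :
    HasSum (fun n : ℕ => (Λ n : ℂ) * cexp (-(1 + τ * I + 1 / 2) * Real.log n))
      (LSeries (fun n => (Λ n : ℂ)) (1 + τ * I + 1 / 2)) :=
  (ArithmeticFunction.LSeriesSummable_vonMangoldt (by norm_num)).hasSum.congr_fun fun n =>
    (term_vonMangoldt_eq n _).symm

lemma quadraticGrowth_LSeries_vonMangoldt :
    ∃ C, QuadraticGrowth (fun w => LSeries (fun n => (Λ n : ℂ)) (w + 1 / 2)) C :=
  ⟨_, .hasSum summable_norm_term_vonMangoldt quadraticGrowth_vonMangoldt_mul_cexp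
    hasSum_vonMangoldt_mul_cexp⟩

lemma lineTransform_LSeries_vonMangoldt (t b : ℝ) :
    lineTransform (fun w => LSeries (fun n => (Λ n : ℂ)) (w + 1 / 2)) t b = primeSum t b := by
  have h := QuadraticGrowth.hasSum_lineTransform summable_norm_term_vonMangoldt
    quadraticGrowth_vonMangoldt_mul_cexp
    (g := fun w => LSeries (fun n => (Λ n : ℂ)) (w + 1 / 2)) hasSum_vonMangoldt_mul_cexp t b
  rw [← h.tsum_eq, primeSum]
  simp only [lineTransform_const_mul, lineTransform_cexp]

section TrivialZeros

lemma quadraticGrowth_trivialZeroSum_term (k : ℕ) :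
    QuadraticGrowth (fun w => 1 / (2 * ((k : ℂ) + 1)) - 1 / (w - -(1 / 2 + 2 * (k + 1))))
      (1 / ((k : ℝ) + 1) ^ 2) where
  continuous := ((QuadraticGrowth.const _).sub (.one_div_sub (by
    norm_num
    linarith [k.cast_nonneg (α := ℝ)]))).continuous
  norm_le τ := by
    have hnorm : ‖(1 + τ * I + 1 / 2 : ℂ)‖ ≤ 3 / 2 + |τ| := by
      rw [show (1 + τ * I + 1 / 2 : ℂ) = 3 / 2 + τ * I by ring]
      refine (norm_add_le _ _).trans_eq ?_
      simp
    rw [sub_neg_eq_add, ← add_assoc]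
    refine (norm_trivialZeroSum_term_le (by norm_num) k).trans ?_
    rw [mul_comm]
    gcongr
    nlinarith [sq_nonneg (|τ| - 1), sq_abs τ]

lemma hasSum_trivialZeroSum (τ : ℝ) :
    HasSum (fun k : ℕ => 1 / (2 * ((k : ℂ) + 1)) - 1 / (1 + τ * I - -(1 / 2 + 2 * (k + 1))))
      (trivialZeroSum (1 + τ * I + 1 / 2)) := by
  simp only [sub_neg_eq_add, ← add_assoc]
  exact (summable_trivialZeroSum (by norm_num)).hasSum

lemma quadraticGrowth_trivialZeroSum :
    ∃ C, QuadraticGrowth (fun w => trivialZeroSum (w + 1 / 2)) C :=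
  ⟨_, .hasSum summable_one_div_natCast_add_one_sq quadraticGrowth_trivialZeroSum_term
    hasSum_trivialZeroSum⟩

lemma hasSum_lineTransform_trivialZeroSum_sub (t b : ℝ) :
    HasSum (fun k : ℕ => -(truncatedLaplace (-(1 / 2 + t * I + 2 * (k + 1))) b -
        cutoff b / (1 / 2 + t * I + 2 * (k + 1))))
      (lineTransform (fun w => trivialZeroSum (w + 1 / 2)) t b -
        trivialZeroSum (1 / 2 + t * I) * cutoff b) := by
  have hpole : ∀ k : ℕ, (-(1 / 2 + 2 * (k + 1)) : ℂ).re < 1 := fun k => by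
    norm_num
    linarith [k.cast_nonneg (α := ℝ)]
  have hline := QuadraticGrowth.hasSum_lineTransform summable_one_div_natCast_add_one_sq
    quadraticGrowth_trivialZeroSum_term (g := fun w => trivialZeroSum (w + 1 / 2))
    hasSum_trivialZeroSum t b
  have hcenter := (summable_trivialZeroSum (s := 1 / 2 + t * I) (by norm_num)).hasSum.mul_right
    (cutoff b : ℂ)
  refine (hline.sub hcenter).congr_fun fun k => ?_
  rw [(QuadraticGrowth.const _).lineTransform_sub (.one_div_sub (hpole k)), lineTransform_const,
    lineTransform_one_div_sub (hpole k)]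
  ring_nf

lemma exists_norm_lineTransform_trivialZeroSum_sub_le :
    ∃ C, ∀ t b : ℝ, ‖lineTransform (fun w => trivialZeroSum (w + 1 / 2)) t b -
      trivialZeroSum (1 / 2 + t * I) * cutoff b‖ ≤ C := by
  obtain ⟨M, hM⟩ := contDiff_cutoff.lipschitzWith_of_hasCompactSupport hasCompactSupport_cutoff
    (by simp)
  refine ⟨∑' k : ℕ, M * (1 / ((k : ℝ) + 1) ^ 2), fun t b => ?_⟩
  rw [← (hasSum_lineTransform_trivialZeroSum_sub t b).tsum_eq]
  refine tsum_of_norm_bounded (summable_one_div_natCast_add_one_sq.mul_left _).hasSum fun k => ?_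
  have hre : (1 / 2 + t * I + 2 * ((k : ℂ) + 1)).re = 1 / 2 + 2 * ((k : ℝ) + 1) := by simp
  rw [norm_neg, mul_one_div]
  refine (norm_truncatedLaplace_neg_sub_le hM (by rw [hre]; positivity) b).trans ?_
  rw [hre]
  have hle : (k : ℝ) + 1 ≤ 1 / 2 + 2 * ((k : ℝ) + 1) := by linarith [k.cast_nonneg (α := ℝ)]
  gcongr

end TrivialZeros

lemma exists_norm_lineTransform_xiLogDeriv_sub_le :
    ∃ C, ∀ t b : ℝ, ‖lineTransform xiLogDeriv t b - (truncatedLaplace (1 / 2 - t * I) b +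
      trivialZeroSum (1 / 2 + t * I) * cutoff b - primeSum t b)‖ ≤ C := by
  obtain ⟨C₁, hC₁⟩ := exists_norm_lineTransform_trivialZeroSum_sub_le
  obtain ⟨C₂, -, hC₂⟩ := exists_cutoff_le
  obtain ⟨_, htrivial⟩ := quadraticGrowth_trivialZeroSum
  obtain ⟨_, hprime⟩ := quadraticGrowth_LSeries_vonMangoldt
  have hpole : QuadraticGrowth (fun w => 1 / (w - 1 / 2)) _ := .one_div_sub (by norm_num)
  set c : ℂ := digamma 1 / 2 - Real.log π / 2
  refine ⟨‖c‖ * C₂ + C₁, fun t b => ?_⟩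
  have hline : lineTransform xiLogDeriv t b = lineTransform (fun w => 1 / (w - 1 / 2) + c +
      trivialZeroSum (w + 1 / 2) - LSeries (fun n => (Λ n : ℂ)) (w + 1 / 2)) t b := by
    rw [lineTransform, lineTransform]
    congr 2 with y
    rw [xiLogDeriv_eq (by norm_num)]
  rw [hline, ((hpole.add (.const c)).add htrivial).lineTransform_sub hprime,
    (hpole.add (.const c)).lineTransform_add htrivial, hpole.lineTransform_add (.const c),
    lineTransform_const, lineTransform_one_div_sub (by norm_num),
    lineTransform_LSeries_vonMangoldt]
  calc _ = ‖c * cutoff b + (lineTransform (fun w => trivialZeroSum (w + 1 / 2)) t b -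
        trivialZeroSum (1 / 2 + t * I) * cutoff b)‖ := by
        congr 1
        ring
    _ ≤ ‖c‖ * C₂ + C₁ := by
        refine (norm_add_le _ _).trans (add_le_add ?_ (hC₁ t b))
        rw [norm_mul, Complex.norm_real, Real.norm_of_nonneg (cutoff_nonneg b)]
        gcongr
        exact hC₂ b

/-- The cosine transform of the cutoff, which by evenness is its Laplace transform on the
imaginary axis. -/
def cutoffTransform (u : ℝ) : ℝ := ∫ v, cutoff v * Real.cos (u * v)

lemma laplace_cutoff_mul_I (u : ℝ) : laplace cutoff (u * I) = cutoffTransform u := by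
  have := continuous_cutoff
  have hcos : Integrable fun v => cutoff v * Real.cos (u * v) :=
    Continuous.integrable_of_hasCompactSupport (by fun_prop) hasCompactSupport_cutoff.mul_right
  have hsin : Integrable fun v => cutoff v * Real.sin (u * v) :=
    Continuous.integrable_of_hasCompactSupport (by fun_prop) hasCompactSupport_cutoff.mul_right
  have hodd : ∫ v, cutoff v * Real.sin (u * v) = 0 := by
    have h := integral_neg_eq_self (μ := volume) fun v => cutoff v * Real.sin (u * v)
    simp only [cutoff_neg, mul_neg, Real.sin_neg, integral_neg] at h
    linarith
  have hexp (v : ℝ) : (cutoff v : ℂ) * cexp (v * (u * I)) =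
      ((cutoff v * Real.cos (u * v) : ℝ) : ℂ) + ((cutoff v * Real.sin (u * v) : ℝ) : ℂ) * I := by
    rw [show (v : ℂ) * (u * I) = ((u * v : ℝ) : ℂ) * I by push_cast; ring, Complex.exp_mul_I]
    push_cast
    ring
  have hcos' : Integrable fun v => ((cutoff v * Real.cos (u * v) : ℝ) : ℂ) := hcos.ofReal
  have hsin' : Integrable fun v => ((cutoff v * Real.sin (u * v) : ℝ) : ℂ) := hsin.ofReal
  rw [laplace, integral_congr_ae (.of_forall hexp),
    integral_add hcos' (hsin'.mul_const I), integral_mul_const,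
    integral_complex_ofReal, integral_complex_ofReal, hodd, cutoffTransform]
  simp

lemma cutoffTransform_neg (u : ℝ) : cutoffTransform (-u) = cutoffTransform u := by
  simp [cutoffTransform]

lemma exists_abs_cutoffTransform_le :
    ∃ C > 0, ∀ u, |cutoffTransform u| ≤ C / (1 + u ^ 2) ^ 2 := by
  obtain ⟨C, hC, h⟩ := exists_norm_laplace_le contDiff_cutoff hasCompactSupport_cutoff 0
  refine ⟨C, hC, fun u => ?_⟩
  simpa [laplace_cutoff_mul_I] using h u

lemma continuous_cutoffTransform : Continuous cutoffTransform := by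
  have h := continuous_laplace continuous_cutoff hasCompactSupport_cutoff 0
  simp only [Complex.ofReal_zero, zero_add, laplace_cutoff_mul_I] at h
  exact Complex.continuous_re.comp h

/-- The smoothed sum over zeros of the explicit formula, concentrated on ordinates near `t`. -/
def zeroSum (t b : ℝ) : ℂ :=
  ∑' ρ : XiZero, cexp ((γ ρ * I - t * I) * b) * cutoffTransform (t - γ ρ)

-- The functional equation pairs the lines `Re w = 1` and `Re w = -1`; adding the two one-sided
-- transforms of each pole gives the full transform of the cutoff.
lemma zeroSum_eq_lineTransform_add (hRH : RiemannHypothesis) (t b : ℝ) :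
    zeroSum t b = lineTransform xiLogDeriv t b + lineTransform xiLogDeriv (-t) (-b) := by
  have h := (hasSum_truncatedLaplace_ordinate hRH (.inl rfl) t b).add
    (hasSum_truncatedLaplace_ordinate hRH (.inr rfl) (-t) (-b))
  rw [zeroSum, ← (h.congr_fun (g := fun ρ : XiZero =>
    cexp ((γ ρ * I - t * I) * b) * cutoffTransform (t - γ ρ)) fun ρ => ?_).tsum_eq.symm]
  · simp only [cutoff_neg]
    push_cast
    ring
  · have hneg : ((-1 : ℝ) : ℂ) * (γ ρ * I) - ((-t : ℝ) : ℂ) * I = -(γ ρ * I - t * I) := by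
      push_cast
      ring
    have htransform : laplace cutoff (γ ρ * I - t * I) = cutoffTransform (t - γ ρ) := by
      rw [← cutoffTransform_neg, ← laplace_cutoff_mul_I]
      push_cast
      ring_nf
    rw [hneg, ← htransform, ← truncatedLaplace_add_neg, cutoff_neg]
    push_cast
    ring_nf

lemma primeSum_eq_zero (t : ℝ) {b : ℝ} (hb : b ≤ 1 / 4) : primeSum t b = 0 := by
  refine (tsum_congr fun n => ?_).trans tsum_zero
  rcases Nat.lt_or_ge n 2 with hn | hn
  · interval_cases n <;> simp
  · have hlog : Real.log 2 ≤ Real.log n := Real.log_le_log (by norm_num) (by exact_mod_cast hn)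
    have := Real.log_two_gt_d9
    rw [cutoff_eq_zero (by rw [abs_of_nonpos (by linarith)]; linarith)]
    simp

lemma exists_norm_truncatedLaplace_le :
    ∃ C, 0 ≤ C ∧ ∀ t b : ℝ, ‖truncatedLaplace (1 / 2 - t * I) b‖ ≤ C * Real.exp (b / 2) := by
  refine ⟨∫ v, |cutoff v| * Real.exp (v * (1 / 2)), integral_nonneg fun v => by positivity,
    fun t b => ?_⟩
  have h := norm_truncatedLaplace_le (1 / 2 - t * I) b
  rw [show (1 / 2 - (t : ℂ) * I).re = 1 / 2 by simp] at h
  rwa [mul_comm (Real.exp _), one_div_mul_eq_div] at h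

lemma exists_norm_truncatedLaplace_le_of_quarter_le :
    ∃ C, ∀ t b : ℝ, 1 / 4 ≤ b →
      ‖truncatedLaplace (1 / 2 - t * I) b‖ ≤ C * Real.exp (b / 2) / (1 + t ^ 2) := by
  obtain ⟨C, _, h⟩ := exists_norm_laplace_le contDiff_cutoff hasCompactSupport_cutoff (1 / 2)
  refine ⟨C, fun t b hb => ?_⟩
  have hneg : truncatedLaplace (-(1 / 2 - t * I)) (-b) = 0 := by
    rw [truncatedLaplace]
    refine setIntegral_eq_zero_of_forall_eq_zero fun u (hu : 0 < u) => ?_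
    rw [cutoff_eq_zero (by rw [abs_of_nonneg (by linarith)]; linarith)]
    simp
  have hre : ((1 / 2 - (t : ℂ) * I) * b).re = b / 2 := by
    simp
    ring
  have hlaplace : ‖laplace cutoff (1 / 2 - t * I)‖ ≤ C / (1 + t ^ 2) ^ 2 := by
    simpa [← sub_eq_add_neg] using h (-t)
  rw [← add_zero (truncatedLaplace _ b), ← hneg, truncatedLaplace_add_neg, norm_mul,
    Complex.norm_exp, hre]
  calc Real.exp (b / 2) * ‖laplace cutoff (1 / 2 - t * I)‖
      ≤ Real.exp (b / 2) * (C / (1 + t ^ 2) ^ 2) := by gcongr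
    _ ≤ Real.exp (b / 2) * (C / (1 + t ^ 2)) := by
        gcongr
        exact le_self_pow₀ (by linarith [sq_nonneg t]) two_ne_zero
    _ = C * Real.exp (b / 2) / (1 + t ^ 2) := by ring

lemma exists_norm_trivialZeroSum_mul_cutoff_le :
    ∃ C, ∀ t b : ℝ, ‖trivialZeroSum (1 / 2 + t * I) * cutoff b‖ ≤
      cutoff b * Real.log (|t| + 2) / 2 + C := by
  obtain ⟨C, -, hcutoff⟩ := exists_cutoff_le
  refine ⟨(5 / 2 + (1 / 2 + 1) / 4) * C, fun t b => ?_⟩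
  have h := norm_trivialZeroSum_le (σ := 1 / 2) (by norm_num) t
  rw [norm_mul, Complex.norm_real, Real.norm_of_nonneg (cutoff_nonneg b)]
  push_cast at h
  nlinarith [mul_le_mul_of_nonneg_right h (cutoff_nonneg b), hcutoff b]

lemma exists_norm_zeroSum_add_primeSum_sub_le (hRH : RiemannHypothesis) :
    ∃ C, ∀ t b : ℝ, 0 ≤ b → ‖zeroSum t b + primeSum t b - truncatedLaplace (1 / 2 - t * I) b‖ ≤
      cutoff b * Real.log (|t| + 2) + C := by
  obtain ⟨C₁, h₁⟩ := exists_norm_lineTransform_xiLogDeriv_sub_le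
  obtain ⟨C₂, h₂⟩ := exists_norm_trivialZeroSum_mul_cutoff_le
  obtain ⟨C₃, hC₃, h₃⟩ := exists_norm_truncatedLaplace_le
  refine ⟨2 * C₁ + 2 * C₂ + C₃, fun t b hb => ?_⟩
  have hplus := h₁ t b
  have hminus := h₁ (-t) (-b)
  have htrivial := h₂ t b
  have htrivial' := h₂ (-t) (-b)
  have hlaplace : ‖truncatedLaplace (1 / 2 - (-t : ℝ) * I) (-b)‖ ≤ C₃ :=
    (h₃ (-t) (-b)).trans (mul_le_of_le_one_right hC₃ (Real.exp_le_one_iff.2 (by linarith)))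
  rw [primeSum_eq_zero (-t) (by linarith), sub_zero] at hminus
  rw [abs_neg, cutoff_neg] at htrivial'
  rw [zeroSum_eq_lineTransform_add hRH]
  set P := lineTransform xiLogDeriv t b - (truncatedLaplace (1 / 2 - t * I) b +
    trivialZeroSum (1 / 2 + t * I) * cutoff b - primeSum t b) with hP
  set N := lineTransform xiLogDeriv (-t) (-b) -
    (truncatedLaplace (1 / 2 - (-t : ℝ) * I) (-b) +
      trivialZeroSum (1 / 2 + (-t : ℝ) * I) * cutoff (-b)) with hN
  calc _ = ‖P + N + truncatedLaplace (1 / 2 - (-t : ℝ) * I) (-b) +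
        trivialZeroSum (1 / 2 + t * I) * cutoff b +
        trivialZeroSum (1 / 2 + (-t : ℝ) * I) * cutoff (-b)‖ := by
        congr 1
        rw [hP, hN]
        ring
    _ ≤ C₁ + C₁ + C₃ + (cutoff b * Real.log (|t| + 2) / 2 + C₂) +
        (cutoff b * Real.log (|t| + 2) / 2 + C₂) :=
        norm_add_le_of_le (norm_add_le_of_le (norm_add_le_of_le (norm_add_le_of_le hplus hminus)
          hlaplace) htrivial) (by rwa [cutoff_neg])
    _ = _ := by ring

lemma exists_norm_zeroSum_le_cutoff_mul_log (hRH : RiemannHypothesis) :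
    ∃ C, ∀ t b : ℝ, 0 ≤ b → b ≤ 1 / 4 → ‖zeroSum t b‖ ≤ cutoff b * Real.log (|t| + 2) + C := by
  obtain ⟨C₁, h₁⟩ := exists_norm_zeroSum_add_primeSum_sub_le hRH
  obtain ⟨C₂, hC₂, h₂⟩ := exists_norm_truncatedLaplace_le
  refine ⟨C₁ + C₂ * Real.exp 1, fun t b hb₀ hb => ?_⟩
  have hsum := h₁ t b hb₀
  rw [primeSum_eq_zero t hb, add_zero] at hsum
  have hexp : C₂ * Real.exp (b / 2) ≤ C₂ * Real.exp 1 := by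
    gcongr
    linarith
  linarith [norm_le_norm_sub_add (zeroSum t b) (truncatedLaplace (1 / 2 - t * I) b), h₂ t b]

lemma exists_norm_zeroSum_le_norm_primeSum (hRH : RiemannHypothesis) :
    ∃ C > 0, ∀ t b : ℝ, 1 / 4 ≤ b →
      ‖zeroSum t b‖ ≤ ‖primeSum t b‖ + C + C * Real.exp (b / 2) / (1 + t ^ 2) := by
  obtain ⟨C₁, h₁⟩ := exists_norm_zeroSum_add_primeSum_sub_le hRH
  obtain ⟨C₂, h₂⟩ := exists_norm_truncatedLaplace_le_of_quarter_le
  refine ⟨max (max C₁ C₂) 1, by positivity, fun t b hb => ?_⟩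
  have hsum := h₁ t b (by linarith)
  rw [cutoff_eq_zero (by rwa [abs_of_nonneg (by linarith)]), zero_mul, zero_add] at hsum
  set J := truncatedLaplace (1 / 2 - t * I) b
  calc ‖zeroSum t b‖ = ‖(zeroSum t b + primeSum t b - J) - primeSum t b + J‖ := by
        congr 1
        ring
    _ ≤ C₁ + ‖primeSum t b‖ + C₂ * Real.exp (b / 2) / (1 + t ^ 2) :=
        norm_add_le_of_le (norm_sub_le_of_le hsum le_rfl) (h₂ t b hb)
    _ ≤ _ := by
        rw [add_comm C₁]
        gcongr
        · exact (le_max_left _ _).trans (le_max_left _ _)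
        · exact (le_max_right _ _).trans (le_max_left _ _)

/-! ### Mertens' theorem and a weighted sum over primes -/

lemma log_factorial_eq_sum (N : ℕ) :
    Real.log N.factorial = ∑ n ∈ Finset.Ioc 0 N, Λ n * (N / n : ℕ) := by
  rw [← ArithmeticFunction.sum_Ioc_mul_zeta_eq_sum, ArithmeticFunction.vonMangoldt_mul_zeta]
  induction N with
  | zero => simp
  | succ N ih =>
    rw [← Finset.insert_Ioc_right_eq_Ioc_add_one (Nat.zero_le N), Finset.sum_insert (by simp),
      Nat.factorial_succ, Nat.cast_mul, Real.log_mul (by positivity) (by positivity), ih,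
      ArithmeticFunction.log_apply]

lemma log_sub_one_le_sum_vonMangoldt_div {N : ℕ} (hN : N ≠ 0) :
    Real.log N - 1 ≤ ∑ n ∈ Finset.Ioc 0 N, Λ n / n := by
  have hpos : (0 : ℝ) < N := by exact_mod_cast Nat.pos_of_ne_zero hN
  have hstirling := Stirling.le_log_factorial_stirling hN
  have hfactorial : Real.log N.factorial ≤ (∑ n ∈ Finset.Ioc 0 N, Λ n / n) * N := by
    rw [log_factorial_eq_sum, Finset.sum_mul]
    refine Finset.sum_le_sum fun n _ => ?_
    rw [div_mul_eq_mul_div, mul_div_assoc]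
    exact mul_le_mul_of_nonneg_left Nat.cast_div_le ArithmeticFunction.vonMangoldt_nonneg
  have hlog : 0 ≤ Real.log N := Real.log_natCast_nonneg N
  have hlog' : 0 ≤ Real.log (2 * π) := Real.log_nonneg (by linarith [Real.pi_gt_three])
  refine le_of_mul_le_mul_right ?_ hpos
  linarith

lemma sum_vonMangoldt_div_le {N : ℕ} (hN : N ≠ 0) :
    ∑ n ∈ Finset.Ioc 0 N, Λ n / n ≤ Real.log N + (Real.log 4 + 4) := by
  have hpos : (0 : ℝ) < N := by exact_mod_cast Nat.pos_of_ne_zero hN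
  have hsum : (∑ n ∈ Finset.Ioc 0 N, Λ n / n) * N ≤
      Real.log N.factorial + ∑ n ∈ Finset.Ioc 0 N, Λ n := by
    rw [log_factorial_eq_sum, Finset.sum_mul, ← Finset.sum_add_distrib]
    refine Finset.sum_le_sum fun n _ => ?_
    rw [div_mul_eq_mul_div, mul_div_assoc, ← mul_add_one, ← Nat.floor_div_eq_div (K := ℝ)]
    exact mul_le_mul_of_nonneg_left (Nat.lt_floor_add_one _).le
      ArithmeticFunction.vonMangoldt_nonneg
  have hpsi := Chebyshev.psi_le_const_mul_self hpos.le
  rw [Chebyshev.psi, Nat.floor_natCast] at hpsi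
  have hfactorial : Real.log N.factorial ≤ N * Real.log N := by
    rw [← Real.log_pow]
    exact Real.log_le_log (by positivity) (by exact_mod_cast Nat.factorial_le_pow N)
  refine le_of_mul_le_mul_right ?_ hpos
  linarith

lemma abs_sum_vonMangoldt_div_sub_log_le {x : ℝ} (hx : 1 ≤ x) :
    |∑ n ∈ Finset.Ioc 0 ⌊x⌋₊, Λ n / n - Real.log x| ≤ Real.log 4 + 4 := by
  have hfloor : 1 ≤ ⌊x⌋₊ := Nat.one_le_floor_iff x |>.2 hx
  have hfloor' : (1 : ℝ) ≤ ⌊x⌋₊ := by exact_mod_cast hfloor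
  have hle : Real.log ⌊x⌋₊ ≤ Real.log x :=
    Real.log_le_log (by linarith) (Nat.floor_le (by linarith))
  have hge : Real.log x ≤ Real.log 4 + Real.log ⌊x⌋₊ := by
    rw [← Real.log_mul (by norm_num) (by linarith)]
    exact Real.log_le_log (by linarith) (by linarith [Nat.lt_floor_add_one x])
  rw [abs_le]
  constructor
  · linarith [log_sub_one_le_sum_vonMangoldt_div (Nat.one_le_iff_ne_zero.1 hfloor)]
  · linarith [sum_vonMangoldt_div_le (Nat.one_le_iff_ne_zero.1 hfloor)]

lemma hasDerivAt_log_mul_log_sub {t : ℝ} (ht : t ≠ 0) (L : ℝ) :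
    HasDerivAt (fun t => Real.log t * (L - Real.log t)) ((L - 2 * Real.log t) / t) t := by
  refine ((Real.hasDerivAt_log ht).mul ((Real.hasDerivAt_log ht).const_sub L)).congr_deriv ?_
  ring

lemma sum_vonMangoldt_div_mul_log_mul_log_sub_eq (x : ℝ) :
    ∑ n ∈ Finset.Ioc 0 ⌊x⌋₊, Λ n / n * (Real.log n * (Real.log x - Real.log n)) =
      ∫ t in Ioc 1 x, (2 * Real.log t - Real.log x) / t * ∑ n ∈ Finset.Ioc 0 ⌊t⌋₊, Λ n / n := by
  have hsplit (f : ℕ → ℝ) (hf : f 0 = 0) (N : ℕ) :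
      ∑ n ∈ Finset.Icc 0 N, f n = ∑ n ∈ Finset.Ioc 0 N, f n := by
    rw [Finset.Icc_eq_cons_Ioc (Nat.zero_le N), Finset.sum_cons, hf, zero_add]
  have hderiv (t : ℝ) (ht : t ∈ Icc 1 x) := hasDerivAt_log_mul_log_sub
    (zero_lt_one.trans_le ht.1).ne' (Real.log x)
  have hcont : ContinuousOn (deriv fun t => Real.log t * (Real.log x - Real.log t)) (Icc 1 x) := by
    refine ContinuousOn.congr (f := fun t => (Real.log x - 2 * Real.log t) / t) ?_
      fun t ht => (hderiv t ht).deriv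
    have hne (t : ℝ) (ht : t ∈ Icc 1 x) : t ≠ 0 := (zero_lt_one.trans_le ht.1).ne'
    fun_prop (disch := assumption)
  have habel := sum_mul_eq_sub_integral_mul₀ (fun n => Λ n / n) (by simp) x
    (fun t ht => (hderiv t ht).differentiableAt) hcont.integrableOn_Icc
  rw [hsplit _ (by simp), sub_self, mul_zero, zero_mul, zero_sub, ← integral_neg] at habel
  simp only [mul_comm (Λ _ / _ : ℝ)]
  refine habel.trans (setIntegral_congr_fun measurableSet_Ioc fun t ht => ?_)
  simp only [(hderiv t ⟨ht.1.le, ht.2⟩).deriv, hsplit (fun n => Λ n / n) (by simp)]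
  ring

lemma integral_two_mul_log_sub_mul_log_div {x : ℝ} (hx : 1 ≤ x) (C : ℝ) :
    ∫ t in (1 : ℝ)..x, ((2 * Real.log t - Real.log x) * Real.log t + Real.log x * C) / t =
      Real.log x ^ 3 / 6 + C * Real.log x ^ 2 := by
  have hne (t : ℝ) (ht : t ∈ uIcc 1 x) : t ≠ 0 :=
    (zero_lt_one.trans_le (uIcc_of_le hx ▸ ht).1).ne'
  rw [intervalIntegral.integral_eq_sub_of_hasDerivAt (f := fun t =>
    2 / 3 * Real.log t ^ 3 - Real.log x / 2 * Real.log t ^ 2 + Real.log x * C * Real.log t)]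
  · simp only [Real.log_one]
    ring
  · intro t ht
    have h := Real.hasDerivAt_log (hne t ht)
    refine ((((h.pow 3).const_mul (2 / 3)).sub ((h.pow 2).const_mul (Real.log x / 2))).add
      (h.const_mul (Real.log x * C))).congr_deriv ?_
    ring
  · refine ContinuousOn.intervalIntegrable ?_
    fun_prop (disch := assumption)

lemma sum_vonMangoldt_div_mul_log_mul_log_sub_le {x : ℝ} (hx : 1 ≤ x) :
    ∑ n ∈ Finset.Ioc 0 ⌊x⌋₊, Λ n / n * (Real.log n * (Real.log x - Real.log n)) ≤
      Real.log x ^ 3 / 6 + (Real.log 4 + 4) * Real.log x ^ 2 := by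
  have hne (t : ℝ) (ht : t ∈ Icc 1 x) : t ≠ 0 := (zero_lt_one.trans_le ht.1).ne'
  rw [sum_vonMangoldt_div_mul_log_mul_log_sub_eq, ← integral_two_mul_log_sub_mul_log_div hx,
    intervalIntegral.integral_of_le hx]
  refine setIntegral_mono_on ?_ ?_ measurableSet_Ioc fun t ht => ?_
  · have hcont : ContinuousOn (fun t => (2 * Real.log t - Real.log x) / t) (Icc 1 x) := by
      fun_prop (disch := assumption)
    exact (integrableOn_mul_sum_Icc (fun n => Λ n / n) zero_le_one
      hcont.integrableOn_Icc (m := 1)).mono_set Ioc_subset_Icc_self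
  · have hcont : ContinuousOn (fun t => ((2 * Real.log t - Real.log x) * Real.log t +
        Real.log x * (Real.log 4 + 4)) / t) (Icc 1 x) := by
      fun_prop (disch := assumption)
    exact hcont.integrableOn_Icc.mono_set Ioc_subset_Icc_self
  · have ht₀ : 0 < t := zero_lt_one.trans ht.1
    have hlog : 0 ≤ Real.log t := Real.log_nonneg ht.1.le
    have hlog' : Real.log t ≤ Real.log x := Real.log_le_log ht₀ ht.2
    set S := ∑ n ∈ Finset.Ioc 0 ⌊t⌋₊, Λ n / n
    have hmertens : (2 * Real.log t - Real.log x) * (S - Real.log t) ≤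
        Real.log x * (Real.log 4 + 4) := by
      refine (le_abs_self _).trans ?_
      rw [abs_mul]
      gcongr
      · linarith
      · rw [abs_le]
        constructor <;> linarith
      · exact abs_sum_vonMangoldt_div_sub_log_le ht.1.le
    rw [div_mul_eq_mul_div]
    gcongr
    linarith

lemma sum_vonMangoldt_sq_div_mul_log_sub_le {x : ℝ} (hx : 1 ≤ x) :
    ∑ n ∈ Finset.Ioc 0 ⌊x⌋₊, Λ n ^ 2 / n * (Real.log x - Real.log n) ≤
      Real.log x ^ 3 / 6 + (Real.log 4 + 4) * Real.log x ^ 2 := by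
  refine (Finset.sum_le_sum fun n hn => ?_).trans (sum_vonMangoldt_div_mul_log_mul_log_sub_le hx)
  rw [Finset.mem_Ioc] at hn
  have hpos : (0 : ℝ) < n := by exact_mod_cast hn.1
  have hlog : 0 ≤ Real.log x - Real.log n :=
    sub_nonneg.2 (Real.log_le_log hpos ((Nat.le_floor_iff (by linarith)).1 hn.2))
  rw [sq, mul_div_right_comm, mul_assoc]
  gcongr
  exact ArithmeticFunction.vonMangoldt_le_log

/-! ### The mean value theorem for Dirichlet polynomials -/

lemma abs_sub_le_mul_abs_log_sub_log {x y N : ℝ} (hx : 0 < x) (hy : 0 < y) (hxN : x ≤ N)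
    (hyN : y ≤ N) : |x - y| ≤ N * |Real.log x - Real.log y| := by
  wlog hxy : y ≤ x generalizing x y
  · rw [abs_sub_comm, abs_sub_comm (Real.log x)]
    exact this hy hx hyN hxN (le_of_not_ge hxy)
  have hlog : Real.log y ≤ Real.log x := Real.log_le_log hy hxy
  have h := Real.one_sub_inv_le_log_of_pos (div_pos hx hy)
  rw [Real.log_div hx.ne' hy.ne', inv_div] at h
  rw [abs_of_nonneg (sub_nonneg.2 hxy), abs_of_nonneg (sub_nonneg.2 hlog)]
  calc x - y = x * (1 - y / x) := by field_simp
    _ ≤ N * (Real.log x - Real.log y) :=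
        mul_le_mul hxN h (sub_nonneg.2 (div_le_one_of_le₀ hxy hx.le)) (hx.le.trans hxN)

lemma norm_integral_cexp_mul_I_le (c T : ℝ) :
    ‖∫ t in (0 : ℝ)..T, cexp (c * I * t)‖ * |c| ≤ 2 := by
  rcases eq_or_ne c 0 with rfl | hc
  · simp
  rw [integral_exp_mul_complex (by simpa using hc), norm_div, norm_mul, Complex.norm_I, mul_one,
    Complex.norm_real, Real.norm_eq_abs, div_mul_cancel₀ _ (abs_ne_zero.2 hc)]
  refine (norm_sub_le _ _).trans_eq ?_
  simp only [Complex.norm_exp]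
  norm_num

lemma sum_one_div_le_one_add_log {ι : Type*} {s : Finset ι} {e : ι → ℕ} {N : ℕ}
    (hinj : InjOn e s) (hle : ∀ i ∈ s, e i ≤ N) : ∑ i ∈ s, 1 / (e i : ℝ) ≤ 1 + Real.log N := by
  calc ∑ i ∈ s, 1 / (e i : ℝ) = ∑ k ∈ s.image e, 1 / (k : ℝ) :=
        (Finset.sum_image (f := fun k : ℕ => 1 / (k : ℝ)) hinj).symm
    _ ≤ ∑ k ∈ Finset.Icc 0 N, 1 / (k : ℝ) := by
        refine Finset.sum_le_sum_of_subset_of_nonneg (fun k hk => ?_) fun _ _ _ => by positivity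
        obtain ⟨i, hi, rfl⟩ := Finset.mem_image.1 hk
        exact Finset.mem_Icc.2 ⟨Nat.zero_le _, hle i hi⟩
    _ = harmonic N := by
        rw [Finset.Icc_eq_cons_Ioc (Nat.zero_le N), Finset.sum_cons, harmonic_eq_sum_Icc]
        simp [← Finset.Icc_add_one_left_eq_Ioc]
    _ ≤ 1 + Real.log N := harmonic_le_one_add_log N

lemma sum_one_div_abs_sub_le {N n : ℕ} (hn : n ≤ N) :
    ∑ m ∈ Finset.Ioc 0 N, 1 / |(n : ℝ) - m| ≤ 2 * (1 + Real.log N) := by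
  rw [← Finset.sum_filter_add_sum_filter_not _ (· < n), two_mul]
  refine add_le_add ?_ ?_
  · rw [Finset.sum_congr rfl fun (m : ℕ) hm => show 1 / |(n : ℝ) - m| = 1 / ((n - m : ℕ) : ℝ) by
      rw [← Nat.cast_sub (Finset.mem_filter.1 hm).2.le, Nat.abs_cast]]
    refine sum_one_div_le_one_add_log (fun a ha b hb hab => ?_) fun m _ => by omega
    simp only [Finset.coe_filter, mem_ofPred_eq] at ha hb
    omega
  · rw [Finset.sum_congr rfl fun (m : ℕ) hm => show 1 / |(n : ℝ) - m| = 1 / ((m - n : ℕ) : ℝ) by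
      rw [abs_sub_comm, ← Nat.cast_sub (not_lt.1 (Finset.mem_filter.1 hm).2), Nat.abs_cast]]
    refine sum_one_div_le_one_add_log (fun a ha b hb hab => ?_) fun m hm => ?_
    · simp only [Finset.coe_filter, mem_ofPred_eq] at ha hb
      omega
    · have := Finset.mem_Ioc.1 (Finset.mem_filter.1 hm).1
      omega

lemma sum_sum_mul_div_abs_sub_le (N : ℕ) (r : ℕ → ℝ) :
    ∑ n ∈ Finset.Ioc 0 N, ∑ m ∈ Finset.Ioc 0 N, r n * r m / |(n : ℝ) - m| ≤
      2 * (1 + Real.log N) * ∑ n ∈ Finset.Ioc 0 N, r n ^ 2 := by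
  have hterm (n m : ℕ) : r n * r m / |(n : ℝ) - m| ≤
      r n ^ 2 / 2 * (1 / |(n : ℝ) - m|) + r m ^ 2 / 2 * (1 / |(m : ℝ) - n|) := by
    rw [abs_sub_comm (m : ℝ), ← add_mul, mul_one_div]
    gcongr
    linarith [two_mul_le_add_sq (r n) (r m)]
  have hrow : ∑ n ∈ Finset.Ioc 0 N, ∑ m ∈ Finset.Ioc 0 N, r n ^ 2 / 2 * (1 / |(n : ℝ) - m|) ≤
      (1 + Real.log N) * ∑ n ∈ Finset.Ioc 0 N, r n ^ 2 := by
    rw [Finset.mul_sum]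
    refine Finset.sum_le_sum fun n hn => ?_
    rw [← Finset.mul_sum]
    calc r n ^ 2 / 2 * ∑ m ∈ Finset.Ioc 0 N, 1 / |(n : ℝ) - m|
        ≤ r n ^ 2 / 2 * (2 * (1 + Real.log N)) := by
          gcongr
          exact sum_one_div_abs_sub_le (Finset.mem_Ioc.1 hn).2
      _ = (1 + Real.log N) * r n ^ 2 := by ring
  have hcolumn := Finset.sum_comm (s := Finset.Ioc 0 N) (t := Finset.Ioc 0 N)
    (f := fun n m : ℕ => r m ^ 2 / 2 * (1 / |(m : ℝ) - n|))
  refine (Finset.sum_le_sum fun n _ => Finset.sum_le_sum fun m _ => hterm n m).trans ?_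
  simp only [Finset.sum_add_distrib]
  rw [hcolumn]
  linarith

lemma ofReal_norm_sq_sum_eq {ι : Type*} (s : Finset ι) (z : ι → ℂ) :
    ((‖∑ i ∈ s, z i‖ ^ 2 : ℝ) : ℂ) =
      ∑ i ∈ s, ∑ j ∈ s, z i * (starRingEnd ℂ) (z j) := by
  rw [← Finset.sum_mul_sum, ← map_sum, Complex.mul_conj']
  push_cast
  rfl

lemma norm_integral_dirichlet_term_le {N n m : ℕ} (hn : n ∈ Finset.Ioc 0 N)
    (hm : m ∈ Finset.Ioc 0 N) (hnm : n ≠ m) (T : ℝ) :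
    ‖∫ t in (0 : ℝ)..T, cexp ((Real.log m - Real.log n : ℝ) * I * t)‖ ≤
      2 * N / |(n : ℝ) - m| := by
  rw [Finset.mem_Ioc] at hn hm
  have hsep := abs_sub_le_mul_abs_log_sub_log (x := n) (y := m) (N := N)
    (by exact_mod_cast hn.1) (by exact_mod_cast hm.1) (by exact_mod_cast hn.2)
    (by exact_mod_cast hm.2)
  have hpos : 0 < |(n : ℝ) - m| := abs_pos.2 (sub_ne_zero.2 (by exact_mod_cast hnm))
  rw [le_div_iff₀ hpos]
  calc _ ≤ ‖∫ t in (0 : ℝ)..T, cexp ((Real.log m - Real.log n : ℝ) * I * t)‖ *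
        (N * |Real.log n - Real.log m|) := by gcongr
    _ = N * (‖∫ t in (0 : ℝ)..T, cexp ((Real.log m - Real.log n : ℝ) * I * t)‖ *
        |Real.log m - Real.log n|) := by
        rw [abs_sub_comm]
        ring
    _ ≤ N * 2 := by
        gcongr
        exact norm_integral_cexp_mul_I_le _ _
    _ = 2 * N := mul_comm _ _

theorem integral_norm_sq_dirichlet_polynomial_le (N : ℕ) (a : ℕ → ℂ) {T : ℝ} (hT : 0 ≤ T) :
    ∫ t in (0 : ℝ)..T, ‖∑ n ∈ Finset.Ioc 0 N, a n * cexp (-(Real.log n * I * t))‖ ^ 2 ≤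
      (T + 4 * N * (1 + Real.log N)) * ∑ n ∈ Finset.Ioc 0 N, ‖a n‖ ^ 2 := by
  have hexpand (t : ℝ) : ((‖∑ n ∈ Finset.Ioc 0 N, a n * cexp (-(Real.log n * I * t))‖ ^ 2 : ℝ) : ℂ)
      = ∑ n ∈ Finset.Ioc 0 N, ∑ m ∈ Finset.Ioc 0 N,
        a n * (starRingEnd ℂ) (a m) * cexp ((Real.log m - Real.log n : ℝ) * I * t) := by
    rw [ofReal_norm_sq_sum_eq]
    refine Finset.sum_congr rfl fun n _ => Finset.sum_congr rfl fun m _ => ?_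
    rw [map_mul, ← Complex.exp_conj, mul_mul_mul_comm, ← Complex.exp_add]
    congr 2
    simp only [map_neg, map_mul, Complex.conj_ofReal, Complex.conj_I]
    push_cast
    ring
  have hterm (n : ℕ) (hn : n ∈ Finset.Ioc 0 N) (m : ℕ) (hm : m ∈ Finset.Ioc 0 N) :
      ‖∫ t in (0 : ℝ)..T, a n * (starRingEnd ℂ) (a m) *
        cexp ((Real.log m - Real.log n : ℝ) * I * t)‖ ≤
      (if n = m then T * ‖a n‖ ^ 2 else 0) + 2 * N * (‖a n‖ * ‖a m‖ / |(n : ℝ) - m|) := by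
    rw [intervalIntegral.integral_const_mul, norm_mul, norm_mul, RCLike.norm_conj]
    split_ifs with hnm
    · subst hnm
      simp [abs_of_nonneg hT, sq, mul_comm]
    · calc _ ≤ ‖a n‖ * ‖a m‖ * (2 * N / |(n : ℝ) - m|) := by
            gcongr
            exact norm_integral_dirichlet_term_le hn hm hnm T
        _ = _ := by ring
  rw [← Real.norm_of_nonneg (intervalIntegral.integral_nonneg hT fun t _ => sq_nonneg _),
    ← Complex.norm_real, ← intervalIntegral.integral_ofReal]
  simp only [hexpand]
  have hInt (n m : ℕ) : IntervalIntegrable (fun t : ℝ => a n * (starRingEnd ℂ) (a m) *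
      cexp ((Real.log m - Real.log n : ℝ) * I * t)) volume 0 T :=
    Continuous.intervalIntegrable (by fun_prop) _ _
  rw [intervalIntegral.integral_finsetSum fun n _ =>
    Continuous.intervalIntegrable (by fun_prop) _ _]
  simp only [intervalIntegral.integral_finsetSum fun m _ => hInt _ m]
  refine (norm_sum_le_of_le _ fun n hn => norm_sum_le_of_le _ (hterm n hn)).trans ?_
  have hdiag : ∑ n ∈ Finset.Ioc 0 N, ∑ m ∈ Finset.Ioc 0 N, (if n = m then T * ‖a n‖ ^ 2 else 0) =
      T * ∑ n ∈ Finset.Ioc 0 N, ‖a n‖ ^ 2 := by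
    rw [Finset.mul_sum]
    exact Finset.sum_congr rfl fun n hn => by rw [Finset.sum_ite_eq, if_pos hn]
  simp only [Finset.sum_add_distrib, hdiag, ← Finset.mul_sum]
  have hoff := mul_le_mul_of_nonneg_left (sum_sum_mul_div_abs_sub_le N fun n => ‖a n‖)
    (show (0 : ℝ) ≤ 2 * N by positivity)
  linarith

/-! ### The mean square of the sum over primes -/

/-- The largest `n` with `log n ≤ Y + 1/4`. Since `cutoff` is supported in `[-1/4, 1/4]`, no larger
`n` occurs in `primeSum t b` for `b ≤ Y`. -/
def primeRange (Y : ℝ) : ℕ := ⌊Real.exp (Y + 1 / 4)⌋₊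

/-- The sum of the squared absolute values of the coefficients of the Dirichlet polynomial
`primeSum · b`, truncated at `N`. -/
def primeEnergy (N : ℕ) (b : ℝ) : ℝ :=
  ∑ n ∈ Finset.Ioc 0 N, Λ n ^ 2 / n * cutoff (b - Real.log n) ^ 2

lemma primeEnergy_nonneg (N : ℕ) (b : ℝ) : 0 ≤ primeEnergy N b :=
  Finset.sum_nonneg fun _ _ => by positivity

lemma continuous_primeEnergy (N : ℕ) : Continuous (primeEnergy N) := by
  unfold primeEnergy
  have := continuous_cutoff
  fun_prop

lemma le_primeRange_iff {Y : ℝ} {n : ℕ} (hn : 0 < n) :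
    n ≤ primeRange Y ↔ Real.log n ≤ Y + 1 / 4 := by
  rw [primeRange, Nat.le_floor_iff (Real.exp_pos _).le,
    Real.log_le_iff_le_exp (by exact_mod_cast hn)]

lemma primeSum_eq_sum {Y b : ℝ} (hb : b ≤ Y) (t : ℝ) :
    primeSum t b = ∑ n ∈ Finset.Ioc 0 (primeRange Y),
      ((Λ n * Real.exp (-Real.log n / 2) * cutoff (b - Real.log n) : ℝ) : ℂ) *
        cexp (-(Real.log n * I * t)) := by
  rw [primeSum, tsum_eq_sum (s := Finset.Ioc 0 (primeRange Y))]
  · refine Finset.sum_congr rfl fun n _ => ?_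
    have hexp : cexp (-(1 / 2 + t * I) * Real.log n) =
        cexp ((-Real.log n / 2 : ℝ)) * cexp (-(Real.log n * I * t)) := by
      rw [← Complex.exp_add]
      congr 1
      push_cast
      ring
    rw [hexp]
    push_cast
    ring
  · intro n hn
    rcases n.eq_zero_or_pos with rfl | hn₀
    · simp
    have hlog : Y + 1 / 4 < Real.log n := by
      by_contra! hle
      exact hn (Finset.mem_Ioc.2 ⟨hn₀, (le_primeRange_iff hn₀).2 hle⟩)
    rw [cutoff_eq_zero (by rw [abs_of_nonpos] <;> linarith)]
    simp

lemma continuous_primeSum (b : ℝ) : Continuous fun t => primeSum t b := by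
  simp_rw [primeSum_eq_sum le_rfl]
  fun_prop

lemma integral_norm_primeSum_sq_le {Y b T : ℝ} (hb : b ≤ Y) (hT : 0 ≤ T) :
    ∫ t in (0 : ℝ)..T, ‖primeSum t b‖ ^ 2 ≤
      (T + 4 * primeRange Y * (1 + Real.log (primeRange Y))) * primeEnergy (primeRange Y) b := by
  simp_rw [primeSum_eq_sum hb]
  refine (integral_norm_sq_dirichlet_polynomial_le _ _ hT).trans_eq ?_
  congr 1
  refine Finset.sum_congr rfl fun n hn => ?_
  have hpos : (0 : ℝ) < n := by exact_mod_cast (Finset.mem_Ioc.1 hn).1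
  have hexp : Real.exp (-Real.log n / 2) ^ 2 = 1 / n := by
    rw [← Real.exp_nat_mul, Nat.cast_ofNat, mul_div_cancel₀ _ two_ne_zero, Real.exp_neg,
      Real.exp_log hpos, one_div]
  rw [Complex.norm_real, Real.norm_eq_abs, sq_abs, mul_pow, mul_pow, hexp]
  ring

lemma eventually_add_primeRange_mul_log_le : ∀ᶠ T : ℝ in atTop,
    T + 4 * primeRange (19 / 20 * Real.log T) *
      (1 + Real.log (primeRange (19 / 20 * Real.log T))) ≤ 101 / 100 * T := by
  have hsmall : (fun T : ℝ => 4 * Real.exp (1 / 4) * (2 + Real.log T)) =o[atTop]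
      fun T : ℝ => T ^ (1 / 20 : ℝ) :=
    ((Asymptotics.isLittleO_const_left.2 (.inr (tendsto_norm_atTop_atTop.comp
      (tendsto_rpow_atTop (by norm_num))))).add
        (isLittleO_log_rpow_atTop (by norm_num))).const_mul_left _
  filter_upwards [hsmall.bound (by norm_num : (0 : ℝ) < 1 / 100), eventually_ge_atTop 1]
    with T hT hT₁
  have hT₀ : 0 < T := by linarith
  have hlog : 0 ≤ Real.log T := Real.log_nonneg hT₁
  rw [Real.norm_of_nonneg (by positivity), Real.norm_of_nonneg (by positivity)] at hT
  set N := primeRange (19 / 20 * Real.log T)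
  have hNpos : 0 < N := Nat.floor_pos.2 (Real.one_le_exp (by positivity))
  have hlogN := (le_primeRange_iff (Y := 19 / 20 * Real.log T) hNpos).1 le_rfl
  have hN : (N : ℝ) ≤ T ^ (19 / 20 : ℝ) * Real.exp (1 / 4) := by
    rw [Real.rpow_def_of_pos hT₀, ← Real.exp_add, mul_comm (Real.log T)]
    exact Nat.floor_le (Real.exp_pos _).le
  calc T + 4 * N * (1 + Real.log N)
      ≤ T + 4 * (T ^ (19 / 20 : ℝ) * Real.exp (1 / 4)) * (1 + (1 + Real.log T)) := by
        gcongr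
        linarith
    _ = T + T ^ (19 / 20 : ℝ) * (4 * Real.exp (1 / 4) * (2 + Real.log T)) := by ring
    _ ≤ T + T ^ (19 / 20 : ℝ) * (1 / 100 * T ^ (1 / 20 : ℝ)) := by gcongr
    _ = T + 1 / 100 * T ^ (19 / 20 + 1 / 20 : ℝ) := by
        rw [Real.rpow_add hT₀]
        ring
    _ = 101 / 100 * T := by
        norm_num
        ring

lemma integrable_cutoff_sq : Integrable fun v => cutoff v ^ 2 := by
  refine .of_integral_ne_zero ?_
  rw [integral_cutoff_sq]
  positivity

lemma integral_cutoff_sq_sub_le (c : ℝ) {Y : ℝ} (hY : 0 ≤ Y) :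
    ∫ b in (0 : ℝ)..Y, cutoff (b - c) ^ 2 ≤ 1 / (2 * π) := by
  rw [← integral_cutoff_sq, ← integral_sub_right_eq_self (fun v => cutoff v ^ 2) c,
    intervalIntegral.integral_of_le hY]
  exact setIntegral_le_integral (integrable_cutoff_sq.comp_sub_right _)
    (Eventually.of_forall fun _ => sq_nonneg _)

lemma integral_cutoff_sq_le {Y : ℝ} (hY : 0 ≤ Y) :
    ∫ b in (0 : ℝ)..Y, cutoff b ^ 2 ≤ 1 / (4 * π) := by
  have heven (x : ℝ) : cutoff |x| ^ 2 = cutoff x ^ 2 := by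
    rcases abs_choice x with h | h <;> simp only [h, cutoff_neg]
  have hhalf : ∫ b in Ioi (0 : ℝ), cutoff b ^ 2 = 1 / (4 * π) := by
    have h := integral_comp_abs (f := fun x => cutoff x ^ 2)
    simp only [heven, integral_cutoff_sq] at h
    rw [show 1 / (4 * π) = 1 / (2 * π) / 2 by ring]
    linarith
  rw [← hhalf, intervalIntegral.integral_of_le hY]
  exact setIntegral_mono_set integrable_cutoff_sq.integrableOn
    (Eventually.of_forall fun _ => sq_nonneg _) Ioc_subset_Ioi_self.eventuallyLE

lemma integral_fejer_mul_cutoff_sq_le {Y c : ℝ} (hY : 0 < Y) (hc : c ≤ Y + 1 / 4) :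
    ∫ b in (0 : ℝ)..Y, (1 - b / Y) * cutoff (b - c) ^ 2 ≤ (Y + 1 / 4 - c) / Y * (1 / (2 * π)) := by
  have hcont := continuous_cutoff
  refine (intervalIntegral.integral_mono_on hY.le (Continuous.intervalIntegrable (by fun_prop) _ _)
    (Continuous.intervalIntegrable (u := fun b => (Y + 1 / 4 - c) / Y * cutoff (b - c) ^ 2)
      (by fun_prop) _ _) fun b _ => ?_).trans ?_
  · rcases le_or_gt (1 / 4) |b - c| with hbc | hbc
    · rw [cutoff_eq_zero hbc]
      simp
    · gcongr
      rw [one_sub_div hY.ne']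
      exact div_le_div_of_nonneg_right (by linarith [(abs_lt.1 hbc).1]) hY.le
  · rw [intervalIntegral.integral_const_mul]
    gcongr
    exact integral_cutoff_sq_sub_le c hY.le

lemma integral_fejer_mul_primeEnergy_le {Y : ℝ} (hY : 0 < Y) :
    ∫ b in (0 : ℝ)..Y, (1 - b / Y) * primeEnergy (primeRange Y) b ≤
      1 / (2 * π * Y) * ((Y + 1 / 4) ^ 3 / 6 + (Real.log 4 + 4) * (Y + 1 / 4) ^ 2) := by
  have hcont := continuous_cutoff
  have hprimes := sum_vonMangoldt_sq_div_mul_log_sub_le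
    (Real.one_le_exp (by linarith : 0 ≤ Y + 1 / 4))
  rw [Real.log_exp] at hprimes
  refine le_trans ?_ (mul_le_mul_of_nonneg_left hprimes (by positivity))
  simp only [primeEnergy, Finset.mul_sum]
  rw [intervalIntegral.integral_finsetSum fun n _ =>
    Continuous.intervalIntegrable (by fun_prop) _ _]
  refine Finset.sum_le_sum fun n hn => ?_
  obtain ⟨hn₀, hnY⟩ := Finset.mem_Ioc.1 hn
  simp only [mul_left_comm _ (Λ n ^ 2 / n)]
  rw [intervalIntegral.integral_const_mul]
  refine mul_le_mul_of_nonneg_left ((integral_fejer_mul_cutoff_sq_le hY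
    ((le_primeRange_iff hn₀).1 hnY)).trans_eq ?_) (by positivity)
  field_simp

/-! ### The sum over zeros up to height `T` -/

lemma finite_zerosUpTo (T : ℝ) : (zerosUpTo T).Finite := by
  refine (finite_zeros_norm_le differentiable_riemannXi riemannXi_zero_ne_zero (1 + T)).subset ?_
  rintro ρ ⟨hρ, him, himT⟩
  refine ⟨(Complex.norm_le_abs_re_add_abs_im ρ).trans ?_, riemannXi_eq_zero_iff.mpr hρ⟩
  rw [abs_of_pos hρ.2.1, abs_of_pos him]
  exact add_le_add hρ.2.2.le himT

/-- The zeros with ordinate in `(0, T]`, repeated according to multiplicity. -/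
def zerosWithMultUpTo (T : ℝ) : Finset XiZero := by
  classical
  exact ((finite_zerosUpTo T).toFinset.subtype (riemannXi · = 0)).sigma fun _ => Finset.univ

lemma mem_zerosWithMultUpTo {T : ℝ} {ρ : XiZero} :
    ρ ∈ zerosWithMultUpTo T ↔ 0 < γ ρ ∧ γ ρ ≤ T := by
  simp [zerosWithMultUpTo, zerosUpTo, XiZero.zetaNontrivZero ρ, ordinate]

lemma tsum_zetaMult_mul (T : ℝ) (g : ℂ → ℂ) :
    ∑' ρ : zerosUpTo T, zetaMult ρ * g ρ = ∑ ρ ∈ zerosWithMultUpTo T, g ρ.1 := by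
  classical
  have hfin := finite_zerosUpTo T
  have : Fintype (zerosUpTo T) := hfin.fintype
  rw [zerosWithMultUpTo, Finset.sum_sigma]
  simp only [Finset.sum_const, Finset.card_univ, Fintype.card_fin, nsmul_eq_mul]
  rw [Finset.sum_subtype_of_mem (fun ρ => (analyticOrderNatAt riemannXi ρ : ℂ) * g ρ)
    fun ρ hρ => riemannXi_eq_zero_iff.mpr (hfin.mem_toFinset.mp hρ).1, tsum_fintype,
    ← Finset.sum_subtype _ (fun _ => hfin.mem_toFinset) fun ρ => (zetaMult ρ : ℂ) * g ρ]
  refine Finset.sum_congr rfl fun ρ hρ => ?_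
  rw [zetaMult_eq_analyticOrderNatAt (hfin.mem_toFinset.mp hρ).1]

/-- The part of `zeroSum` coming from the ordinates in `(0, T]`. -/
def localZeroSum (T t b : ℝ) : ℂ :=
  ∑ ρ ∈ zerosWithMultUpTo T, cexp ((γ ρ * I - t * I) * b) * cutoffTransform (t - γ ρ)

/-- A weight concentrated near the endpoints of `[0, T]`, where the zeros inside and outside
`(0, T]` interact. -/
def edgeWeight (T t : ℝ) : ℝ := 1 / (1 + t ^ 2) + 1 / (1 + (t - T) ^ 2)

lemma one_div_one_add_sq_pos (t : ℝ) : 0 < 1 / (1 + t ^ 2) := by positivity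

lemma one_div_one_add_sq_le_one (t : ℝ) : 1 / (1 + t ^ 2) ≤ 1 :=
  div_le_one_of_le₀ (by linarith [sq_nonneg t]) (by positivity)

lemma edgeWeight_nonneg (T t : ℝ) : 0 ≤ edgeWeight T t := by
  unfold edgeWeight
  positivity

lemma edgeWeight_le_two (T t : ℝ) : edgeWeight T t ≤ 2 := by
  unfold edgeWeight
  linarith [one_div_one_add_sq_le_one t, one_div_one_add_sq_le_one (t - T)]

lemma integrable_edgeWeight (T : ℝ) : Integrable (edgeWeight T) :=
  integrable_one_div_one_add_sq.add (integrable_one_div_one_add_sq.comp_sub_right T)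

lemma integral_edgeWeight (T : ℝ) : ∫ t, edgeWeight T t = 2 * π := by
  have hInt := integrable_one_div_one_add_sq
  have hval : ∫ t : ℝ, 1 / (1 + t ^ 2) = π := by simp
  simp_rw [edgeWeight]
  rw [integral_add hInt (hInt.comp_sub_right T),
    integral_sub_right_eq_self (fun t : ℝ => 1 / (1 + t ^ 2)) T, hval]
  ring

lemma norm_cexp_mul_I_sub (x t b : ℝ) : ‖cexp ((x * I - t * I) * b)‖ = 1 := by
  rw [show ((x : ℂ) * I - t * I) * b = (((x - t) * b : ℝ) : ℂ) * I by push_cast; ring,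
    Complex.norm_exp_ofReal_mul_I]

lemma exists_norm_tsum_zeros_le (hRH : RiemannHypothesis) :
    ∃ C > 0, ∀ (t b m : ℝ) (S : Set XiZero), (∀ ρ ∈ S, m ^ 2 ≤ (t - γ ρ) ^ 2) →
      Summable (fun ρ : XiZero => cexp ((γ ρ * I - t * I) * b) * cutoffTransform (t - γ ρ)) ∧
      ‖∑' ρ : S, cexp ((γ ρ * I - t * I) * b) * cutoffTransform (t - γ ρ)‖ ≤
        C / (1 + m ^ 2) * Real.log (|t| + 2) := by
  obtain ⟨C₁, hC₁, h₁⟩ := exists_abs_cutoffTransform_le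
  obtain ⟨C₂, hC₂, h₂⟩ := exists_tsum_one_div_one_add_sub_ordinate_sq_le hRH
  refine ⟨C₁ * C₂, by positivity, fun t b m S hS => ?_⟩
  obtain ⟨hsum, htsum⟩ := h₂ t
  have hterm {m : ℝ} {ρ : XiZero} (h : m ^ 2 ≤ (t - γ ρ) ^ 2) :
      ‖cexp ((γ ρ * I - t * I) * b) * cutoffTransform (t - γ ρ)‖ ≤
        C₁ / (1 + m ^ 2) * (1 / (1 + (t - γ ρ) ^ 2)) := by
    rw [norm_mul, norm_cexp_mul_I_sub, one_mul, Complex.norm_real, Real.norm_eq_abs]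
    refine (h₁ _).trans ?_
    rw [div_mul_div_comm, mul_one, sq (1 + _)]
    gcongr
  refine ⟨.of_norm_bounded (hsum.mul_left _) fun ρ => hterm (m := 0) (by simp [sq_nonneg]), ?_⟩
  calc ‖∑' ρ : S, cexp ((γ ρ * I - t * I) * b) * cutoffTransform (t - γ ρ)‖
      ≤ ∑' ρ : S, C₁ / (1 + m ^ 2) * (1 / (1 + (t - γ ρ) ^ 2)) :=
        tsum_of_norm_bounded ((hsum.subtype _).mul_left _).hasSum fun ρ => hterm (hS ρ ρ.2)
    _ ≤ C₁ / (1 + m ^ 2) * (C₂ * Real.log (|t| + 2)) := by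
        rw [tsum_mul_left]
        gcongr
        exact (hsum.tsum_subtype_le _ _ fun ρ => by positivity).trans htsum
    _ = _ := by ring

lemma exists_norm_localZeroSum_le_norm_zeroSum (hRH : RiemannHypothesis) :
    ∃ C > 0, ∀ T t b : ℝ, 0 ≤ t → t ≤ T →
      ‖localZeroSum T t b‖ ≤ ‖zeroSum t b‖ + C * Real.log (T + 2) * edgeWeight T t := by
  obtain ⟨C, hC, h⟩ := exists_norm_tsum_zeros_le hRH
  refine ⟨C, hC, fun T t b ht htT => ?_⟩
  let m := min t (T - t)
  have hm : 0 ≤ m := le_min ht (by linarith)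
  obtain ⟨hsum, htail⟩ := h t b m ((zerosWithMultUpTo T : Set XiZero)ᶜ) fun ρ hρ => by
    have hρ' : γ ρ ≤ 0 ∨ T < γ ρ := by
      rw [mem_compl_iff, Finset.mem_coe, mem_zerosWithMultUpTo] at hρ
      by_contra! hcon
      exact hρ hcon
    rw [sq_le_sq, abs_of_nonneg hm]
    rcases hρ' with hρ' | hρ'
    · exact (min_le_left _ _).trans (le_abs.mpr (.inl (by linarith)))
    · exact (min_le_right _ _).trans (le_abs.mpr (.inr (by linarith)))
  have hedge : 1 / (1 + m ^ 2) ≤ edgeWeight T t := by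
    rcases min_choice t (T - t) with hmt | hmt <;> rw [edgeWeight, show m = _ from hmt]
    · linarith [one_div_one_add_sq_pos (t - T)]
    · rw [← neg_sq, neg_sub]
      linarith [one_div_one_add_sq_pos t]
  have hlog : Real.log (|t| + 2) ≤ Real.log (T + 2) :=
    Real.log_le_log (by positivity) (by rw [abs_of_nonneg ht]; linarith)
  have hlog0 : 0 ≤ Real.log (T + 2) := Real.log_nonneg (by linarith)
  rw [localZeroSum, eq_sub_of_add_eq (hsum.sum_add_tsum_compl (s := zerosWithMultUpTo T))]
  refine (norm_sub_le _ _).trans (add_le_add le_rfl (htail.trans ?_))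
  calc C / (1 + m ^ 2) * Real.log (|t| + 2)
      = C * Real.log (|t| + 2) * (1 / (1 + m ^ 2)) := by ring
    _ ≤ C * Real.log (T + 2) * edgeWeight T t := by gcongr

lemma log_add_two_sq_le {s : ℝ} (hs : 0 ≤ s) : Real.log (s + 2) ^ 2 ≤ 2 * (1 + s ^ 2) := by
  have hupper := Real.log_le_sub_one_of_pos (x := s + 2) (by linarith)
  have hlower : 0 ≤ Real.log (s + 2) := Real.log_nonneg (by linarith)
  nlinarith [sq_nonneg (s - 1)]

lemma log_add_add_two_le {s T : ℝ} (hs : 0 ≤ s) (hT : 0 ≤ T) :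
    Real.log (T + s + 2) ≤ 4 * Real.log (T + 2) * Real.log (s + 2) := by
  have hTlog := one_half_le_log_abs_add_two T
  have hslog := one_half_le_log_abs_add_two s
  rw [abs_of_nonneg hT] at hTlog
  rw [abs_of_nonneg hs] at hslog
  calc Real.log (T + s + 2) ≤ Real.log ((T + 2) * (s + 2)) :=
        Real.log_le_log (by linarith) (by nlinarith)
    _ = Real.log (T + 2) + Real.log (s + 2) := Real.log_mul (by linarith) (by linarith)
    _ ≤ _ := by nlinarith

lemma exists_norm_localZeroSum_sq_le_edgeWeight (hRH : RiemannHypothesis) :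
    ∃ C > 0, ∀ T t b : ℝ, 0 ≤ T → t ∉ Icc 0 T →
      ‖localZeroSum T t b‖ ^ 2 ≤ C * Real.log (T + 2) ^ 2 * edgeWeight T t := by
  obtain ⟨C, hC, h⟩ := exists_norm_tsum_zeros_le hRH
  refine ⟨32 * C ^ 2, by positivity, fun T t b hT ht => ?_⟩
  obtain ⟨s, hs, htail, habs, hedge⟩ : ∃ s : ℝ, 0 ≤ s ∧
      (∀ ρ ∈ zerosWithMultUpTo T, s ^ 2 ≤ (t - γ ρ) ^ 2) ∧ |t| ≤ T + s ∧
      1 / (1 + s ^ 2) ≤ edgeWeight T t := by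
    rcases lt_or_ge t 0 with ht0 | ht0
    · refine ⟨-t, by linarith, fun ρ hρ => ?_, by rw [abs_of_neg ht0]; linarith, ?_⟩
      · nlinarith [(mem_zerosWithMultUpTo.mp hρ).1]
      · rw [edgeWeight, neg_sq]
        linarith [one_div_one_add_sq_pos (t - T)]
    · have htT : T < t := not_le.mp fun hle => ht ⟨ht0, hle⟩
      refine ⟨t - T, by linarith, fun ρ hρ => ?_, by rw [abs_of_nonneg ht0]; linarith, ?_⟩
      · nlinarith [(mem_zerosWithMultUpTo.mp hρ).2]
      · rw [edgeWeight]
        linarith [one_div_one_add_sq_pos t]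
  have hnorm : ‖localZeroSum T t b‖ ≤
      C / (1 + s ^ 2) * (4 * Real.log (T + 2) * Real.log (s + 2)) := by
    have hlocal := (h t b s (zerosWithMultUpTo T : Set XiZero) htail).2
    rw [(zerosWithMultUpTo T).tsum_subtype'
      fun ρ => cexp ((γ ρ * I - t * I) * b) * cutoffTransform (t - γ ρ)] at hlocal
    refine hlocal.trans (mul_le_mul_of_nonneg_left ?_ (by positivity))
    exact (Real.log_le_log (by positivity) (by linarith)).trans (log_add_add_two_le hs hT)
  calc ‖localZeroSum T t b‖ ^ 2
      ≤ (C / (1 + s ^ 2) * (4 * Real.log (T + 2) * Real.log (s + 2))) ^ 2 := by gcongr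
    _ = 16 * C ^ 2 * Real.log (T + 2) ^ 2 * (1 / (1 + s ^ 2)) ^ 2 * Real.log (s + 2) ^ 2 := by
        ring
    _ ≤ 16 * C ^ 2 * Real.log (T + 2) ^ 2 * (1 / (1 + s ^ 2)) ^ 2 * (2 * (1 + s ^ 2)) := by
        gcongr
        exact log_add_two_sq_le hs
    _ = 32 * C ^ 2 * Real.log (T + 2) ^ 2 * (1 / (1 + s ^ 2)) := by
        field_simp
        ring
    _ ≤ _ := by gcongr

lemma exists_norm_zeroSum_le (hRH : RiemannHypothesis) :
    ∃ C > 0, ∀ t b : ℝ, 0 ≤ b → ‖zeroSum t b‖ ≤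
      cutoff b * Real.log (|t| + 2) + ‖primeSum t b‖ + C + C * Real.exp (b / 2) / (1 + t ^ 2) := by
  obtain ⟨C₁, h₁⟩ := exists_norm_zeroSum_le_cutoff_mul_log hRH
  obtain ⟨C₂, hC₂, h₂⟩ := exists_norm_zeroSum_le_norm_primeSum hRH
  refine ⟨max C₁ C₂, lt_max_of_lt_right hC₂, fun t b hb => ?_⟩
  have hlog : 0 ≤ cutoff b * Real.log (|t| + 2) :=
    mul_nonneg (cutoff_nonneg b) (by linarith [one_half_le_log_abs_add_two t])
  have hC : C₂ * Real.exp (b / 2) / (1 + t ^ 2) ≤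
      max C₁ C₂ * Real.exp (b / 2) / (1 + t ^ 2) := by
    gcongr
    exact le_max_right _ _
  rcases le_total b (1 / 4) with hb4 | hb4
  · have : 0 < C₂ * Real.exp (b / 2) / (1 + t ^ 2) := by positivity
    linarith [h₁ t b hb hb4, le_max_left C₁ C₂, norm_nonneg (primeSum t b)]
  · linarith [h₂ t b hb4, le_max_right C₁ C₂]

lemma cutoff_mul_norm_primeSum (t b : ℝ) : cutoff b * ‖primeSum t b‖ = 0 := by
  rcases le_total b (1 / 4) with hb4 | hb4
  · simp [primeSum_eq_zero t hb4]
  · simp [cutoff_eq_zero (hb4.trans (le_abs_self b))]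

lemma sq_le_of_le_add {x a y z w : ℝ} (hx : 0 ≤ x) (h : x ≤ a + (y + z + w)) :
    x ^ 2 ≤ 101 / 100 * a ^ 2 + 303 * (y ^ 2 + z ^ 2 + w ^ 2) := by
  have hsq : x ^ 2 ≤ (a + (y + z + w)) ^ 2 := pow_le_pow_left₀ hx h 2
  nlinarith [sq_nonneg (a - 100 * (y + z + w)), sq_nonneg (y - z), sq_nonneg (y - w),
    sq_nonneg (z - w)]

lemma exists_norm_localZeroSum_sq_le_of_mem_Icc (hRH : RiemannHypothesis) :
    ∃ C > 0, ∀ T t b : ℝ, 0 ≤ b → t ∈ Icc 0 T → ‖localZeroSum T t b‖ ^ 2 ≤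
      101 / 100 * (cutoff b ^ 2 * Real.log (T + 2) ^ 2 + ‖primeSum t b‖ ^ 2) + C +
        C * Real.exp b * (1 / (1 + t ^ 2)) + C * Real.log (T + 2) ^ 2 * edgeWeight T t := by
  obtain ⟨C₁, hC₁, h₁⟩ := exists_norm_zeroSum_le hRH
  obtain ⟨C₂, hC₂, h₂⟩ := exists_norm_localZeroSum_le_norm_zeroSum hRH
  refine ⟨303 * C₁ ^ 2 + 606 * C₂ ^ 2, by positivity, fun T t b hb ht => ?_⟩
  have hlog : cutoff b * Real.log (|t| + 2) ≤ cutoff b * Real.log (T + 2) := by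
    gcongr
    · exact cutoff_nonneg b
    · exact (abs_of_nonneg ht.1).trans_le ht.2
  have hexp : (C₁ * Real.exp (b / 2) / (1 + t ^ 2)) ^ 2 ≤
      C₁ ^ 2 * Real.exp b * (1 / (1 + t ^ 2)) := by
    calc (C₁ * Real.exp (b / 2) / (1 + t ^ 2)) ^ 2
        = C₁ ^ 2 * Real.exp (b / 2) ^ 2 * (1 / (1 + t ^ 2)) ^ 2 := by ring
      _ ≤ C₁ ^ 2 * Real.exp (b / 2) ^ 2 * (1 / (1 + t ^ 2)) := by
          gcongr
          exact pow_le_of_le_one (by positivity) (one_div_one_add_sq_le_one t) two_ne_zero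
      _ = _ := by rw [← Real.exp_nat_mul]; ring_nf
  have hedge : (C₂ * Real.log (T + 2) * edgeWeight T t) ^ 2 ≤
      2 * C₂ ^ 2 * Real.log (T + 2) ^ 2 * edgeWeight T t := by
    calc (C₂ * Real.log (T + 2) * edgeWeight T t) ^ 2
        = C₂ ^ 2 * Real.log (T + 2) ^ 2 * (edgeWeight T t * edgeWeight T t) := by ring
      _ ≤ C₂ ^ 2 * Real.log (T + 2) ^ 2 * (2 * edgeWeight T t) := by
          gcongr
          · exact edgeWeight_nonneg T t
          · exact edgeWeight_le_two T t
      _ = _ := by ring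
  have hmain : (cutoff b * Real.log (T + 2) + ‖primeSum t b‖) ^ 2 =
      cutoff b ^ 2 * Real.log (T + 2) ^ 2 + ‖primeSum t b‖ ^ 2 := by
    linear_combination 2 * Real.log (T + 2) * cutoff_mul_norm_primeSum t b
  have hexp0 : 0 ≤ C₂ ^ 2 * Real.exp b * (1 / (1 + t ^ 2)) := by positivity
  have hedge0 : 0 ≤ C₁ ^ 2 * Real.log (T + 2) ^ 2 * edgeWeight T t :=
    mul_nonneg (by positivity) (edgeWeight_nonneg T t)
  have hsq := sq_le_of_le_add (a := cutoff b * Real.log (T + 2) + ‖primeSum t b‖)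
    (norm_nonneg (localZeroSum T t b))
    (show _ ≤ _ + (C₁ + C₁ * Real.exp (b / 2) / (1 + t ^ 2) +
      C₂ * Real.log (T + 2) * edgeWeight T t) by
      linarith [h₁ t b hb, h₂ T t b ht.1 ht.2])
  rw [hmain] at hsq
  linarith [sq_nonneg C₂]

lemma integral_indicator_Icc_mul_add_add {f : ℝ → ℝ} {T : ℝ} (hT : 0 ≤ T) (hf : Continuous f)
    (a k c : ℝ) :
    ∫ t, (Icc 0 T).indicator (fun t => a * (k + f t) + c) t =
      a * (T * k + ∫ t in 0..T, f t) + T * c := by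
  rw [integral_indicator measurableSet_Icc, integral_Icc_eq_integral_Ioc,
    ← intervalIntegral.integral_of_le hT,
    intervalIntegral.integral_add (Continuous.intervalIntegrable (by fun_prop) _ _)
      (by simp), intervalIntegral.integral_const_mul,
    intervalIntegral.integral_add (by simp) (hf.intervalIntegrable _ _)]
  simp only [intervalIntegral.integral_const, smul_eq_mul, sub_zero]

lemma exists_integral_norm_localZeroSum_sq_le (hRH : RiemannHypothesis) :
    ∃ C > 0, ∀ T b : ℝ, 0 ≤ T → 0 ≤ b → ∫ t, ‖localZeroSum T t b‖ ^ 2 ≤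
      101 / 100 * (T * (cutoff b ^ 2 * Real.log (T + 2) ^ 2) + ∫ t in 0..T, ‖primeSum t b‖ ^ 2) +
        C * (T + Real.exp b + Real.log (T + 2) ^ 2) := by
  obtain ⟨C₁, hC₁, h₁⟩ := exists_norm_localZeroSum_sq_le_of_mem_Icc hRH
  obtain ⟨C₂, hC₂, h₂⟩ := exists_norm_localZeroSum_sq_le_edgeWeight hRH
  refine ⟨2 * π * (C₁ + C₂), by positivity, fun T b hT hb => ?_⟩
  have hprime := continuous_primeSum b
  let main (t : ℝ) : ℝ :=
    101 / 100 * (cutoff b ^ 2 * Real.log (T + 2) ^ 2 + ‖primeSum t b‖ ^ 2) + C₁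
  have hmain : Integrable ((Icc 0 T).indicator main) :=
    (integrable_indicator_iff measurableSet_Icc).mpr
      (Continuous.integrableOn_Icc (by unfold main; fun_prop))
  have hexp : Integrable fun t : ℝ => C₁ * Real.exp b * (1 / (1 + t ^ 2)) :=
    integrable_one_div_one_add_sq.const_mul _
  have hedge : Integrable fun t => (C₁ + C₂) * Real.log (T + 2) ^ 2 * edgeWeight T t :=
    (integrable_edgeWeight T).const_mul _
  have hbound (t : ℝ) : ‖localZeroSum T t b‖ ^ 2 ≤ (Icc 0 T).indicator main t +
      C₁ * Real.exp b * (1 / (1 + t ^ 2)) + (C₁ + C₂) * Real.log (T + 2) ^ 2 * edgeWeight T t := by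
    have hw (C : ℝ) (hC : 0 < C) : 0 ≤ C * Real.log (T + 2) ^ 2 * edgeWeight T t :=
      mul_nonneg (by positivity) (edgeWeight_nonneg T t)
    by_cases ht : t ∈ Icc 0 T
    · rw [indicator_of_mem ht]
      unfold main
      linarith [h₁ T t b hb ht, hw C₂ hC₂]
    · rw [indicator_of_notMem ht]
      have : 0 ≤ C₁ * Real.exp b * (1 / (1 + t ^ 2)) := by positivity
      linarith [h₂ T t b hT ht, hw C₁ hC₁]
  have hpi : ∫ t : ℝ, 1 / (1 + t ^ 2) = π := by simp
  have hle := integral_mono_of_nonneg (.of_forall fun t => by positivity)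
    ((hmain.add hexp).add hedge) (.of_forall hbound)
  rw [integral_add' (hmain.add hexp) hedge, integral_add' hmain hexp,
    integral_indicator_Icc_mul_add_add hT (by fun_prop), integral_const_mul, integral_const_mul,
    hpi, integral_edgeWeight] at hle
  have hpi3 := Real.pi_gt_three
  have hT' : T * C₁ ≤ 2 * π * (C₁ + C₂) * T := by
    nlinarith [mul_nonneg hT hC₁.le, mul_nonneg hT hC₂.le]
  have hexp' : C₁ * Real.exp b * π ≤ 2 * π * (C₁ + C₂) * Real.exp b := by
    have : 0 < π * Real.exp b := by positivity
    nlinarith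
  linarith

lemma exists_eventually_integral_norm_localZeroSum_sq_le (hRH : RiemannHypothesis) :
    ∃ C > 0, ∀ᶠ T in atTop, ∀ b ∈ Icc 0 (19 / 20 * Real.log T),
      ∫ t, ‖localZeroSum T t b‖ ^ 2 ≤ 10201 / 10000 * T * (Real.log (T + 2) ^ 2 * cutoff b ^ 2 +
        primeEnergy (primeRange (19 / 20 * Real.log T)) b) + C * T := by
  obtain ⟨C, hC, h⟩ := exists_integral_norm_localZeroSum_sq_le hRH
  refine ⟨14 * C, by positivity, ?_⟩
  filter_upwards [eventually_ge_atTop 1, eventually_add_primeRange_mul_log_le]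
    with T hT hrange b ⟨hb, hbT⟩
  have hT0 : 0 < T := by linarith
  have hprime := (integral_norm_primeSum_sq_le hbT hT0.le).trans
    (mul_le_mul_of_nonneg_right hrange (primeEnergy_nonneg _ b))
  have hexp : Real.exp b ≤ T := by
    rw [← Real.le_log_iff_exp_le hT0]
    linarith [Real.log_nonneg hT]
  have hlog : Real.log (T + 2) ^ 2 ≤ 12 * T := by
    have hsqrt := Real.log_le_sub_one_of_pos (Real.sqrt_pos.mpr (by linarith : 0 < T + 2))
    rw [Real.log_sqrt (by linarith)] at hsqrt
    have hlog0 : 0 ≤ Real.log (T + 2) := Real.log_nonneg (by linarith)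
    nlinarith [Real.sq_sqrt (by linarith : 0 ≤ T + 2), Real.sqrt_nonneg (T + 2)]
  have hcutoff : 0 ≤ T * (cutoff b ^ 2 * Real.log (T + 2) ^ 2) := by positivity
  nlinarith [h T b hT0.le hb]

/-! ### Sums over pairs, the Fejér kernel and the cutoff autocorrelation -/

/-- The sum of `f (x i - x j)` over all pairs `i, j ∈ s`, the common shape of the pair sums over
ordinates. -/
def differenceSum {ι : Type*} (s : Finset ι) (x : ι → ℝ) (f : ℝ → ℝ) : ℝ :=
  ∑ i ∈ s, ∑ j ∈ s, f (x i - x j)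

/-- The Fejér kernel, as the cosine transform of the triangle function on `[-Y, Y]`. -/
def fejerKernel (Y u : ℝ) : ℝ := 2 * ∫ b in 0..Y, (1 - b / Y) * Real.cos (b * u)

lemma fejerKernel_eq {Y u : ℝ} (hY : Y ≠ 0) (hu : u ≠ 0) :
    fejerKernel Y u = 2 * (1 - Real.cos (Y * u)) / (Y * u ^ 2) := by
  have hderiv (b : ℝ) : HasDerivAt
      (fun b => (1 - b / Y) * (Real.sin (b * u) / u) - Real.cos (b * u) / (Y * u ^ 2))
      ((1 - b / Y) * Real.cos (b * u)) b := by
    have hmul : HasDerivAt (fun b : ℝ => b * u) u b := by simpa using (hasDerivAt_id b).mul_const u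
    refine (((((hasDerivAt_id b).div_const Y).const_sub 1).mul (hmul.sin.div_const u)).sub
      (hmul.cos.div_const (Y * u ^ 2))).congr_deriv ?_
    simp only [id]
    field_simp
    ring
  rw [fejerKernel, intervalIntegral.integral_eq_sub_of_hasDerivAt (fun b _ => hderiv b)
    (Continuous.intervalIntegrable (by fun_prop) _ _)]
  simp only [div_self hY, sub_self, zero_mul, zero_sub, zero_div, Real.sin_zero, mul_zero,
    Real.cos_zero]
  ring

lemma fejerWeight_nonneg {Y b : ℝ} (hb : b ∈ Icc 0 Y) : 0 ≤ 1 - b / Y :=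
  sub_nonneg.2 (div_le_one_of_le₀ hb.2 (hb.1.trans hb.2))

lemma fejerWeight_le_one {Y b : ℝ} (hb : b ∈ Icc 0 Y) : 1 - b / Y ≤ 1 :=
  sub_le_self _ (div_nonneg hb.1 (hb.1.trans hb.2))

lemma fejerKernel_nonneg {Y : ℝ} (hY : 0 < Y) (u : ℝ) : 0 ≤ fejerKernel Y u := by
  rcases eq_or_ne u 0 with rfl | hu
  · simp only [fejerKernel, mul_zero, Real.cos_zero, mul_one]
    exact mul_nonneg zero_le_two <|
      intervalIntegral.integral_nonneg hY.le fun b hb => fejerWeight_nonneg hb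
  · rw [fejerKernel_eq hY.ne' hu]
    have := Real.cos_le_one (Y * u)
    exact div_nonneg (by linarith) (by positivity)

lemma fejerKernel_le {Y u : ℝ} (hY : 0 < Y) (hu : u ≠ 0) : fejerKernel Y u ≤ 4 / (Y * u ^ 2) := by
  rw [fejerKernel_eq hY.ne' hu]
  have := Real.neg_one_le_cos (Y * u)
  gcongr
  linarith

lemma norm_sum_mul_cexp_sq {ι : Type*} (s : Finset ι) (a x : ι → ℝ) :
    ‖∑ i ∈ s, (a i : ℂ) * cexp (x i * I)‖ ^ 2 =
      ∑ i ∈ s, ∑ j ∈ s, a i * a j * Real.cos (x i - x j) := by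
  have h := congrArg Complex.re (ofReal_norm_sq_sum_eq s fun i => (a i : ℂ) * cexp (x i * I))
  rw [Complex.ofReal_re] at h
  rw [h, Complex.re_sum]
  refine Finset.sum_congr rfl fun i _ => ?_
  rw [Complex.re_sum]
  refine Finset.sum_congr rfl fun j _ => ?_
  rw [map_mul, ← Complex.exp_conj, map_mul, Complex.conj_ofReal, Complex.conj_ofReal,
    Complex.conj_I, mul_mul_mul_comm, ← Complex.exp_add, ← Complex.ofReal_mul,
    Complex.re_ofReal_mul, ← Complex.exp_ofReal_mul_I_re]
  congr 3
  push_cast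
  ring

lemma integrableOn_exp_neg_two_mul_cos (u : ℝ) :
    IntegrableOn (fun v => Real.exp (-2 * v) * Real.cos (u * v)) (Ioi 0) := by
  have h := (integrableOn_exp_mul_complex_Ioi (a := -2 + u * I) (by simp) 0).re
  refine h.congr (.of_forall fun v => ?_)
  simp [Complex.exp_re]

lemma integral_exp_neg_two_mul_cos (u : ℝ) :
    ∫ v in Ioi 0, Real.exp (-2 * v) * Real.cos (u * v) = 2 / (4 + u ^ 2) := by
  have ha : (-2 + u * I).re < 0 := by simp
  have h := integral_re (𝕜 := ℂ) (integrableOn_exp_mul_complex_Ioi ha 0)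
  rw [integral_exp_mul_complex_Ioi ha] at h
  have hre (v : ℝ) :
      RCLike.re (cexp ((-2 + u * I) * v)) = Real.exp (-2 * v) * Real.cos (u * v) := by
    simp [Complex.exp_re]
  simp only [hre] at h
  rw [h]
  simp only [Complex.ofReal_zero, mul_zero, Complex.exp_zero, RCLike.re_to_complex, Complex.div_re,
    Complex.neg_re, Complex.one_re, Complex.add_re, Complex.re_ofNat, Complex.mul_re,
    Complex.ofReal_re, Complex.I_re, Complex.ofReal_im, Complex.I_im, mul_one, sub_self, add_zero,
    mul_neg, neg_mul, one_mul, neg_neg, Complex.normSq_apply, Complex.add_im, Complex.neg_im,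
    Complex.im_ofNat, neg_zero, Complex.mul_im, zero_add, Complex.one_im, zero_mul, zero_div]
  ring

lemma sub_mul_integral_le_integral_fejer {f : ℝ → ℝ} (hf : Continuous f) (hf0 : ∀ y, 0 ≤ f y)
    {h Y : ℝ} (hh : 0 ≤ h) (hhY : h ≤ Y) (m : ℝ) :
    (1 - h / Y) * ∫ y in (m - h)..(m + h), f y ≤
      ∫ a in 0..Y, (1 - a / Y) * (f (m - a) + f (m + a)) := by
  have hInt {g : ℝ → ℝ} (hg : Continuous g) (a b : ℝ) : IntervalIntegrable g volume a b :=
    hg.intervalIntegrable a b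
  have hfold : ∫ y in (m - h)..(m + h), f y = ∫ a in 0..h, (f (m - a) + f (m + a)) := by
    rw [intervalIntegral.integral_add (hInt (by fun_prop) _ _) (hInt (by fun_prop) _ _),
      intervalIntegral.integral_comp_sub_left, intervalIntegral.integral_comp_add_left, sub_zero,
      add_zero, intervalIntegral.integral_add_adjacent_intervals (hInt hf _ _) (hInt hf _ _)]
  have hf0' (a : ℝ) : 0 ≤ f (m - a) + f (m + a) := add_nonneg (hf0 _) (hf0 _)
  calc (1 - h / Y) * ∫ y in (m - h)..(m + h), f y
      = ∫ a in 0..h, (1 - h / Y) * (f (m - a) + f (m + a)) := by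
        rw [hfold, intervalIntegral.integral_const_mul]
    _ ≤ ∫ a in 0..h, (1 - a / Y) * (f (m - a) + f (m + a)) := by
        refine intervalIntegral.integral_mono_on hh (hInt (by fun_prop) _ _)
          (hInt (by fun_prop) _ _) fun a ha => mul_le_mul_of_nonneg_right ?_ (hf0' a)
        exact sub_le_sub_left (div_le_div_of_nonneg_right ha.2 (hh.trans hhY)) 1
    _ ≤ ∫ a in 0..Y, (1 - a / Y) * (f (m - a) + f (m + a)) := by
        rw [← intervalIntegral.integral_add_adjacent_intervals (a := 0) (b := h) (c := Y)
          (hInt (by fun_prop) _ _) (hInt (by fun_prop) _ _)]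
        exact le_add_of_nonneg_right <| intervalIntegral.integral_nonneg hhY fun a ha =>
          mul_nonneg (fejerWeight_nonneg ⟨hh.trans ha.1, ha.2⟩) (hf0' a)

section DifferenceSum

variable {ι : Type*} (s : Finset ι) (x : ι → ℝ)

lemma differenceSum_mono {f g : ℝ → ℝ} (h : ∀ u, f u ≤ g u) :
    differenceSum s x f ≤ differenceSum s x g :=
  Finset.sum_le_sum fun _ _ => Finset.sum_le_sum fun _ _ => h _

lemma differenceSum_add (f g : ℝ → ℝ) :
    differenceSum s x (fun u => f u + g u) = differenceSum s x f + differenceSum s x g := by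
  simp only [differenceSum, Finset.sum_add_distrib]

lemma differenceSum_const_mul (c : ℝ) (f : ℝ → ℝ) :
    differenceSum s x (fun u => c * f u) = c * differenceSum s x f := by
  simp only [differenceSum, Finset.mul_sum]

lemma integral_differenceSum {α : Type*} [MeasurableSpace α] {μ : Measure α} {f : α → ℝ → ℝ}
    (hf : ∀ u, Integrable (fun a => f a u) μ) :
    ∫ a, differenceSum s x (f a) ∂μ = differenceSum s x fun u => ∫ a, f a u ∂μ := by
  simp only [differenceSum]
  rw [integral_finsetSum _ fun i _ => integrable_finsetSum _ fun j _ => hf _]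
  exact Finset.sum_congr rfl fun i _ => integral_finsetSum _ fun j _ => hf _

lemma differenceSum_cos_nonneg (y : ℝ) : 0 ≤ differenceSum s x fun u => Real.cos (y * u) := by
  have h := norm_sum_mul_cexp_sq s (fun _ => 1) fun i => y * x i
  simp only [one_mul, ← mul_sub] at h
  rw [differenceSum, ← h]
  positivity

lemma integral_fejer_mul_differenceSum_cos {Y : ℝ} (hY : 0 ≤ Y) (c : ℝ → ℝ) :
    2 * ∫ b in 0..Y, (1 - b / Y) * differenceSum s x (fun u => c u * Real.cos (b * u)) =
      differenceSum s x fun u => c u * fejerKernel Y u := by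
  simp only [← differenceSum_const_mul, mul_left_comm _ (c _)]
  rw [intervalIntegral.integral_of_le hY, integral_differenceSum s x fun u =>
    (Continuous.integrableOn_Icc (by fun_prop)).mono_set Ioc_subset_Icc_self,
    ← differenceSum_const_mul]
  congr 1 with u
  rw [integral_const_mul, ← intervalIntegral.integral_of_le hY, fejerKernel, mul_left_comm]

/-- Montgomery's pair correlation sum `∑ cos (y (xᵢ - xⱼ)) w(xᵢ - xⱼ)`, without normalization. -/
def pairSum (y : ℝ) : ℝ := differenceSum s x fun u => Real.cos (y * u) * (4 / (4 + u ^ 2))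

@[fun_prop]
lemma continuous_pairSum : Continuous (pairSum s x) := by
  unfold pairSum differenceSum
  fun_prop

-- The weight `4 / (4 + u²)` is the Fourier transform of `e^{-2|v|}`, so `pairSum` is a positive
-- average of the values `‖∑ exp (I (y ± v) xᵢ)‖²`.
lemma pairSum_nonneg (y : ℝ) : 0 ≤ pairSum s x y := by
  have hexpand (v : ℝ) : Real.exp (-2 * v) * (differenceSum s x (fun u => Real.cos ((y + v) * u)) +
      differenceSum s x fun u => Real.cos ((y - v) * u)) = differenceSum s x fun u =>
        2 * Real.cos (y * u) * (Real.exp (-2 * v) * Real.cos (u * v)) := by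
    rw [← differenceSum_add, ← differenceSum_const_mul]
    congr 1 with u
    rw [add_mul, sub_mul, Real.cos_add, Real.cos_sub, mul_comm u v]
    ring
  have hInt : pairSum s x y = ∫ v in Ioi 0, Real.exp (-2 * v) *
      (differenceSum s x (fun u => Real.cos ((y + v) * u)) +
        differenceSum s x fun u => Real.cos ((y - v) * u)) := by
    simp only [hexpand]
    rw [integral_differenceSum s x fun u => (integrableOn_exp_neg_two_mul_cos u).const_mul _,
      pairSum]
    congr 1 with u
    rw [integral_const_mul, integral_exp_neg_two_mul_cos]
    ring
  rw [hInt]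
  exact integral_nonneg fun v => mul_nonneg (Real.exp_pos _).le
    (add_nonneg (differenceSum_cos_nonneg s x _) (differenceSum_cos_nonneg s x _))

lemma pairSum_sub_add_pairSum_add (m a : ℝ) :
    pairSum s x (m - a) + pairSum s x (m + a) =
      2 * differenceSum s x fun u => Real.cos (m * u) * (4 / (4 + u ^ 2)) * Real.cos (a * u) := by
  rw [pairSum, pairSum, ← differenceSum_add, ← differenceSum_const_mul]
  congr 1 with u
  rw [sub_mul, add_mul, Real.cos_sub, Real.cos_add]
  ring

lemma sub_mul_integral_pairSum_le {h Y : ℝ} (hh : 0 ≤ h) (hhY : h ≤ Y) (hY : 0 < Y) (m : ℝ) :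
    (1 - h / Y) * ∫ y in (m - h)..(m + h), pairSum s x y ≤
      differenceSum s x fun u => 4 / (4 + u ^ 2) * fejerKernel Y u := by
  refine (sub_mul_integral_le_integral_fejer (continuous_pairSum s x) (pairSum_nonneg s x) hh hhY
    m).trans ?_
  simp only [pairSum_sub_add_pairSum_add, mul_left_comm _ (2 : ℝ)]
  rw [intervalIntegral.integral_const_mul, integral_fejer_mul_differenceSum_cos s x hY.le]
  exact differenceSum_mono s x fun u => mul_le_mul_of_nonneg_right
    (mul_le_of_le_one_left (by positivity) (Real.cos_le_one _)) (fejerKernel_nonneg hY u)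

end DifferenceSum

/-- The autocorrelation of `cutoffTransform`: the weight at the difference of two ordinates that
arises from the mean square of `localZeroSum`. -/
def cutoffAutocorr (u : ℝ) : ℝ := ∫ t, cutoffTransform t * cutoffTransform (t + u)

lemma exists_abs_cutoffTransform_le_one_div_one_add_sq :
    ∃ C > 0, ∀ u, |cutoffTransform u| ≤ C * (1 / (1 + u ^ 2)) := by
  obtain ⟨C, hC, h⟩ := exists_abs_cutoffTransform_le
  refine ⟨C, hC, fun u => (h u).trans ?_⟩
  rw [mul_one_div]
  exact div_le_div_of_nonneg_left hC.le (by positivity) (le_self_pow₀ (by nlinarith) two_ne_zero)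

lemma integrable_cutoffTransform : Integrable cutoffTransform := by
  obtain ⟨C, -, h⟩ := exists_abs_cutoffTransform_le_one_div_one_add_sq
  exact (integrable_one_div_one_add_sq.const_mul C).mono'
    continuous_cutoffTransform.aestronglyMeasurable (.of_forall h)

lemma exists_norm_cutoffTransform_mul_le : ∃ C > 0, ∀ t u,
    ‖cutoffTransform t * cutoffTransform u‖ ≤ C * ‖cutoffTransform t‖ := by
  obtain ⟨C, hC, h⟩ := exists_abs_cutoffTransform_le_one_div_one_add_sq
  refine ⟨C, hC, fun t u => ?_⟩
  rw [norm_mul, mul_comm]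
  exact mul_le_mul_of_nonneg_right ((h u).trans <|
    mul_le_of_le_one_right hC.le (one_div_one_add_sq_le_one u)) (norm_nonneg _)

lemma integrable_cutoffTransform_mul (a b : ℝ) :
    Integrable fun t => cutoffTransform (t + a) * cutoffTransform (t + b) := by
  have := continuous_cutoffTransform
  obtain ⟨C, -, h⟩ := exists_norm_cutoffTransform_mul_le
  exact ((integrable_cutoffTransform.norm.comp_add_right a).const_mul C).mono'
    (Continuous.aestronglyMeasurable (by fun_prop)) (.of_forall fun t => h _ _)

lemma continuous_cutoffAutocorr : Continuous cutoffAutocorr := by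
  have := continuous_cutoffTransform
  obtain ⟨C, -, h⟩ := exists_norm_cutoffTransform_mul_le
  exact continuous_of_dominated (fun u => Continuous.aestronglyMeasurable (by fun_prop))
    (fun u => .of_forall fun t => h t (t + u)) (integrable_cutoffTransform.norm.const_mul C)
    (.of_forall fun t => by fun_prop)

lemma exists_abs_cutoffAutocorr_le : ∃ C ≥ 0, ∀ u, |cutoffAutocorr u| ≤ C := by
  obtain ⟨C, hC, h⟩ := exists_norm_cutoffTransform_mul_le
  exact ⟨∫ t, C * ‖cutoffTransform t‖, integral_nonneg fun t => by positivity, fun u =>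
    norm_integral_le_of_norm_le (integrable_cutoffTransform.norm.const_mul C)
      (.of_forall fun t => h t (t + u))⟩

lemma integral_cutoffTransform_sub_mul (x y : ℝ) :
    ∫ t, cutoffTransform (t - x) * cutoffTransform (t - y) = cutoffAutocorr (x - y) := by
  rw [cutoffAutocorr, ← integral_sub_right_eq_self
    (fun t => cutoffTransform t * cutoffTransform (t + (x - y))) x]
  simp only [sub_add_sub_cancel]

lemma cutoffAutocorr_zero : cutoffAutocorr 0 = 1 := by
  have hsupp : HasCompactSupport fun v => (cutoff v : ℂ) :=
    hasCompactSupport_cutoff.comp_left Complex.ofReal_zero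
  have hsmooth : ContDiff ℝ ∞ fun v => (cutoff v : ℂ) :=
    Complex.ofRealCLM.contDiff.comp contDiff_cutoff
  have hfourier (w : ℝ) : FourierTransform.fourier (hsupp.toSchwartzMap hsmooth) w =
      cutoffTransform ((-2 * π) * w) := by
    rw [SchwartzMap.fourier_coe, Real.fourier_real_eq_integral_exp_smul, ← laplace_cutoff_mul_I,
      laplace]
    congr 1 with v
    rw [HasCompactSupport.toSchwartzMap_toFun, smul_eq_mul, mul_comm]
    push_cast
    ring_nf
  have hplancherel := SchwartzMap.integral_norm_sq_fourier (hsupp.toSchwartzMap hsmooth)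
  simp only [HasCompactSupport.toSchwartzMap_toFun, hfourier,
    Complex.norm_real, Real.norm_eq_abs, sq_abs, integral_cutoff_sq] at hplancherel
  rw [Measure.integral_comp_mul_left (fun t => cutoffTransform t ^ 2), smul_eq_mul, abs_inv,
    abs_mul, abs_neg, abs_of_pos pi_pos, abs_two] at hplancherel
  simp only [cutoffAutocorr, add_zero, ← sq]
  field_simp at hplancherel
  exact hplancherel

lemma integral_norm_localZeroSum_sq (T b : ℝ) :
    ∫ t, ‖localZeroSum T t b‖ ^ 2 = differenceSum (zerosWithMultUpTo T) γ fun u =>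
      cutoffAutocorr u * Real.cos (b * u) := by
  have hexpand (t : ℝ) : ‖localZeroSum T t b‖ ^ 2 =
      ∑ ρ ∈ zerosWithMultUpTo T, ∑ ρ' ∈ zerosWithMultUpTo T,
        cutoffTransform (t - γ ρ) * cutoffTransform (t - γ ρ') * Real.cos (b * (γ ρ - γ ρ')) := by
    have h := norm_sum_mul_cexp_sq (zerosWithMultUpTo T) (fun ρ => cutoffTransform (t - γ ρ))
      fun ρ => b * (γ ρ - t)
    simp only [← mul_sub, sub_sub_sub_cancel_right] at h
    rw [← h, localZeroSum]
    congr 3 with ρ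
    rw [mul_comm]
    push_cast
    ring_nf
  have hInt (ρ ρ' : XiZero) : Integrable fun t =>
      cutoffTransform (t - γ ρ) * cutoffTransform (t - γ ρ') * Real.cos (b * (γ ρ - γ ρ')) := by
    simpa only [sub_eq_add_neg] using (integrable_cutoffTransform_mul (-γ ρ) (-γ ρ')).mul_const _
  simp only [hexpand]
  rw [integral_finsetSum _ fun ρ _ => integrable_finsetSum _ fun ρ' _ => hInt ρ ρ', differenceSum]
  refine Finset.sum_congr rfl fun ρ _ => ?_
  rw [integral_finsetSum _ fun ρ' _ => hInt ρ ρ']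
  simp only [integral_mul_const, integral_cutoffTransform_sub_mul]

lemma continuous_integral_norm_localZeroSum_sq (T : ℝ) :
    Continuous fun b => ∫ t, ‖localZeroSum T t b‖ ^ 2 := by
  simp only [integral_norm_localZeroSum_sq, differenceSum]
  fun_prop

lemma exists_pairWeight_mul_fejerKernel_le : ∃ D > 0, ∀ Y > 0, ∀ u,
    4 / (4 + u ^ 2) * fejerKernel Y u ≤
      101 / 100 * (cutoffAutocorr u * fejerKernel Y u) + D / Y * (1 / (1 + u ^ 2)) := by
  obtain ⟨C, hC, hautocorr⟩ := exists_abs_cutoffAutocorr_le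
  have hnear : ∀ᶠ u in 𝓝 0, 100 / 101 < cutoffAutocorr u := by
    refine continuous_cutoffAutocorr.continuousAt.eventually ?_
    rw [cutoffAutocorr_zero]
    exact lt_mem_nhds (by norm_num)
  obtain ⟨U, hU, hnear⟩ := Metric.eventually_nhds_iff.1 hnear
  refine ⟨(1 + 2 * C) * 4 * (1 + 1 / U ^ 2), by positivity, fun Y hY u => ?_⟩
  have hkernel := fejerKernel_nonneg hY u
  have hweight : 4 / (4 + u ^ 2) ≤ 1 := div_le_one_of_le₀ (by nlinarith) (by positivity)
  rcases lt_or_ge |u| U with hu | hu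
  · have hle : 4 / (4 + u ^ 2) ≤ 101 / 100 * cutoffAutocorr u := by
      linarith [hnear (y := u) (by simpa using hu)]
    have herror : 0 ≤ (1 + 2 * C) * 4 * (1 + 1 / U ^ 2) / Y * (1 / (1 + u ^ 2)) := by positivity
    linarith [mul_le_mul_of_nonneg_right hle hkernel]
  · have hUu : U ^ 2 ≤ u ^ 2 := sq_le_sq' (by linarith [abs_nonneg u]) hu |>.trans_eq (sq_abs u)
    have hu2 : 0 < u ^ 2 := (pow_pos hU 2).trans_le hUu
    have hdiff : 4 / (4 + u ^ 2) - 101 / 100 * cutoffAutocorr u ≤ 1 + 2 * C := by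
      linarith [(abs_le.1 (hautocorr u)).1]
    have hsq : 1 / u ^ 2 ≤ (1 + 1 / U ^ 2) * (1 / (1 + u ^ 2)) := by
      rw [mul_one_div, div_le_div_iff₀ hu2 (by positivity)]
      have : 1 ≤ 1 / U ^ 2 * u ^ 2 := by rwa [one_div_mul_eq_div, one_le_div (pow_pos hU 2)]
      linarith
    have hfar : (4 / (4 + u ^ 2) - 101 / 100 * cutoffAutocorr u) * fejerKernel Y u ≤
        (1 + 2 * C) * 4 * (1 + 1 / U ^ 2) / Y * (1 / (1 + u ^ 2)) :=
      calc _ ≤ (1 + 2 * C) * fejerKernel Y u := mul_le_mul_of_nonneg_right hdiff hkernel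
        _ ≤ (1 + 2 * C) * (4 / (Y * u ^ 2)) := by
            gcongr
            exact fejerKernel_le hY (by simpa using hu2.ne')
        _ = (1 + 2 * C) * 4 / Y * (1 / u ^ 2) := by field_simp
        _ ≤ (1 + 2 * C) * 4 / Y * ((1 + 1 / U ^ 2) * (1 / (1 + u ^ 2))) := by gcongr
        _ = _ := by ring
    linarith

/-! ### Pair sums over the zeros up to height `T` -/

lemma tsum_zetaMult_mul_zetaMult_mul (T : ℝ) (G : ℂ → ℂ → ℂ) :
    ∑' p : zerosUpTo T × zerosUpTo T, (zetaMult p.1 * zetaMult p.2 : ℂ) * G p.1 p.2 =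
      ∑ ρ ∈ zerosWithMultUpTo T, ∑ ρ' ∈ zerosWithMultUpTo T, G ρ.1 ρ'.1 := by
  have := (finite_zerosUpTo T).fintype
  rw [tsum_fintype, Fintype.sum_prod_type,
    ← tsum_zetaMult_mul T fun a => ∑ ρ' ∈ zerosWithMultUpTo T, G a ρ'.1, tsum_fintype]
  refine Finset.sum_congr rfl fun a _ => ?_
  rw [← tsum_zetaMult_mul T (G a), tsum_fintype, Finset.mul_sum]
  simp only [mul_assoc]

lemma FF_re_eq {T : ℝ} (hT : 0 < T) (α : ℝ) : (FF α T).re =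
    (T / (2 * π) * Real.log T)⁻¹ * pairSum (zerosWithMultUpTo T) γ (α * Real.log T) := by
  have hF := tsum_zetaMult_mul_zetaMult_mul T fun a b =>
    cexp (I * ((a.im - b.im : ℝ) : ℂ) * (Real.log (T ^ α) : ℂ)) *
      ((4 / (4 + (a.im - b.im) ^ 2) : ℝ) : ℂ)
  simp only [← mul_assoc] at hF
  rw [FF, ← Complex.ofReal_inv, Complex.re_ofReal_mul, Fxt, hF, Complex.re_sum, pairSum,
    differenceSum]
  simp only [Complex.re_sum]
  congr! 4 with ρ _ ρ' _
  rw [mul_comm, Complex.re_ofReal_mul, mul_comm, Real.log_rpow hT, mul_assoc,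
    ← Complex.ofReal_mul, mul_comm I, Complex.exp_ofReal_mul_I_re, mul_comm (_ - _)]
  rfl

lemma exists_sum_one_div_one_add_sub_ordinate_sq_le (hRH : RiemannHypothesis) :
    ∃ C > 0, ∀ T, ∀ t ∈ Icc 0 T,
      ∑ ρ ∈ zerosWithMultUpTo T, 1 / (1 + (t - γ ρ) ^ 2) ≤ C * Real.log (T + 2) := by
  obtain ⟨C, hC, h⟩ := exists_tsum_one_div_one_add_sub_ordinate_sq_le hRH
  refine ⟨C, hC, fun T t ht => ?_⟩
  refine ((h t).1.sum_le_tsum _ fun ρ _ => by positivity).trans ((h t).2.trans ?_)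
  rw [abs_of_nonneg ht.1]
  gcongr
  · linarith [ht.1]
  · exact ht.2

lemma one_le_sum_range_two_mul {x T : ℝ} (hx : x ∈ Icc 0 T) :
    1 ≤ ∑ k ∈ Finset.range (⌊T⌋₊ + 1), 2 * (1 / (1 + (k - x) ^ 2)) := by
  have hmem : ⌊x⌋₊ ∈ Finset.range (⌊T⌋₊ + 1) :=
    Finset.mem_range_succ_iff.2 (Nat.floor_le_floor hx.2)
  refine le_trans ?_ (Finset.single_le_sum (fun k _ => by positivity) hmem)
  have hsq : ((⌊x⌋₊ : ℝ) - x) ^ 2 ≤ 1 := by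
    nlinarith [Nat.floor_le hx.1, Nat.lt_floor_add_one x]
  rw [mul_one_div, one_le_div (by positivity)]
  linarith

lemma exists_card_zerosWithMultUpTo_le (hRH : RiemannHypothesis) :
    ∃ C > 0, ∀ T ≥ 1, ((zerosWithMultUpTo T).card : ℝ) ≤ C * (T * Real.log (T + 2)) := by
  obtain ⟨C, hC, h⟩ := exists_sum_one_div_one_add_sub_ordinate_sq_le hRH
  refine ⟨4 * C, by positivity, fun T hT => ?_⟩
  have hlog : 0 ≤ Real.log (T + 2) := Real.log_nonneg (by linarith)
  have hfloor : (⌊T⌋₊ : ℝ) ≤ T := Nat.floor_le (by linarith)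
  calc ((zerosWithMultUpTo T).card : ℝ)
      = ∑ ρ ∈ zerosWithMultUpTo T, 1 := by simp
    _ ≤ ∑ ρ ∈ zerosWithMultUpTo T,
          ∑ k ∈ Finset.range (⌊T⌋₊ + 1), 2 * (1 / (1 + (k - γ ρ) ^ 2)) := by
        refine Finset.sum_le_sum fun ρ hρ => one_le_sum_range_two_mul ?_
        exact Ioc_subset_Icc_self (mem_zerosWithMultUpTo.1 hρ)
    _ = ∑ k ∈ Finset.range (⌊T⌋₊ + 1),
          2 * ∑ ρ ∈ zerosWithMultUpTo T, 1 / (1 + (k - γ ρ) ^ 2) := by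
        rw [Finset.sum_comm]
        simp only [Finset.mul_sum]
    _ ≤ ∑ k ∈ Finset.range (⌊T⌋₊ + 1), 2 * (C * Real.log (T + 2)) := by
        refine Finset.sum_le_sum fun k hk => mul_le_mul_of_nonneg_left (h T k ⟨by positivity, ?_⟩)
          zero_le_two
        exact (Nat.cast_le.2 (Finset.mem_range_succ_iff.1 hk)).trans hfloor
    _ = (⌊T⌋₊ + 1) * (2 * (C * Real.log (T + 2))) := by simp
    _ ≤ (T + T) * (2 * (C * Real.log (T + 2))) := by gcongr
    _ = 4 * C * (T * Real.log (T + 2)) := by ring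

lemma exists_differenceSum_one_div_one_add_sq_le (hRH : RiemannHypothesis) :
    ∃ C > 0, ∀ T ≥ 1, differenceSum (zerosWithMultUpTo T) γ (fun u => 1 / (1 + u ^ 2)) ≤
      C * (T * Real.log (T + 2) ^ 2) := by
  obtain ⟨C₁, hC₁, hcard⟩ := exists_card_zerosWithMultUpTo_le hRH
  obtain ⟨C₂, hC₂, hsum⟩ := exists_sum_one_div_one_add_sub_ordinate_sq_le hRH
  refine ⟨C₁ * C₂, by positivity, fun T hT => ?_⟩
  have hlog : 0 ≤ Real.log (T + 2) := Real.log_nonneg (by linarith)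
  calc differenceSum (zerosWithMultUpTo T) γ (fun u => 1 / (1 + u ^ 2))
      ≤ ∑ _ ∈ zerosWithMultUpTo T, C₂ * Real.log (T + 2) := Finset.sum_le_sum fun _ hρ =>
        hsum T _ (Ioc_subset_Icc_self (mem_zerosWithMultUpTo.1 hρ))
    _ = (zerosWithMultUpTo T).card * (C₂ * Real.log (T + 2)) := by simp
    _ ≤ C₁ * (T * Real.log (T + 2)) * (C₂ * Real.log (T + 2)) := by gcongr; exact hcard T hT
    _ = C₁ * C₂ * (T * Real.log (T + 2) ^ 2) := by ring

/-! ### The pair sum against the Fejér kernel -/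

lemma exists_eventually_differenceSum_autocorr_le_energy (hRH : RiemannHypothesis) :
    ∃ C > 0, ∀ᶠ T in atTop, ∀ Y > 0, Y = 19 / 20 * Real.log T →
      differenceSum (zerosWithMultUpTo T) γ (fun u => cutoffAutocorr u * fejerKernel Y u) ≤
        2 * (10201 / 10000 * T * (Real.log (T + 2) ^ 2 * (1 / (4 * π)) +
          ∫ b in 0..Y, (1 - b / Y) * primeEnergy (primeRange Y) b) + C * T * Y) := by
  obtain ⟨C, hC, h⟩ := exists_eventually_integral_norm_localZeroSum_sq_le hRH
  refine ⟨C, hC, ?_⟩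
  filter_upwards [h, eventually_gt_atTop 0] with T h hT Y hY hYT
  rw [← hYT] at h
  have hmean := continuous_integral_norm_localZeroSum_sq T
  have henergy := continuous_primeEnergy (primeRange Y)
  have hcutoff := continuous_cutoff
  have hweight (b : ℝ) (hb : b ∈ Icc 0 Y) : (1 - b / Y) * ∫ t, ‖localZeroSum T t b‖ ^ 2 ≤
      10201 / 10000 * T * (Real.log (T + 2) ^ 2 * cutoff b ^ 2 +
        (1 - b / Y) * primeEnergy (primeRange Y) b) + C * T := by
    have h₀ := fejerWeight_nonneg hb
    have h₁ := fejerWeight_le_one hb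
    have hmain : 0 ≤ 10201 / 10000 * T * (Real.log (T + 2) ^ 2 * cutoff b ^ 2) := by positivity
    linarith [mul_le_mul_of_nonneg_left (h b hb) h₀, mul_le_of_le_one_left hmain h₁,
      mul_le_of_le_one_left (mul_pos hC hT).le h₁]
  have hInt {f : ℝ → ℝ} (hf : Continuous f) : IntervalIntegrable f volume 0 Y :=
    hf.intervalIntegrable 0 Y
  have hle := intervalIntegral.integral_mono_on hY.le (hInt (by fun_prop)) (hInt (by fun_prop))
    hweight
  rw [intervalIntegral.integral_add (hInt (by fun_prop)) (hInt (by fun_prop)),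
    intervalIntegral.integral_const_mul,
    intervalIntegral.integral_add (hInt (by fun_prop)) (hInt (by fun_prop)),
    intervalIntegral.integral_const_mul, intervalIntegral.integral_const, sub_zero, smul_eq_mul,
    mul_comm Y] at hle
  rw [← integral_fejer_mul_differenceSum_cos _ _ hY.le]
  simp only [← integral_norm_localZeroSum_sq]
  refine mul_le_mul_of_nonneg_left (hle.trans ?_) zero_le_two
  gcongr
  exact integral_cutoff_sq_le hY.le

lemma log_add_two_le {T : ℝ} (hT : 1 ≤ T) : Real.log (T + 2) ≤ Real.log T + 2 := by
  have hT0 : 0 < T := by linarith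
  rw [Real.log_le_iff_le_exp (by linarith), Real.exp_add, Real.exp_log hT0]
  nlinarith [Real.add_one_le_exp 2]

lemma integral_fejer_mul_primeEnergy_le_quadratic {Y : ℝ} (hY : 1 ≤ Y) :
    ∫ b in 0..Y, (1 - b / Y) * primeEnergy (primeRange Y) b ≤
      1 / (2 * π) * (Y ^ 2 / 6 + 13 * Y) := by
  have hlog4 : Real.log 4 ≤ 2 := by
    rw [show (4 : ℝ) = 2 ^ 2 by norm_num, Real.log_pow]
    push_cast
    linarith [Real.log_two_lt_d9]
  have hcubic : (Y + 1 / 4) ^ 3 / 6 + (Real.log 4 + 4) * (Y + 1 / 4) ^ 2 ≤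
      Y * (Y ^ 2 / 6 + 13 * Y) := by
    have hsq : (Real.log 4 + 4) * (Y + 1 / 4) ^ 2 ≤ 6 * (Y + 1 / 4) ^ 2 := by gcongr; linarith
    nlinarith
  refine (integral_fejer_mul_primeEnergy_le (by linarith)).trans ?_
  calc _ ≤ 1 / (2 * π * Y) * (Y * (Y ^ 2 / 6 + 13 * Y)) := by gcongr
    _ = 1 / (2 * π) * (Y ^ 2 / 6 + 13 * Y) := by field_simp

-- The limiting constant is `1.0201 * (1 + (19/20)² / 3)`.
lemma eventually_differenceSum_autocorr_le (hRH : RiemannHypothesis) :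
    ∀ᶠ T in atTop, differenceSum (zerosWithMultUpTo T) γ
      (fun u => cutoffAutocorr u * fejerKernel (19 / 20 * Real.log T) u) ≤
        134 / 100 * (T / (2 * π) * Real.log T ^ 2) := by
  obtain ⟨C, hC, h⟩ := exists_eventually_differenceSum_autocorr_le_energy hRH
  filter_upwards [h, eventually_ge_atTop 1,
    Real.tendsto_log_atTop.eventually_ge_atTop (10000 + 2000 * C)] with T h hT hL
  set L := Real.log T
  have hY : 1 ≤ 19 / 20 * L := by linarith
  have hlog : Real.log (T + 2) ^ 2 ≤ (L + 2) ^ 2 :=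
    pow_le_pow_left₀ (Real.log_nonneg (by linarith)) (log_add_two_le hT) 2
  have hpoly : 10201 / 10000 * ((L + 2) ^ 2 + 2 * ((19 / 20 * L) ^ 2 / 6 + 13 * (19 / 20 * L))) +
      14 * C * (19 / 20 * L) ≤ 134 / 100 * L ^ 2 := by
    nlinarith [mul_le_mul_of_nonneg_right hL (by linarith : 0 ≤ L)]
  calc _ ≤ 2 * (10201 / 10000 * T * (Real.log (T + 2) ^ 2 * (1 / (4 * π)) +
          ∫ b in 0..(19 / 20 * L), (1 - b / (19 / 20 * L)) *
            primeEnergy (primeRange (19 / 20 * L)) b) + C * T * (19 / 20 * L)) :=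
        h _ (by linarith) rfl
    _ ≤ 2 * (10201 / 10000 * T * ((L + 2) ^ 2 * (1 / (4 * π)) +
          1 / (2 * π) * ((19 / 20 * L) ^ 2 / 6 + 13 * (19 / 20 * L))) +
            C * T * (19 / 20 * L)) := by
        gcongr
        exact integral_fejer_mul_primeEnergy_le_quadratic hY
    _ = T / (2 * π) * (10201 / 10000 * ((L + 2) ^ 2 +
          2 * ((19 / 20 * L) ^ 2 / 6 + 13 * (19 / 20 * L))) + 4 * π * C * (19 / 20 * L)) := by
        field_simp
        ring
    _ ≤ T / (2 * π) * (134 / 100 * L ^ 2) := by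
        refine mul_le_mul_of_nonneg_left (le_trans ?_ hpoly) (by positivity)
        gcongr
        linarith [Real.pi_lt_d2]
    _ = _ := by ring

lemma eventually_differenceSum_pairWeight_le (hRH : RiemannHypothesis) :
    ∀ᶠ T in atTop, differenceSum (zerosWithMultUpTo T) γ
      (fun u => 4 / (4 + u ^ 2) * fejerKernel (19 / 20 * Real.log T) u) ≤
        137 / 100 * (T / (2 * π) * Real.log T ^ 2) := by
  obtain ⟨D, hD, hweight⟩ := exists_pairWeight_mul_fejerKernel_le
  obtain ⟨C, hC, hpairs⟩ := exists_differenceSum_one_div_one_add_sq_le hRH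
  filter_upwards [eventually_differenceSum_autocorr_le hRH, eventually_ge_atTop 1,
    Real.tendsto_log_atTop.eventually_ge_atTop (2 + 3000 * (D * C))] with T hautocorr hT hL
  set L := Real.log T
  have hDC : 0 < D * C := by positivity
  have hL0 : 0 < L := by linarith
  have herror : D / (19 / 20 * L) * (C * (T * Real.log (T + 2) ^ 2)) ≤
      1 / 100 * (T / (2 * π) * L ^ 2) :=
    calc D / (19 / 20 * L) * (C * (T * Real.log (T + 2) ^ 2))
        ≤ D / (19 / 20 * L) * (C * (T * (2 * L) ^ 2)) := by
          gcongr
          · exact Real.log_nonneg (by linarith)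
          · linarith [log_add_two_le hT]
      _ = T / (2 * π) * L * (160 / 19 * π * (D * C)) := by field_simp; ring
      _ ≤ T / (2 * π) * L * (1 / 100 * L) := by
          refine mul_le_mul_of_nonneg_left ?_ (by positivity)
          nlinarith [Real.pi_lt_d2]
      _ = 1 / 100 * (T / (2 * π) * L ^ 2) := by ring
  have hmain : 0 ≤ T / (2 * π) * L ^ 2 := by positivity
  calc _ ≤ differenceSum (zerosWithMultUpTo T) γ fun u =>
        101 / 100 * (cutoffAutocorr u * fejerKernel (19 / 20 * L) u) +
          D / (19 / 20 * L) * (1 / (1 + u ^ 2)) :=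
        differenceSum_mono _ _ (hweight _ (by positivity))
    _ = 101 / 100 * differenceSum (zerosWithMultUpTo T) γ
          (fun u => cutoffAutocorr u * fejerKernel (19 / 20 * L) u) +
        D / (19 / 20 * L) * differenceSum (zerosWithMultUpTo T) γ fun u => 1 / (1 + u ^ 2) := by
        rw [differenceSum_add, differenceSum_const_mul, differenceSum_const_mul]
    _ ≤ 101 / 100 * (134 / 100 * (T / (2 * π) * L ^ 2)) +
        D / (19 / 20 * L) * (C * (T * Real.log (T + 2) ^ 2)) := by
        gcongr
        exact hpairs T hT
    _ ≤ 137 / 100 * (T / (2 * π) * L ^ 2) := by linarith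

-- Centre a Fejér weight of half-width `19/20 * L` on the interval of half-width `L / 2`: on that
-- interval it is at least `1 - (1/2) / (19/20) = 9/19`.
lemma integral_pairSum_mul_le {ι : Type*} (s : Finset ι) (x : ι → ℝ) {L : ℝ} (hL : 0 < L) (B : ℝ) :
    ∫ α in B..(B + 1), pairSum s x (α * L) ≤
      19 / 9 * (L⁻¹ * differenceSum s x fun u =>
        4 / (4 + u ^ 2) * fejerKernel (19 / 20 * L) u) := by
  have h := sub_mul_integral_pairSum_le s x (h := L / 2) (Y := 19 / 20 * L) (by positivity)
    (by linarith) (by positivity) ((B + 1 / 2) * L)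
  have hratio : 1 - L / 2 / (19 / 20 * L) = 9 / 19 := by field_simp; norm_num
  rw [hratio, show (B + 1 / 2) * L - L / 2 = B * L by ring,
    show (B + 1 / 2) * L + L / 2 = (B + 1) * L by ring] at h
  rw [intervalIntegral.integral_comp_mul_right _ hL.ne', smul_eq_mul, mul_left_comm]
  gcongr
  linarith

end PairCorrelation

/-- Assuming RH, for all large `T` and every real `B` (possibly depending on `T`),
`∫_B^{B+1} F(α,T) dα ≤ 3`. -/
theorem F_average_bound (hRH : RiemannHypothesis) :
    ∃ T₀ : ℝ, ∀ T : ℝ, T₀ ≤ T → ∀ B : ℝ,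
      (∫ α in B..(B + 1), (FF α T).re) ≤ 3 := by
  rw [← eventually_atTop]
  filter_upwards [PairCorrelation.eventually_differenceSum_pairWeight_le hRH,
    eventually_gt_atTop 1] with T hsum hT B
  have hT0 : 0 < T := by linarith
  have hL : 0 < Real.log T := Real.log_pos hT
  simp only [PairCorrelation.FF_re_eq hT0, intervalIntegral.integral_const_mul]
  rw [inv_mul_le_iff₀ (by positivity)]
  calc ∫ α in B..(B + 1), PairCorrelation.pairSum _ _ (α * Real.log T)
      ≤ 19 / 9 * ((Real.log T)⁻¹ * PairCorrelation.differenceSum _ _ _) :=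
        PairCorrelation.integral_pairSum_mul_le _ _ hL B
    _ ≤ 19 / 9 * ((Real.log T)⁻¹ * (137 / 100 * (T / (2 * π) * Real.log T ^ 2))) := by gcongr
    _ = 2603 / 900 * (T / (2 * π) * Real.log T) := by field_simp; norm_num
    _ ≤ T / (2 * π) * Real.log T * 3 := by
        have hmain : 0 < T / (2 * π) * Real.log T := by positivity
        linarith
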